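/- arXiv:1310.6898 — 2 statements merged into one kernel-verified Lean document; each statement's English description precedes it below -/
import Mathlib

section
/- Let s ≥ 0 and let (X, d_X) be a metric space that is σ-finite with respect to the Hausdorff measure H^s. Let (Y, d_Y) be a metric space of Hausdorff dimension t that is an analytic subspace of a complete separable metric space. If f : X → Y is a measurable surjection (with respect to H^s on X), then there exists a set N ⊆ X with H^s(N) = 0 and dim_H f(N) = t. If additionally t > 0 and H^t(Y) > 0, and f is such that for each closed set F ⊆ Y the preimage f⁻¹(F) is a countable union of closed sets, then N can be chosen to be perfect. -/
open MeasureTheory Set Filter Topology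
open scoped NNReal ENNReal

universe u v

/-- A Hausdorff (gauge) function `h : [0,∞) → [0,∞]`: nondecreasing, right-continuous,
and positive on positive arguments. -/
structure IsHausdorffFunction (h : ℝ≥0 → ℝ≥0∞) : Prop where
  mono : Monotone h
  right_continuous : ∀ t : ℝ≥0, ContinuousWithinAt h (Set.Ici t) t
  pos : ∀ t : ℝ≥0, 0 < t → 0 < h t

/-- `h` is of finite order: `limsup_{t→0+} h(3t)/h(t) < ∞`. -/
def FiniteOrder (h : ℝ≥0 → ℝ≥0∞) : Prop :=
  Filter.limsup (fun t : ℝ≥0 => h (3 * t) / h t) (nhdsWithin 0 (Set.Ioi 0)) < ⊤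

/-- The Hausdorff (outer) measure built from the gauge `h`:
`H^h(E) = sup_{δ>0} inf { Σ h(diam Uᵢ) : E ⊆ ⋃ Uᵢ, diam Uᵢ ≤ δ }`. -/
noncomputable def hausdorffM {Z : Type*} [EMetricSpace Z] (h : ℝ≥0 → ℝ≥0∞) :
    MeasureTheory.OuterMeasure Z :=
  MeasureTheory.OuterMeasure.mkMetric (fun d => h d.toNNReal)

/-- A set `S` is σ-finite with respect to an outer measure `μ` if it is a countable union
of Carathéodory-measurable sets of finite measure. -/
def SigmaFiniteSet {Z : Type*} (μ : MeasureTheory.OuterMeasure Z) (S : Set Z) : Prop :=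
  ∃ A : ℕ → Set Z, (∀ n, μ.IsCaratheodory (A n) ∧ μ (A n) < ⊤) ∧ S = ⋃ n, A n

/-- A metric space has finite structural dimension if for every `ξ > 0` there are `N` and
`δ₀ > 0` such that every set of diameter `δ ≤ δ₀` can be covered by `N` sets of diameter
at most `ξ·δ`. -/
def FiniteStructuralDim (Z : Type*) [EMetricSpace Z] : Prop :=
  ∀ ξ : ℝ≥0, 0 < ξ → ∃ (N : ℕ) (δ₀ : ℝ≥0), 0 < δ₀ ∧
    ∀ s : Set Z, EMetric.diam s ≤ δ₀ →
      ∃ U : Fin N → Set Z, s ⊆ ⋃ i, U i ∧ ∀ i, EMetric.diam (U i) ≤ ξ * EMetric.diam s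

/-- Property (H) for a subspace `Y` of the complete separable metric space `Z`. -/
structure PropertyH {Z : Type*} [MetricSpace Z] (Y : Set Z) (h : ℝ≥0 → ℝ≥0∞) : Prop where
  complete : CompleteSpace Z
  separable : TopologicalSpace.SeparableSpace Z
  analytic : MeasureTheory.AnalyticSet Y
  hausdorff : IsHausdorffFunction h
  cont : Continuous h
  zero : h 0 = 0
  alt : FiniteOrder h ∨ FiniteStructuralDim Z ∨ ∀ x y z : Z, dist x z ≤ max (dist x y) (dist y z)

/-- Property (H∞): property (H) together with non-σ-finiteness of `Y` w.r.t. `H^h`. -/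
def PropertyHInf {Z : Type*} [MetricSpace Z] (Y : Set Z) (h : ℝ≥0 → ℝ≥0∞) : Prop :=
  PropertyH Y h ∧ ¬ SigmaFiniteSet (hausdorffM h) Y

/-- Property (Aκ): `X` is a union of κ-many measurable sets of finite measure, and
κ-many null sets always union to a null set. -/
def PropertyA {X : Type u} (μ : MeasureTheory.OuterMeasure X) (κ : Cardinal.{u}) : Prop :=
  (∃ (ι : Type u) (A : ι → Set X), Cardinal.mk ι = κ ∧ (⋃ i, A i) = Set.univ ∧
      ∀ i, μ.IsCaratheodory (A i) ∧ μ (A i) < ⊤) ∧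
  ∀ (ι : Type u) (A : ι → Set X), Cardinal.mk ι = κ → (∀ i, μ (A i) = 0) → μ (⋃ i, A i) = 0

/-- A set is perfect if it is closed and every open set meeting it meets it in an
infinite set. -/
def PerfectSet {X : Type*} [TopologicalSpace X] (C : Set X) : Prop :=
  IsClosed C ∧ ∀ O : Set X, IsOpen O → (O ∩ C).Nonempty → (O ∩ C).Infinite

/-- The gauge `d ↦ d^s`. -/
noncomputable def sGauge (s : ℝ≥0) : ℝ≥0 → ℝ≥0∞ := fun d => (d : ℝ≥0∞) ^ (s : ℝ)

/-- Hausdorff–Besicovitch dimension: the supremum of all `s ≥ 0` with `H^{d^s}(E) > 0`. -/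
noncomputable def hDim {Z : Type*} [EMetricSpace Z] (E : Set Z) : ℝ≥0∞ :=
  ⨆ (s : ℝ≥0) (_ : 0 < hausdorffM (sGauge s) E), (s : ℝ≥0∞)

open MeasureTheory Set Filter Topology
open scoped NNReal ENNReal

namespace S8

noncomputable def cost {ι : Type*} (w : ι → ℝ≥0∞) (J : Set ι) : ℝ≥0∞ := ∑' i, J.indicator w i

section cost
variable {ι κ : Type*} {w w' : ι → ℝ≥0∞} {J J' : Set ι}

lemma cost_mono (h : J ⊆ J') : cost w J ≤ cost w J' :=
  ENNReal.tsum_le_tsum fun i => indicator_le_indicator_of_subset h (fun _ => zero_le) i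

lemma cost_mono_w (h : ∀ i ∈ J, w i ≤ w' i) : cost w J ≤ cost w' J :=
  ENNReal.tsum_le_tsum fun i => by
    by_cases hi : i ∈ J <;> simp [hi, h]

lemma cost_mul (a : ℝ≥0∞) : cost (fun i => a * w i) J = a * cost w J := by
  unfold cost
  rw [← ENNReal.tsum_mul_left]
  congr 1; ext i
  by_cases hi : i ∈ J <;> simp [hi]

lemma cost_eq : cost w J = ∑' i : J, w i := (tsum_subtype J w).symm

lemma cost_union_le : cost w (J ∪ J') ≤ cost w J + cost w J' := by
  simp only [cost_eq]; exact ENNReal.tsum_union_le w J J'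

lemma cost_iUnion_le {J : κ → Set ι} : cost w (⋃ k, J k) ≤ ∑' k, cost w (J k) := by
  simp only [cost_eq]; exact ENNReal.tsum_iUnion_le_tsum w J

lemma cost_image_le {w : κ → ℝ≥0∞} (q : ι → κ) : cost w (q '' J) ≤ cost (fun i => w (q i)) J := by
  simp only [cost_eq]
  have := ENNReal.tsum_le_tsum_comp_of_surjective (f := imageFactorization q J)
    imageFactorization_surjective (fun y : q '' J => w y)
  simpa [imageFactorization] using this

lemma cost_diff_add (h : J' ⊆ J) : cost w J' + cost w (J \ J') = cost w J := by
  unfold cost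
  rw [← ENNReal.tsum_add]
  congr 1; ext i
  by_cases hi : i ∈ J' 
  · simp [hi, h hi]
  · by_cases hj : i ∈ J <;> simp [hi, hj]

lemma le_cost {i : ι} (h : i ∈ J) : w i ≤ cost w J := by
  have := ENNReal.le_tsum (f := J.indicator w) i
  unfold cost
  simpa [h] using this

lemma cost_le_of_finset {M : ℝ≥0∞} (h : ∀ A : Finset ι, (A : Set ι) ⊆ J → ∑ i ∈ A, w i ≤ M) :
    cost w J ≤ M := by
  classical
  unfold cost
  rw [ENNReal.tsum_eq_iSup_sum]
  refine iSup_le fun A => ?_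
  have : ∑ i ∈ A, J.indicator w i = ∑ i ∈ A.filter (· ∈ J), w i := by
    rw [Finset.sum_filter]; rfl
  rw [this]
  exact h _ (fun i hi => by simpa using (Finset.mem_filter.1 hi).2)

lemma sum_le_cost {A : Finset ι} (h : (A : Set ι) ⊆ J) : ∑ i ∈ A, w i ≤ cost w J := by
  have := ENNReal.sum_le_tsum (f := J.indicator w) A
  refine le_trans (le_of_eq (Finset.sum_congr rfl fun i hi => ?_)) this
  simp [h hi]

lemma finite_of_cost {a : ℝ≥0∞} (ha : a ≠ 0) (hc : cost w J ≠ ⊤) : {i ∈ J | a ≤ w i}.Finite := by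
  refine (ENNReal.finite_const_le_of_tsum_ne_top hc ha).subset ?_
  rintro i ⟨hi, h⟩
  simpa [hi] using h

end cost

noncomputable def cont {ι Z : Type*} (V : ι → Set Z) (w : ι → ℝ≥0∞) (E : Set Z) : ℝ≥0∞ :=
  ⨅ (J : Set ι) (_ : E ⊆ ⋃ i ∈ J, V i), cost w J

section cont
variable {ι Z : Type*} {V : ι → Set Z} {w w' : ι → ℝ≥0∞} {E E' : Set Z}

lemma cont_le {J : Set ι} (h : E ⊆ ⋃ i ∈ J, V i) : cont V w E ≤ cost w J := iInf₂_le J h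

lemma le_cont {M : ℝ≥0∞} (h : ∀ J : Set ι, E ⊆ ⋃ i ∈ J, V i → M ≤ cost w J) : M ≤ cont V w E :=
  le_iInf₂ h

lemma exists_of_cont_lt {M : ℝ≥0∞} (h : cont V w E < M) :
    ∃ J : Set ι, E ⊆ ⋃ i ∈ J, V i ∧ cost w J < M := by
  unfold cont at h
  simpa only [iInf_lt_iff, exists_prop] using h

lemma cont_mono (h : E ⊆ E') : cont V w E ≤ cont V w E' := le_cont fun _ hJ => cont_le (h.trans hJ)

lemma cont_mono_w (h : ∀ i, w i ≤ w' i) : cont V w E ≤ cont V w' E :=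
  le_cont fun _ hJ => (cont_le hJ).trans (cost_mono_w fun i _ => h i)

lemma cont_mul_le {a : ℝ≥0∞} (ha : a ≠ 0) (ha' : a ≠ ⊤) (h : ∀ i, w i ≤ a * w' i) :
    cont V w E ≤ a * cont V w' E := by
  unfold cont
  simp only [ENNReal.mul_iInf_of_ne ha ha']
  exact le_iInf₂ fun J hJ => (cont_le hJ).trans ((cost_mono_w fun i _ => h i).trans (cost_mul _).le)

lemma cont_empty : cont V w (∅ : Set Z) = 0 := by
  refine le_antisymm ((cont_le (J := ∅) (by simp)).trans ?_) (zero_le)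
  simp [cost]

lemma cont_iUnion_le {κ : Type*} [Countable κ] (E : κ → Set Z) :
    cont V w (⋃ n, E n) ≤ ∑' n, cont V w (E n) := by
  refine ENNReal.le_of_forall_pos_le_add fun ε hε hfin => ?_
  obtain ⟨ε', hε', hs⟩ := ENNReal.exists_pos_sum_of_countable (ENNReal.coe_ne_zero.2 hε.ne') κ
  have hn : ∀ n, cont V w (E n) ≠ ⊤ := fun n => ENNReal.ne_top_of_tsum_ne_top hfin.ne n
  have : ∀ n, ∃ J : Set ι, E n ⊆ ⋃ i ∈ J, V i ∧ cost w J < cont V w (E n) + ε' n := fun n =>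
    exists_of_cont_lt (ENNReal.lt_add_right (hn n) (by simpa using (hε' n).ne'))
  choose J hJ hJc using this
  calc cont V w (⋃ n, E n) ≤ cost w (⋃ n, J n) := cont_le (by
        refine iUnion_subset fun n => (hJ n).trans ?_
        exact biUnion_subset_biUnion_left (subset_iUnion J n))
    _ ≤ ∑' n, cost w (J n) := cost_iUnion_le
    _ ≤ ∑' n, (cont V w (E n) + ε' n) := ENNReal.tsum_le_tsum fun n => (hJc n).le
    _ ≤ _ := by rw [ENNReal.tsum_add]; gcongr

lemma cont_union_le : cont V w (E ∪ E') ≤ cont V w E + cont V w E' := by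
  rw [union_eq_iUnion]
  refine (cont_iUnion_le _).trans ?_
  simp [tsum_fintype]

end cont

structure IsNet {Z : Type*} (V T : ℕ × ℕ → Set Z) : Prop where
  pf : ∀ x k, {i : ℕ × ℕ | i.1 = k ∧ x ∈ V i}.Finite
  sub : ∀ i, V i ⊆ T i
  enl : ∀ j : ℕ × ℕ, 1 ≤ j.1 → ∃ q : ℕ × ℕ, q.1 + 1 = j.1 ∧
    ∀ i : ℕ × ℕ, j.1 ≤ i.1 → (T i ∩ T j).Nonempty → T i ⊆ V q
  fine : ∀ u l : ℕ × ℕ, l.1 < u.1 → (V u ∩ V l).Nonempty → V u ⊆ T l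

lemma IsNet.pf_le {Z : Type*} {V T : ℕ × ℕ → Set Z} (N : IsNet V T) (x : Z) (k : ℕ) :
    {i : ℕ × ℕ | i.1 ≤ k ∧ x ∈ V i}.Finite := by
  refine ((Set.finite_Iic k).biUnion fun j _ => N.pf x j).subset ?_
  rintro i ⟨h, hx⟩
  simp only [mem_iUnion]
  exact ⟨i.1, h, rfl, hx⟩

noncomputable def wgt (g : ℕ → ℝ≥0∞) (k : ℕ) : ℕ × ℕ → ℝ≥0∞ := fun i => if k < i.1 then g i.1 else ⊤
noncomputable def wge (g : ℕ → ℝ≥0∞) (k : ℕ) : ℕ × ℕ → ℝ≥0∞ := fun i => if k ≤ i.1 then g i.1 else ⊤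

section FL
variable {Z : Type*} {V T : ℕ × ℕ → Set Z}

/-- Finite step. -/
lemma fl_step (N : IsNet V T) {g : ℕ → ℝ≥0∞} {D : ℝ≥0∞} 
    (hD : ∀ k, g k ≤ D * g (k + 1)) (k : ℕ) (E : Set Z) {M : ℝ≥0∞}
    (hE : cont V (wgt g k) E < M) (P : Finset (ℕ × ℕ)) 
    (hP : ∀ l ∈ P, k < l.1 ∧ g l.1 / 2 < cont V (wgt g k) (E ∩ V l)) :
    ∃ G : ℕ × ℕ → ℕ × ℕ, (∀ l ∈ P, V l ⊆ V (G l) ∧ k ≤ (G l).1 ∧ (G l).1 ≤ l.1) ∧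
      cost (wge g k) (G '' P) ≤ 3 * D * M := by
  classical
  obtain ⟨J, hJ, hJc⟩ := exists_of_cont_lt hE
  have hJk : ∀ u ∈ J, k < u.1 := by
    intro u hu
    by_contra h
    have := le_cost (w := wgt g k) hu
    simp only [wgt, if_neg h] at this
    exact absurd (this.trans_lt hJc) (by simp)
  choose! q hq1 hq2 using N.enl
  have hne : ∀ l ∈ P, (V l).Nonempty := by
    intro l hl
    by_contra h
    rw [not_nonempty_iff_eq_empty] at h
    have := (hP l hl).2
    rw [h, inter_empty, cont_empty] at this
    exact absurd this (by simp)
  -- the second kind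
  set L : Set (ℕ × ℕ) := {l | l ∈ P ∧ ∀ u ∈ J, (V u ∩ V l).Nonempty → l.1 < u.1} with hL
  obtain ⟨L', hL'L, hdisj, hcov⟩ := Vitali.exists_disjoint_subfamily_covering_enlargement T L
    (fun l => (1/2 : ℝ) ^ l.1) (3/2) (by norm_num) (fun a _ => by positivity) 1
    (fun a _ => pow_le_one₀ (by norm_num) (by norm_num))
    (fun a ha => (hne a ha.1).mono (N.sub a))
  have hcov' : ∀ a ∈ L, ∃ b ∈ L', (T a ∩ T b).Nonempty ∧ b.1 ≤ a.1 := by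
    intro a ha
    obtain ⟨b, hb, h1, h2⟩ := hcov a ha
    refine ⟨b, hb, h1, ?_⟩
    by_contra hlt
    push Not at hlt
    have h3 : (1/2 : ℝ) ^ b.1 ≤ (1/2) ^ (a.1 + 1) :=
      pow_le_pow_of_le_one (by norm_num) (by norm_num) hlt
    have h4 : (0:ℝ) < (1/2) ^ a.1 := by positivity
    rw [pow_succ] at h3
    nlinarith
  have hk1 : ∀ l ∈ P, ∃ b ∈ J ∪ L', b.1 ≤ l.1 ∧ (T l ∩ T b).Nonempty := by
    intro l hl
    by_cases hlL : l ∈ L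
    · obtain ⟨b, hb, h1, h2⟩ := hcov' l hlL
      exact ⟨b, Or.inr hb, h2, h1⟩
    · simp only [hL, mem_ofPred_eq, not_and, not_forall, not_lt] at hlL
      obtain ⟨u, hu, h1, h2⟩ := hlL hl
      refine ⟨u, Or.inl hu, h2, ?_⟩
      rw [inter_comm]
      exact h1.mono (inter_subset_inter (N.sub _) (N.sub _))
  choose! b hb1 hb2 hb3 using hk1
  have hbk : ∀ c ∈ J ∪ L', k < c.1 := by
    rintro c (hc | hc)
    · exact hJk c hc
    · exact (hP c (hL'L hc).1).1
  refine ⟨fun l => q (b l), fun l hl => ?_, ?_⟩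
  · have h1 := hbk _ (hb1 l hl)
    have h2 := hq1 (b l) (by omega)
    have h3 := hb2 l hl
    refine ⟨(N.sub l).trans (hq2 (b l) (by omega) l (hb2 l hl) (hb3 l hl)), ?_, ?_⟩ <;> (dsimp only; omega)
  · have hsub : (fun l => q (b l)) '' P ⊆ q '' (J ∪ L') := by
      rintro _ ⟨l, hl, rfl⟩
      exact ⟨b l, hb1 l hl, rfl⟩
    have hL'c : cost (wgt g k) L' ≤ 2 * cost (wgt g k) J := by
      calc cost (wgt g k) L' ≤ cost (fun l => 2 * cost (wgt g k) {u ∈ J | (V u ∩ V l).Nonempty}) L' := by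
            refine cost_mono_w fun l hl => ?_
            have hlP := (hL'L hl).1
            have h1 := (hP l hlP).2.le
            have h2 : cont V (wgt g k) (E ∩ V l) ≤ cost (wgt g k) {u ∈ J | (V u ∩ V l).Nonempty} := by
              refine cont_le ?_
              rintro x ⟨hx, hxl⟩
              have := hJ hx
              simp only [mem_iUnion] at this ⊢
              obtain ⟨u, hu, hxu⟩ := this
              exact ⟨u, ⟨hu, x, hxu, hxl⟩, hxu⟩
            simp only [wgt, if_pos (hP l hlP).1] at h1 ⊢
            rw [ENNReal.div_le_iff (by simp) (by simp)] at h1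
            refine h1.trans ?_
            rw [mul_comm]
            gcongr
        _ = 2 * ∑' l, ∑' u, (L'.indicator (fun l => ({u ∈ J | (V u ∩ V l).Nonempty}.indicator (wgt g k) u)) l) := by
            rw [cost_mul]
            congr 1
            unfold cost
            congr 1; ext l
            by_cases hl : l ∈ L' <;> simp [hl]
        _ ≤ 2 * cost (wgt g k) J := by
            gcongr
            rw [ENNReal.tsum_comm]
            unfold cost
            refine ENNReal.tsum_le_tsum fun u => ?_
            by_cases hex : ∃ l ∈ L', u ∈ J ∧ (V u ∩ V l).Nonempty
            · obtain ⟨l, hl, hu, hul⟩ := hex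
              rw [tsum_eq_single l]
              · by_cases hu : u ∈ J <;> simp [hl, hu, hul]
              · intro l₂ hl₂
                by_cases hl2' : l₂ ∈ L'
                · rw [indicator_of_mem hl2', indicator_of_notMem]
                  rintro ⟨-, hul2⟩
                  have hd := hdisj hl2' hl hl₂
                  have s1 : V u ⊆ T l := N.fine u l ((hL'L hl).2 u hu hul) hul
                  have s2 : V u ⊆ T l₂ := N.fine u l₂ ((hL'L hl2').2 u hu hul2) hul2
                  obtain ⟨x, hx, -⟩ := hul
                  exact Set.disjoint_left.1 hd (s2 hx) (s1 hx)
                · exact indicator_of_notMem hl2' _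
            · refine le_trans (le_of_eq ?_) (zero_le)
              refine ENNReal.tsum_eq_zero.2 fun l => ?_
              by_cases hl : l ∈ L'
              · rw [indicator_of_mem hl, indicator_of_notMem]
                rintro ⟨h1, h2⟩
                exact hex ⟨l, hl, h1, h2⟩
              · exact indicator_of_notMem hl _
    calc cost (wge g k) ((fun l => q (b l)) '' P) ≤ cost (wge g k) (q '' (J ∪ L')) := cost_mono hsub
      _ ≤ cost (fun i => wge g k (q i)) (J ∪ L') := cost_image_le q
      _ ≤ cost (fun i => D * wgt g k i) (J ∪ L') := by
          refine cost_mono_w fun i hi => ?_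
          have h1 := hbk i hi
          have h2 := hq1 i (by omega)
          have h3 : k ≤ (q i).1 := by omega
          simp only [wge, wgt, if_pos h1, if_pos h3]
          rw [← h2]; exact hD _
      _ = D * cost (wgt g k) (J ∪ L') := cost_mul D
      _ ≤ D * (cost (wgt g k) J + 2 * cost (wgt g k) J) := by
          gcongr
          exact cost_union_le.trans (by gcongr)
      _ = 3 * D * cost (wgt g k) J := by ring
      _ ≤ 3 * D * M := by gcongr

lemma fl (N : IsNet V T) {g : ℕ → ℝ≥0∞} {D : ℝ≥0∞} 
    (hD : ∀ k, g k ≤ D * g (k + 1)) (k : ℕ) (E : ℕ → Set Z) (hmono : Monotone E) {M : ℝ≥0∞}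
    (hE : ∀ n, cont V (wgt g k) (E n) < M) :
    cont V (wge g k) (⋃ n, E n) ≤ 3 * D * M := by
  classical
  set Full : Set (ℕ × ℕ) := {l | k < l.1 ∧ ∃ n, g l.1 / 2 < cont V (wgt g k) (E n ∩ V l)} with hFull
  set F : Set Z := ⋃ l ∈ Full, V l with hF
  -- remainder
  have hR : ∀ n, cont V (wgt g k) (E n \ F) = 0 := by
    intro n
    have hlt : cont V (wgt g k) (E n \ F) < M := (cont_mono sdiff_subset).trans_lt (hE n)
    have hle : cont V (wgt g k) (E n \ F) ≤ cont V (wgt g k) (E n \ F) / 2 := by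
      have key : ∀ J : Set (ℕ × ℕ), E n \ F ⊆ ⋃ i ∈ J, V i →
          cont V (wgt g k) (E n \ F) ≤ 2⁻¹ * cost (wgt g k) J := by
        intro J hJ
        have hc : E n \ F ⊆ ⋃ u : ℕ × ℕ, (if u ∈ J then (E n \ F) ∩ V u else ∅) := by
          intro x hx
          have := hJ hx
          simp only [mem_iUnion] at this ⊢
          obtain ⟨u, hu, hxu⟩ := this
          exact ⟨u, by simp only [hu, if_true]; exact ⟨hx, hxu⟩⟩
        refine (cont_mono hc).trans ((cont_iUnion_le _).trans ?_)
        rw [← cost_mul]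
        unfold cost
        refine ENNReal.tsum_le_tsum fun u => ?_
        by_cases hu : u ∈ J
        · simp only [hu, if_true, indicator_of_mem]
          by_cases hku : k < u.1
          · by_cases hfu : u ∈ Full
            · have : (E n \ F) ∩ V u = ∅ := by
                ext x
                simp only [mem_inter_iff, Set.mem_sdiff, mem_empty_iff_false, iff_false, not_and, and_imp]
                intro _ h hx
                exact h (mem_biUnion hfu hx)
              rw [this, cont_empty]; exact zero_le
            · have : ∀ n, cont V (wgt g k) (E n ∩ V u) ≤ g u.1 / 2 := by
                intro n
                by_contra h
                exact hfu ⟨hku, n, not_le.1 h⟩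
              refine (cont_mono (inter_subset_inter_left _ sdiff_subset)).trans ((this n).trans ?_)
              simp only [wgt, if_pos hku]
              rw [ENNReal.div_eq_inv_mul]
          · simp only [wgt, if_neg hku]
            rw [ENNReal.mul_top (by simp)]
            exact le_top
        · simp [hu, cont_empty]
      rw [ENNReal.div_eq_inv_mul]
      conv_rhs => unfold cont
      simp only [ENNReal.mul_iInf_of_ne (a := 2⁻¹) (by simp) (by simp)]
      exact le_iInf₂ key
    by_contra h0
    exact absurd hle (not_le.2 (ENNReal.half_lt_self h0 hlt.ne_top))
  -- the full part
  have hstep : ∀ P : Finset (ℕ × ℕ), ∃ G : ℕ × ℕ → ℕ × ℕ, (P : Set (ℕ × ℕ)) ⊆ Full → 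
      ((∀ l ∈ P, V l ⊆ V (G l) ∧ k ≤ (G l).1 ∧ (G l).1 ≤ l.1) ∧
      cost (wge g k) (G '' P) ≤ 3 * D * M) := by
    intro P
    by_cases hP : (P : Set (ℕ × ℕ)) ⊆ Full
    · have h1 : ∀ l ∈ P, ∃ n, g l.1 / 2 < cont V (wgt g k) (E n ∩ V l) := fun l hl => (hP hl).2
      choose! n hn using h1
      obtain ⟨G, hG⟩ := fl_step N hD k (E (P.sup n)) (hE _) P (fun l hl => ⟨(hP hl).1, 
        (hn l hl).trans_le (cont_mono (inter_subset_inter_left _ (hmono (Finset.le_sup hl))))⟩)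
      exact ⟨G, fun _ => hG⟩
    · exact ⟨id, fun h => absurd h hP⟩
  choose G hG using hstep
  -- directed version on finsets of the subtype
  let U : Ultrafilter (Finset Full) := Ultrafilter.of atTop
  have hU : (U : Filter (Finset Full)) ≤ atTop := Ultrafilter.of_le _
  let em : Finset Full → Finset (ℕ × ℕ) := fun P => P.map (Function.Embedding.subtype _)
  have hem : ∀ P, ((em P : Finset (ℕ × ℕ)) : Set (ℕ × ℕ)) ⊆ Full := by
    intro P x hx
    simp only [em, Finset.coe_map, Function.Embedding.subtype_apply, mem_image] at hx
    obtain ⟨y, -, rfl⟩ := hx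
    exact y.2
  have hmem : ∀ l : Full, ∀ᶠ P in (U : Filter (Finset Full)), (l : ℕ × ℕ) ∈ em P := by
    intro l
    refine hU ?_
    filter_upwards [eventually_ge_atTop ({l} : Finset Full)] with P hP
    have : l ∈ P := hP (by simp)
    simp [em, this, l.2]
  have hneF : ∀ l ∈ Full, (V l).Nonempty := by
    rintro l ⟨-, n, hn⟩
    by_contra h
    rw [not_nonempty_iff_eq_empty] at h
    rw [h, inter_empty, cont_empty] at hn
    exact absurd hn (by simp)
  have hlim : ∀ l : Full, ∃ a : ℕ × ℕ, ∀ᶠ P in (U : Filter (Finset Full)), G (em P) l = a := by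
    intro l
    obtain ⟨x, hx⟩ := hneF l l.2
    have hfin := N.pf_le x (l : ℕ × ℕ).1
    have h1 : ∀ᶠ P in (U : Filter (Finset Full)), ∃ a ∈ {i : ℕ × ℕ | i.1 ≤ (l : ℕ × ℕ).1 ∧ x ∈ V i}, G (em P) l = a := by
      filter_upwards [hmem l] with P hP
      obtain ⟨h1, -⟩ := hG (em P) (hem P)
      obtain ⟨h2, h3, h4⟩ := h1 l hP
      exact ⟨_, ⟨h4, h2 hx⟩, rfl⟩
    rw [Ultrafilter.eventually_exists_mem_iff hfin] at h1
    obtain ⟨a, -, ha⟩ := h1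
    exact ⟨a, ha⟩
  choose a ha using hlim
  have hFc : cont V (wge g k) F ≤ 3 * D * M := by
    refine (cont_le (J := range a) ?_).trans ?_
    · refine iUnion₂_subset fun l hl => ?_
      obtain ⟨P, hP1, hP2⟩ := ((ha ⟨l, hl⟩).and (hmem ⟨l, hl⟩)).exists
      have := ((hG (em P) (hem P)).1 l hP2).1
      simp only at hP1
      rw [hP1] at this
      exact this.trans (subset_biUnion_of_mem (mem_range_self _))
    · refine cost_le_of_finset fun A hA => ?_
      have : ∀ x ∈ A, ∃ l : Full, a l = x := fun x hx => hA hx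
      have hev : ∀ᶠ P in (U : Filter (Finset Full)), ∀ x ∈ A, x ∈ G (em P) '' (em P) := by
        rw [Filter.eventually_all_finset]
        intro x hx
        obtain ⟨l, rfl⟩ := this x hx
        filter_upwards [ha l, hmem l] with P h1 h2
        exact ⟨l, h2, h1⟩
      obtain ⟨P, hP⟩ := hev.exists
      exact (sum_le_cost (J := G (em P) '' (em P)) hP).trans (hG (em P) (hem P)).2
  have hsub : (⋃ n, E n) ⊆ F ∪ ⋃ n, (E n \ F) := by
    intro x hx
    by_cases h : x ∈ F
    · exact Or.inl h
    · obtain ⟨n, hn⟩ := mem_iUnion.1 hx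
      exact Or.inr (mem_iUnion.2 ⟨n, hn, h⟩)
  have hR' : cont V (wge g k) (⋃ n, (E n \ F)) = 0 := by
    refine le_antisymm ((cont_iUnion_le _).trans ?_) (zero_le)
    refine le_of_eq (ENNReal.tsum_eq_zero.2 fun n => le_antisymm ?_ (zero_le))
    rw [← hR n]
    refine cont_mono_w fun i => ?_
    simp only [wge, wgt]
    by_cases h : k < i.1
    · simp [h, h.le]
    · simp [h]
  calc _ ≤ _ := cont_mono hsub
    _ ≤ _ := cont_union_le
    _ ≤ _ := by rw [hR', add_zero]; exact hFc

end FL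
end S8

open MeasureTheory Set Filter Topology
open scoped NNReal ENNReal

namespace S8
section EL
variable {Z : Type*} {V T : ℕ × ℕ → Set Z}

lemma exists_eta {g : ℕ → ℝ≥0∞} (hg0 : ∀ j, g j ≠ 0) (k : ℕ) : ∃ η : ℝ≥0∞, 0 < η ∧ ∀ j ≤ k, η ≤ g j := by
  induction k with
  | zero => exact ⟨g 0, pos_iff_ne_zero.2 (hg0 0), fun j hj => by rw [Nat.le_zero.1 hj]⟩
  | succ k ih =>
    obtain ⟨η, h1, h2⟩ := ih
    refine ⟨min η (g (k+1)), lt_min h1 (pos_iff_ne_zero.2 (hg0 _)), fun j hj => ?_⟩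
    rcases Nat.lt_or_ge k j with h | h
    · have : j = k + 1 := by omega
      rw [this]; exact min_le_right _ _
    · exact (min_le_left _ _).trans (h2 j h)

lemma el (N : IsNet V T) {g g' : ℕ → ℝ≥0∞} {D : ℝ≥0∞} (hD : ∀ k, g k ≤ D * g (k + 1))
    (hD0 : D ≠ 0) (hDt : D ≠ ⊤) (hg0 : ∀ j, g j ≠ 0) (k : ℕ) (h1 : ∀ j, g' j ≤ g j)
    (h2 : ∀ j, k ≤ j → 3 * D * g' j ≤ g j) (E : ℕ → Set Z) (hE : Monotone E) :
    cont V (fun i => g' i.1) (⋃ n, E n) ≤ ⨆ n, cont V (fun i => g i.1) (E n) := by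
  classical
  set U := ⋃ n, E n with hU
  set gw : ℕ × ℕ → ℝ≥0∞ := fun i => g i.1 with hgw
  set m : ℝ≥0∞ := ⨅ (E' : ℕ → Set Z) (_ : Monotone E' ∧ ⋃ n, E' n = U), ⨆ n, cont V gw (E' n) with hm
  have hmle : ∀ E' : ℕ → Set Z, Monotone E' → ⋃ n, E' n = U → m ≤ ⨆ n, cont V gw (E' n) :=
    fun E' a b => iInf₂_le E' ⟨a, b⟩
  refine le_trans ?_ (hmle E hE rfl)
  refine ENNReal.le_of_forall_pos_le_add fun ε₀ hε₀ hmt => ?_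
  obtain ⟨η, hη, hηg⟩ := exists_eta hg0 k
  obtain ⟨ε, hε, hε'⟩ := exists_between (lt_min (ENNReal.coe_pos.2 hε₀) hη)
  have hεη : ε < η := hε'.trans_le (min_le_right _ _)
  refine le_trans ?_ (add_le_add_right ((hε'.le).trans (min_le_left _ _)) m)
  have hlt : m < m + ε := ENNReal.lt_add_right hmt.ne hε.ne'
  have hfinε : m + ε ≠ ⊤ := ENNReal.add_ne_top.2 ⟨hmt.ne, hεη.ne_top⟩
  obtain ⟨E', ⟨hE'm, hE'U⟩, hE'lt⟩ : ∃ E' : ℕ → Set Z, (Monotone E' ∧ ⋃ n, E' n = U) ∧ 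
      ⨆ n, cont V gw (E' n) < m + ε := by
    rw [hm] at hlt
    conv at hlt => lhs; rw [← hm]
    have : m < m + ε := hlt
    conv at this => lhs; rw [hm]
    simpa only [iInf_lt_iff, exists_prop] using this
  have hJ : ∀ n, ∃ J : Set (ℕ × ℕ), E' n ⊆ ⋃ i ∈ J, V i ∧ cost gw J < m + ε := fun n =>
    exists_of_cont_lt ((le_iSup (fun n => cont V gw (E' n)) n).trans_lt hE'lt)
  choose J hJ hJc using hJ
  set S : ℕ → Set (ℕ × ℕ) := fun n => {i ∈ J n | i.1 ≤ k} with hS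
  have hSfin : ∀ n, (S n).Finite := fun n => 
    (finite_of_cost hη.ne' (hJc n).ne_top).subset fun i hi => ⟨hi.1, hηg _ hi.2⟩
  by_cases hinf : (⋃ n, S n).Finite
  · -- finite case
    have hfp : Finite {A : Set (ℕ × ℕ) // A ⊆ ⋃ n, S n} := hinf.finite_subsets.to_subtype
    obtain ⟨y, hy⟩ := Finite.exists_infinite_fiber
      (fun n => (⟨S n, subset_iUnion S n⟩ : {A : Set (ℕ × ℕ) // A ⊆ ⋃ n, S n}))
    obtain ⟨S', hS'⟩ := y
    have hfreq : ∀ n, ∃ n' ≥ n, S n' = S' := by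
      intro n
      obtain ⟨n', hn', h⟩ := (Set.infinite_coe_iff.1 hy).exists_gt n
      exact ⟨n', h.le, congrArg Subtype.val hn'⟩
    set W := ⋃ i ∈ S', V i with hW
    have hSle : cost gw S' ≤ m + ε := by
      obtain ⟨n', -, hn'⟩ := hfreq 0
      rw [← hn']
      exact (cost_mono (fun i hi => hi.1)).trans (hJc n').le
    have key := fl N hD k (fun n => E' n \ W) (fun a b h => sdiff_subset_sdiff_left (hE'm h))
      (M := m + ε - cost gw S') (by
        intro n
        obtain ⟨n', hnn, hn'⟩ := hfreq n
        have hsub : S' ⊆ J n' := by rw [← hn']; exact fun i hi => hi.1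
        have hcov : E' n \ W ⊆ ⋃ i ∈ J n' \ S', V i := by
          rintro x ⟨hx, hxW⟩
          have := hJ n' (hE'm hnn hx)
          simp only [mem_iUnion] at this ⊢
          obtain ⟨i, hi, hxi⟩ := this
          exact ⟨i, ⟨hi, fun h => hxW (mem_biUnion h hxi)⟩, hxi⟩
        refine (cont_le hcov).trans_lt ?_
        have : cost (wgt g k) (J n' \ S') ≤ cost gw (J n' \ S') := by
          refine cost_mono_w fun i hi => ?_
          have hk : k < i.1 := by
            by_contra hc
            exact hi.2 (by rw [← hn']; exact ⟨hi.1, not_lt.1 hc⟩)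
          simp [wgt, hk, hgw]
        refine this.trans_lt ?_
        rw [lt_tsub_iff_left, cost_diff_add hsub]
        exact hJc n')
    have hUsub : U ⊆ W ∪ ⋃ n, (E' n \ W) := by
      rw [← hE'U]
      intro x hx
      by_cases h : x ∈ W
      · exact Or.inl h
      · obtain ⟨n, hn⟩ := mem_iUnion.1 hx
        exact Or.inr (mem_iUnion.2 ⟨n, hn, h⟩)
    have h3D0 : (3 * D) ≠ 0 := mul_ne_zero (by simp) hD0
    have h3Dt : (3 * D) ≠ ⊤ := ENNReal.mul_ne_top (by simp) hDt
    calc cont V (fun i => g' i.1) U ≤ _ := cont_mono hUsub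
      _ ≤ _ := cont_union_le
      _ ≤ cost gw S' + (3 * D)⁻¹ * cont V (wge g k) (⋃ n, (E' n \ W)) := by
          refine add_le_add ((cont_le Subset.rfl).trans (cost_mono_w fun i _ => h1 _)) 
            (cont_mul_le (by simpa using h3Dt) (by simpa using h3D0) fun i => ?_)
          simp only [wge]
          split_ifs with hi
          · rw [← ENNReal.div_eq_inv_mul, ENNReal.le_div_iff_mul_le (Or.inl h3D0) (Or.inl h3Dt), mul_comm]
            exact h2 _ hi
          · rw [ENNReal.mul_top (by simpa using h3Dt)]; exact le_top
      _ ≤ cost gw S' + (3 * D)⁻¹ * (3 * D * (m + ε - cost gw S')) := by gcongr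
      _ = cost gw S' + (m + ε - cost gw S') := by
          rw [← mul_assoc, ENNReal.inv_mul_cancel h3D0 h3Dt, one_mul]
      _ ≤ m + ε := (add_tsub_cancel_of_le hSle).le
  · -- infinite case
    exfalso
    have hinf' : (⋃ n, S n).Infinite := hinf
    let e := hinf'.natEmbedding
    have he : ∀ l, ∃ n, (e l : ℕ × ℕ) ∈ S n := fun l => mem_iUnion.1 (e l).2
    choose ν hν using he
    have hinj : Function.Injective (fun l => (e l : ℕ × ℕ)) := Subtype.val_injective.comp e.injective
    have hνt : Tendsto ν atTop atTop := by
      refine tendsto_atTop.2 fun n => ?_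
      rw [← Nat.cofinite_eq_atTop, Filter.eventually_cofinite]
      refine (((Set.finite_Iio n).biUnion fun i _ => hSfin i).preimage hinj.injOn).subset fun l hl => ?_
      exact mem_biUnion (not_le.1 hl) (hν l)
    set F : ℕ → Set Z := fun p => {x | ∀ l ≥ p, x ∈ E' (ν l) ∧ x ∉ V (e l)} with hF
    have hFm : Monotone F := fun a b h x hx l hl => hx l (h.trans hl)
    have hFU : ⋃ n, F n = U := by
      apply Subset.antisymm
      · refine iUnion_subset fun p x hx => ?_
        rw [← hE'U]
        exact mem_iUnion.2 ⟨_, (hx p le_rfl).1⟩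
      · rw [← hE'U]
        refine iUnion_subset fun n x hx => ?_
        have a1 : ∀ᶠ l in atTop, x ∈ E' (ν l) := by
          filter_upwards [hνt.eventually_ge_atTop n] with l hl using hE'm hl hx
        have a2 : ∀ᶠ l in atTop, x ∉ V (e l) := by
          rw [← Nat.cofinite_eq_atTop, Filter.eventually_cofinite]
          refine ((N.pf_le x k).preimage hinj.injOn).subset fun l hl => ?_
          exact ⟨(hν l).2, not_not.1 hl⟩
        obtain ⟨p, hp⟩ := eventually_atTop.1 (a1.and a2)
        exact mem_iUnion.2 ⟨p, hp⟩
    have hle : m + η ≤ m + ε := by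
      calc m + η ≤ (⨆ n, cont V gw (F n)) + η := by gcongr; exact hmle F hFm hFU
        _ = ⨆ n, (cont V gw (F n) + η) := ENNReal.iSup_add _
        _ ≤ m + ε := iSup_le fun p => by
            have hsub : {(e p : ℕ × ℕ)} ⊆ J (ν p) := singleton_subset_iff.2 (hν p).1
            refine le_trans ?_ (hJc (ν p)).le
            rw [← cost_diff_add hsub, add_comm]
            refine add_le_add ((hηg _ (hν p).2).trans (le_cost (w := gw) (mem_singleton _))) (cont_le ?_)
            intro x hx
            have h3 := hJ _ (hx p le_rfl).1
            simp only [mem_iUnion] at h3 ⊢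
            obtain ⟨i, hi, hxi⟩ := h3
            refine ⟨i, ⟨hi, fun h => (hx p le_rfl).2 ?_⟩, hxi⟩
            rw [mem_singleton_iff] at h
            rwa [← h]
    exact absurd hle (not_le.2 ((ENNReal.add_lt_add_iff_left hmt.ne).2 hεη))
end EL
end S8

open MeasureTheory Set Filter Topology
open scoped NNReal ENNReal

namespace S8
section choquet
variable {Z : Type*} [TopologicalSpace Z]

lemma choquet (φ : (ℕ → ℕ) → Z) (hφ : Continuous φ) (c : ℕ → Set Z → ℝ≥0∞) (m : ℝ≥0∞)
    (hc : ∀ l (E : ℕ → Set Z), Monotone E → m < c l (⋃ n, E n) → ∃ n, m < c (l+1) (E n))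
    (h0 : m < c 0 (range φ)) :
    ∃ K, IsCompact K ∧ K ⊆ range φ ∧ ∀ O, IsOpen O → K ⊆ O → ∃ l E, E ⊆ O ∧ m < c l E := by
  classical
  set B : (ℕ → ℕ) → ℕ → Set (ℕ → ℕ) := fun b l => {x | ∀ i < l, x i ≤ b i} with hB
  have step : ∀ l b, ∃ n, m < c l (φ '' B b l) → m < c (l+1) (φ '' B (Function.update b l n) (l+1)) := by
    intro l b
    by_cases h : m < c l (φ '' B b l)
    · have hu : φ '' B b l = ⋃ n, φ '' B (Function.update b l n) (l+1) := by
        rw [← image_iUnion]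
        congr 1
        ext x
        simp only [hB, mem_iUnion, mem_ofPred_eq]
        constructor
        · intro hx
          refine ⟨x l, fun i hi => ?_⟩
          rcases Nat.lt_succ_iff_lt_or_eq.1 hi with h | h
          · rw [Function.update_of_ne h.ne]; exact hx i h
          · rw [h]; simp
        · rintro ⟨n, hn⟩ i hi
          have := hn i (by omega)
          rwa [Function.update_of_ne hi.ne] at this
      rw [hu] at h
      obtain ⟨n, hn⟩ := hc l _ (by
        intro n n' hnn
        apply image_mono
        intro x hx i hi
        refine (hx i hi).trans ?_
        by_cases hil : i = l
        · subst hil; simpa using hnn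
        · rw [Function.update_of_ne hil, Function.update_of_ne hil]) h
      exact ⟨n, fun _ => hn⟩
    · exact ⟨0, fun h' => absurd h' h⟩
  choose nx hnx using step
  let bs : ℕ → (ℕ → ℕ) := fun l => Nat.rec (fun _ => 0) (fun l b => Function.update b l (nx l b)) l
  have hbs : ∀ l, bs (l+1) = Function.update (bs l) l (nx l (bs l)) := fun l => rfl
  have hP : ∀ l, m < c l (φ '' B (bs l) l) := by
    intro l
    induction l with
    | zero =>
      have : B (bs 0) 0 = univ := by ext x; simp [hB]
      rw [this, image_univ]; exact h0
    | succ l ih => rw [hbs]; exact hnx l _ ih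
  let b : ℕ → ℕ := fun l => bs (l+1) l
  have hb : ∀ l i, i < l → bs l i = b i := by
    intro l
    induction l with
    | zero => intro i hi; omega
    | succ l ih =>
      intro i hi
      rcases Nat.lt_succ_iff_lt_or_eq.1 hi with h | h
      · rw [hbs, Function.update_of_ne h.ne]; exact ih i h
      · rw [h]
  have hPb : ∀ l, m < c l (φ '' B b l) := by
    intro l
    have : B b l = B (bs l) l := by
      ext x
      simp only [hB, mem_ofPred_eq]
      exact forall₂_congr fun i hi => by rw [hb l i hi]
    rw [this]; exact hP l
  set Q : Set (ℕ → ℕ) := univ.pi fun i => Iic (b i) with hQ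
  have hQc : IsCompact Q := isCompact_univ_pi fun i => (finite_Iic (b i)).isCompact
  refine ⟨φ '' Q, hQc.image hφ, image_subset_range _ _, fun O hO hKO => ?_⟩
  by_contra hcon
  push Not at hcon
  have : ∀ l, ∃ x ∈ B b l, φ x ∉ O := by
    intro l
    by_contra h
    push Not at h
    exact absurd (hPb l) (not_lt.2 (hcon l _ (by rintro _ ⟨x, hx, rfl⟩; exact h x hx)))
  choose x hxB hxO using this
  obtain ⟨y, hyQ, ψ, hψ, hlim⟩ := hQc.tendsto_subseq (x := fun l i => min (x l i) (b i))
    (fun l i _ => mem_Iic.2 (min_le_right _ _))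
  have hlim2 : Tendsto (x ∘ ψ) atTop (𝓝 y) := by
    rw [tendsto_pi_nhds] at hlim ⊢
    intro i
    refine (hlim i).congr' ?_
    filter_upwards [hψ.tendsto_atTop.eventually_gt_atTop i] with p hp
    exact min_eq_left (hxB (ψ p) i hp)
  have := (hφ.tendsto y).comp hlim2
  obtain ⟨p, hp⟩ := (this.eventually (hO.mem_nhds (hKO ⟨y, hyQ, rfl⟩))).exists
  exact hxO _ hp

lemma choquet_an {Y : Set Z} (hY : AnalyticSet Y) (c : ℕ → Set Z → ℝ≥0∞) (m : ℝ≥0∞)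
    (hc : ∀ l (E : ℕ → Set Z), Monotone E → m < c l (⋃ n, E n) → ∃ n, m < c (l+1) (E n))
    (hne : Y.Nonempty) (h0 : m < c 0 Y) :
    ∃ K, IsCompact K ∧ K ⊆ Y ∧ ∀ O, IsOpen O → K ⊆ O → ∃ l E, E ⊆ O ∧ m < c l E := by
  rw [AnalyticSet] at hY
  rcases hY with rfl | ⟨φ, h1, rfl⟩
  · simp at hne
  · exact choquet φ h1 c m hc h0

lemma an_inner [MeasurableSpace Z] [OpensMeasurableSpace Z] {Y : Set Z} (hY : AnalyticSet Y) (ν : Measure Z)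
    [ν.OuterRegular] (h : 0 < ν Y) :
    ∃ K, IsCompact K ∧ K ⊆ Y ∧ 0 < ν K := by
  obtain ⟨m, hm0, hm⟩ := exists_between h
  obtain ⟨K, hK, hKY, hO⟩ := choquet_an hY (fun _ => ν) m (fun l E hE h => by
    rw [hE.measure_iUnion] at h
    exact lt_iSup_iff.1 h) (nonempty_of_measure_ne_zero h.ne') hm
  refine ⟨K, hK, hKY, hm0.trans_le ?_⟩
  rw [K.measure_eq_iInf_isOpen]
  refine le_iInf fun O => le_iInf fun hKO => le_iInf fun hOo => ?_
  obtain ⟨l, E, hE, hmE⟩ := hO O hOo hKO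
  exact hmE.le.trans (measure_mono hE)

/-- part (a) -/
lemma choquet_cont {V T : ℕ × ℕ → Set Z} (N : IsNet V T) (hVo : ∀ i, IsOpen (V i))
    {g₀ : ℕ → ℝ≥0∞} {D : ℝ≥0∞} (hD : ∀ k, g₀ k ≤ D * g₀ (k + 1)) (hD1 : 1 ≤ D) (hDt : D ≠ ⊤)
    (hg0 : ∀ j, g₀ j ≠ 0) {Y : Set Z} (hY : AnalyticSet Y) (h : 0 < cont V (fun i => g₀ i.1) Y) :
    ∃ K, IsCompact K ∧ K ⊆ Y ∧ 0 < cont V (fun i => g₀ i.1 * (3 * D) ^ (Nat.size i.1)) K := by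
  have hC1 : 1 ≤ 3 * D := le_trans hD1 (le_mul_of_one_le_left (zero_le) (by norm_num))
  have hD0 : D ≠ 0 := fun h => by simp [h] at hD1
  have hC0 : 3 * D ≠ 0 := mul_ne_zero (by simp) hD0
  set g : ℕ → ℕ → ℝ≥0∞ := fun l j => g₀ j * (3 * D) ^ (min l (Nat.size j)) with hg
  obtain ⟨m, hm0, hm⟩ := exists_between h
  obtain ⟨K, hK, hKY, hO⟩ := choquet_an hY (fun l => cont V (fun i => g l i.1)) m (fun l E hE h => by
    have hh := el N (g := g (l+1)) (g' := g l) (D := D) (k := 2 ^ l) (fun k => by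
        simp only [hg]
        rw [← mul_assoc]
        refine mul_le_mul' (hD k) (pow_le_pow_right' hC1 ?_)
        exact min_le_min_left _ (Nat.size_le_size (Nat.le_succ k))) hD0 hDt (fun j => 
          mul_ne_zero (hg0 j) (pow_ne_zero _ hC0)) (fun j => 
          mul_le_mul_right (pow_le_pow_right' hC1 (min_le_min_right _ (Nat.le_succ l))) _) 
          (fun j hj => by
            simp only [hg]
            have : l < Nat.size j := Nat.lt_size.2 hj
            rw [min_eq_left this.le, min_eq_left (Nat.succ_le_of_lt this), pow_succ]
            exact le_of_eq (by ring)) E hE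
    exact lt_iSup_iff.1 (h.trans_le hh)) (by
      by_contra hne
      rw [not_nonempty_iff_eq_empty] at hne
      rw [hne, cont_empty] at h
      exact absurd h (lt_irrefl _)) (by simpa [hg] using hm)
  refine ⟨K, hK, hKY, hm0.trans_le (le_cont fun J hJ => ?_)⟩
  obtain ⟨l, E, hE, hmE⟩ := hO _ (isOpen_biUnion fun i _ => hVo i) hJ
  refine hmE.le.trans ((cont_le hE).trans (cost_mono_w fun i _ => ?_))
  exact mul_le_mul_right (pow_le_pow_right' hC1 (min_le_right _ _)) _
end choquet
end S8

open MeasureTheory Set Filter Topology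
open scoped NNReal ENNReal

namespace S8

noncomputable def rho (k : ℕ) : ℝ := (1/32) ^ k

lemma rho_pos (k : ℕ) : 0 < rho k := by unfold rho; positivity
lemma rho_succ (k : ℕ) : rho (k+1) = rho k / 32 := by unfold rho; rw [pow_succ]; ring
lemma rho_anti {k l : ℕ} (h : k ≤ l) : rho l ≤ rho k :=
  pow_le_pow_of_le_one (by norm_num) (by norm_num) h
lemma rho_lim : Tendsto rho atTop (𝓝 0) :=
  tendsto_pow_atTop_nhds_zero_of_lt_one (by norm_num) (by norm_num)

section net
variable {Z : Type*} [MetricSpace Z]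

def VV (z : ℕ → Z) (i : ℕ × ℕ) : Set Z :=
  Metric.ball (z i.2) (3 * rho i.1) \ ⋃ m ∈ Iio i.2, Metric.closedBall (z m) (rho i.1)

def TT (z : ℕ → Z) (i : ℕ × ℕ) : Set Z := Metric.thickening (rho i.1) (VV z i)

variable {z : ℕ → Z} 

lemma VV_open (i : ℕ × ℕ) : IsOpen (VV z i) :=
  Metric.isOpen_ball.sdiff ((finite_Iio _).isClosed_biUnion fun _ _ => Metric.isClosed_closedBall)

lemma VV_dist {i : ℕ × ℕ} {x y : Z} (hx : x ∈ VV z i) (hy : y ∈ VV z i) : dist x y < 6 * rho i.1 := by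
  have h1 := Metric.mem_ball.1 hx.1
  have h2 := Metric.mem_ball.1 hy.1
  have := dist_triangle_right x y (z i.2)
  linarith

lemma exists_near (hz : DenseRange z) (x : Z) (k : ℕ) : ∃ n, dist x (z n) ≤ rho k := by
  obtain ⟨n, hn⟩ := hz.exists_dist_lt x (rho_pos k)
  exact ⟨n, hn.le⟩

lemma VV_sub (hz : DenseRange z) (k : ℕ) (U : Set Z) (hU : ∀ x ∈ U, ∀ y ∈ U, dist x y ≤ rho k) :
    ∃ n, U ⊆ VV z (k, n) := by
  classical
  rcases U.eq_empty_or_nonempty with rfl | ⟨x0, hx0⟩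
  · exact ⟨0, empty_subset _⟩
  have hex : ∃ n, ∃ x ∈ U, dist x (z n) ≤ rho k := by
    obtain ⟨n, hn⟩ := exists_near hz x0 k
    exact ⟨n, x0, hx0, hn⟩
  refine ⟨Nat.find hex, fun y hy => ⟨?_, ?_⟩⟩
  · obtain ⟨x, hx, hd⟩ := Nat.find_spec hex
    have := hU y hy x hx
    have h2 := dist_triangle y x (z (Nat.find hex))
    have := rho_pos k
    simp only [Metric.mem_ball]
    linarith
  · simp only [mem_iUnion, not_exists]
    intro m hm hy'
    exact Nat.find_min hex hm ⟨y, hy, hy'⟩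

lemma TT_dist {i : ℕ × ℕ} {x y : Z} (hx : x ∈ TT z i) (hy : y ∈ TT z i) : dist x y < 8 * rho i.1 := by
  obtain ⟨x', hx', h1⟩ := Metric.mem_thickening_iff.1 hx
  obtain ⟨y', hy', h2⟩ := Metric.mem_thickening_iff.1 hy
  have h3 := VV_dist hx' hy'
  have := dist_triangle4 x x' y' y
  rw [dist_comm y' y] at this
  linarith

lemma VV_net (hz : DenseRange z) : IsNet (VV z) (TT z) where
  pf x k := by
    obtain ⟨n, hn⟩ := exists_near hz x k
    refine (((finite_Iic n).image (fun m => (k, m)))).subset ?_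
    rintro ⟨k', m⟩ ⟨rfl, hx⟩
    refine ⟨m, ?_, rfl⟩
    by_contra hmn
    exact hx.2 (mem_biUnion (mem_Iio.2 (not_le.1 hmn)) hn)
  sub i := Metric.self_subset_thickening (rho_pos _) _
  enl j hj := by
    obtain ⟨k, hk⟩ : ∃ k, j.1 = k + 1 := ⟨j.1 - 1, by omega⟩
    obtain ⟨n, hn⟩ := VV_sub hz k (⋃ i ∈ {i : ℕ × ℕ | j.1 ≤ i.1 ∧ (TT z i ∩ TT z j).Nonempty}, TT z i) (by
      intro x hx y hy
      simp only [mem_iUnion, mem_ofPred_eq] at hx hy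
      obtain ⟨i, ⟨hi, a, ha, ha'⟩, hx⟩ := hx
      obtain ⟨i', ⟨hi', b, hb, hb'⟩, hy⟩ := hy
      have h1 := TT_dist hx ha
      have h2 := TT_dist ha' hb'
      have h3 := TT_dist hb hy
      have := dist_triangle4 x a b y
      have h4 := rho_anti hi
      have h5 := rho_anti hi'
      have h6 := rho_succ k
      rw [hk] at *
      have := rho_pos k
      linarith)
    refine ⟨(k, n), hk.symm, fun i hi hne => ?_⟩
    exact (subset_biUnion_of_mem (u := fun i => TT z i) (show i ∈ {i : ℕ × ℕ | j.1 ≤ i.1 ∧ (TT z i ∩ TT z j).Nonempty} from ⟨hi, hne⟩)).trans hn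
  fine u l hlt hne := by
    obtain ⟨x, hxu, hxl⟩ := hne
    intro y hy
    refine Metric.mem_thickening_iff.2 ⟨x, hxl, ?_⟩
    have h1 := VV_dist hy hxu
    have h2 := rho_anti (Nat.succ_le_of_lt hlt)
    have h3 := rho_succ l.1
    have := rho_pos l.1
    simp only [Nat.succ_eq_add_one] at h2
    linarith
end net
end S8

open MeasureTheory Set Filter Topology
open scoped NNReal ENNReal

namespace S8
section step
variable {Z : Type*} [MetricSpace Z] [MeasurableSpace Z] [BorelSpace Z]

lemma half_set {z : ℕ → Z} (hz : DenseRange z) (μ : Measure Z) [IsFiniteMeasure μ]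
    (hsmall : ∀ ε : ℝ≥0∞, 0 < ε → ∃ δ : ℝ, 0 < δ ∧ ∀ U : Set Z, (∀ x ∈ U, ∀ y ∈ U, dist x y ≤ δ) → μ U ≤ ε)
    (C : Set Z) (hC : MeasurableSet C) {ε : ℝ≥0∞} (hε : 0 < ε) :
    ∃ H ⊆ C, MeasurableSet H ∧ 2 * μ H ≤ μ C ∧ μ C ≤ 2 * μ H + ε := by
  classical
  by_cases h0 : μ C = 0
  · exact ⟨∅, empty_subset _, MeasurableSet.empty, by simp, by simp [h0]⟩
  obtain ⟨δ, hδ, hs⟩ := hsmall (ε / 2) (ENNReal.half_pos hε.ne')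
  set S : ℕ → Set Z := fun k => C ∩ ⋃ i ∈ Iio k, Metric.ball (z i) (δ / 2) with hS
  have hSm : ∀ k, MeasurableSet (S k) := fun k => 
    hC.inter (MeasurableSet.biUnion (to_countable _) fun _ _ => measurableSet_ball)
  have hmono : Monotone S := fun a b h => inter_subset_inter_right _ 
    (biUnion_subset_biUnion_left (Iio_subset_Iio h))
  have hU : ⋃ k, S k = C := by
    apply Subset.antisymm (iUnion_subset fun k => inter_subset_left)
    intro x hx
    obtain ⟨n, hn⟩ := hz.exists_dist_lt x (half_pos hδ)
    refine mem_iUnion.2 ⟨n+1, hx, mem_biUnion (mem_Iio.2 (Nat.lt_succ_self n)) hn⟩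
  have hex : ∃ k, μ C < 2 * μ (S k) := by
    by_contra hcon
    push Not at hcon
    have h1 : 2 * μ C ≤ μ C := by
      conv_lhs => rw [← hU, hmono.measure_iUnion, ENNReal.mul_iSup]
      exact iSup_le hcon
    rw [two_mul] at h1
    have h2 : μ C < μ C + μ C := ENNReal.lt_add_right (measure_ne_top _ _) h0
    exact absurd h1 (not_le.2 h2)
  obtain ⟨k, hk⟩ : ∃ k, Nat.find hex = k + 1 := by
    refine Nat.exists_eq_succ_of_ne_zero fun h => ?_
    have := Nat.find_spec hex
    rw [h] at this
    simp [hS] at this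
  have h1 := Nat.find_spec hex
  rw [hk] at h1
  have h2 : 2 * μ (S k) ≤ μ C := not_lt.1 (Nat.find_min hex (by omega : k < Nat.find hex))
  refine ⟨S k, inter_subset_left, hSm k, h2, h1.le.trans ?_⟩
  have h3 : S (k+1) ⊆ S k ∪ Metric.ball (z k) (δ/2) := by
    rintro x ⟨hx, hx2⟩
    simp only [mem_iUnion] at hx2
    obtain ⟨i, hi, hxi⟩ := hx2
    rcases Nat.lt_succ_iff_lt_or_eq.1 hi with h | h
    · exact Or.inl ⟨hx, mem_biUnion h hxi⟩
    · subst h; exact Or.inr hxi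
  have h4 : μ (Metric.ball (z k) (δ/2)) ≤ ε / 2 := hs _ fun x hx y hy => by
    have := dist_triangle_right x y (z k)
    have a := Metric.mem_ball.1 hx
    have b := Metric.mem_ball.1 hy
    linarith
  calc 2 * μ (S (k+1)) ≤ 2 * (μ (S k) + ε / 2) := by
        gcongr
        exact (measure_mono h3).trans ((measure_union_le _ _).trans (by gcongr))
    _ = 2 * μ (S k) + ε := by rw [mul_add, ENNReal.mul_div_cancel (by simp) (by simp)]

lemma step [CompleteSpace Z] [SecondCountableTopology Z] {z : ℕ → Z} (hz : DenseRange z) (μ : Measure Z) [IsFiniteMeasure μ]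
    (hsmall : ∀ ε : ℝ≥0∞, 0 < ε → ∃ δ : ℝ, 0 < δ ∧ ∀ U : Set Z, (∀ x ∈ U, ∀ y ∈ U, dist x y ≤ δ) → μ U ≤ ε)
    (L : Set Z) (hL : IsCompact L) {ε : ℝ≥0∞} (hε : 0 < ε) {δ : ℝ} (hδ : 0 < δ) :
    ∃ L' ⊆ L, IsCompact L' ∧ μ L ≤ 2 * μ L' + ε ∧ 
      ∀ A, 2 * μ (L' ∩ A) ≤ μ (L ∩ Metric.thickening δ A) := by
  classical
  set C : ℕ → Set Z := disjointed (fun n => L ∩ Metric.ball (z n) (δ/2)) with hCdef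
  have hCm : ∀ n, MeasurableSet (C n) := fun n => MeasurableSet.disjointed (fun n => hL.measurableSet.inter measurableSet_ball) n
  have hCd : Pairwise (Function.onFun Disjoint C) := disjoint_disjointed _
  have hCs : ∀ n, C n ⊆ L ∩ Metric.ball (z n) (δ/2) := fun n => disjointed_subset _ n
  have hCU : ⋃ n, C n = L := by
    rw [hCdef, iUnion_disjointed]
    apply Subset.antisymm (iUnion_subset fun k => inter_subset_left)
    intro x hx
    obtain ⟨n, hn⟩ := hz.exists_dist_lt x (half_pos hδ)
    exact mem_iUnion.2 ⟨n, hx, hn⟩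
  obtain ⟨ε', hε', hs⟩ := ENNReal.exists_pos_sum_of_countable' (ENNReal.half_pos hε.ne').ne' ℕ
  choose H hHC hHm hH1 hH2 using fun n => half_set hz μ hsmall (C n) (hCm n) (hε' n)
  have hHd : Pairwise (Function.onFun Disjoint H) := fun a b h => (hCd h).mono (hHC a) (hHC b)
  have hHUm : MeasurableSet (⋃ n, H n) := MeasurableSet.iUnion hHm
  have hε4 : ε / 2 / 2 ≠ 0 := (ENNReal.half_pos (ENNReal.half_pos hε.ne').ne').ne'
  obtain ⟨L', hL'H, hL'c, hL'm⟩ := hHUm.exists_isCompact_lt_add (measure_ne_top μ _) hε4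
  refine ⟨L', ?_, hL'c, ?_, fun A => ?_⟩
  · rw [← hCU]; exact hL'H.trans (iUnion_mono hHC)
  · calc μ L = ∑' n, μ (C n) := by rw [← hCU, measure_iUnion hCd hCm]
      _ ≤ ∑' n, (2 * μ (H n) + ε' n) := ENNReal.tsum_le_tsum hH2
      _ = 2 * μ (⋃ n, H n) + ∑' n, ε' n := by
          rw [ENNReal.tsum_add, ENNReal.tsum_mul_left, measure_iUnion hHd hHm]
      _ ≤ 2 * (μ L' + ε / 2 / 2) + ε / 2 := by gcongr
      _ = 2 * μ L' + ε := by
          rw [mul_add, ENNReal.mul_div_cancel (by simp) (by simp), add_assoc, ENNReal.add_halves]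
  · set I : Set ℕ := {n | (H n ∩ A).Nonempty} with hI
    have h1 : L' ∩ A ⊆ ⋃ n ∈ I, H n := by
      rintro x ⟨hx, hxA⟩
      obtain ⟨n, hn⟩ := mem_iUnion.1 (hL'H hx)
      exact mem_biUnion (show n ∈ I from ⟨x, hn, hxA⟩) hn
    have h2 : ⋃ n ∈ I, C n ⊆ L ∩ Metric.thickening δ A := by
      refine iUnion₂_subset fun n hn x hx => ?_
      obtain ⟨y, hy, hyA⟩ := hn
      have a := (hCs n hx)
      have b := (hCs n (hHC n hy))
      refine ⟨a.1, Metric.mem_thickening_iff.2 ⟨y, hyA, ?_⟩⟩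
      have := dist_triangle_right x y (z n)
      have a' := Metric.mem_ball.1 a.2
      have b' := Metric.mem_ball.1 b.2
      linarith
    calc 2 * μ (L' ∩ A) ≤ 2 * ∑' n : I, μ (H n) := by
          gcongr
          exact (measure_mono h1).trans (measure_biUnion_le μ I.to_countable _)
      _ = ∑' n : I, 2 * μ (H n) := ENNReal.tsum_mul_left.symm
      _ ≤ ∑' n : I, μ (C n) := ENNReal.tsum_le_tsum fun n => hH1 n
      _ = μ (⋃ n ∈ I, C n) := (measure_biUnion I.to_countable (fun a _ b _ h => hCd h) fun n _ => hCm n).symm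
      _ ≤ _ := measure_mono h2
end step
end S8

open MeasureTheory Set Filter Topology
open scoped NNReal ENNReal

namespace S8
section cantor
variable {Z : Type*} [MetricSpace Z] [MeasurableSpace Z] [BorelSpace Z] [CompleteSpace Z]
  [SecondCountableTopology Z]

lemma cantor_seq {z : ℕ → Z} (hz : DenseRange z) (μ : Measure Z) [IsFiniteMeasure μ]
    (hsmall : ∀ ε : ℝ≥0∞, 0 < ε → ∃ δ : ℝ, 0 < δ ∧ ∀ U : Set Z, (∀ x ∈ U, ∀ y ∈ U, dist x y ≤ δ) → μ U ≤ ε)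
    (K : Set Z) (hK : IsCompact K) (ε : ℕ → ℝ≥0∞) (hε : ∀ n, 0 < ε n) (δ : ℕ → ℝ) (hδ : ∀ n, 0 < δ n) :
    ∃ L : ℕ → Set Z, L 0 = K ∧ (∀ n, L (n+1) ⊆ L n) ∧ (∀ n, IsCompact (L n)) ∧ 
     (∀ n, μ (L n) ≤ 2 * μ (L (n+1)) + ε n) ∧ 
     ∀ n A, 2 * μ (L (n+1) ∩ A) ≤ μ (L n ∩ Metric.thickening (δ n) A) := by
  choose! F h1 h2 h3 h4 using fun (n : ℕ) (L : Set Z) (hL : IsCompact L) => step hz μ hsmall L hL (hε n) (hδ n)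
  let L : ℕ → Set Z := fun n => Nat.rec K (fun n L => F n L) n
  have hL : ∀ n, L (n+1) = F n (L n) := fun n => rfl
  have hc : ∀ n, IsCompact (L n) := by
    intro n
    induction n with
    | zero => exact hK
    | succ n ih => rw [hL]; exact h2 n _ ih
  exact ⟨L, rfl, fun n => h1 n _ (hc n), hc, fun n => h3 n _ (hc n), fun n => h4 n _ (hc n)⟩

lemma cantor {z : ℕ → Z} (hz : DenseRange z) (μ : Measure Z) [IsFiniteMeasure μ]
    {g₀ : ℕ → ℝ≥0∞} {D A : ℝ≥0∞} (hD : ∀ k, g₀ k ≤ D * g₀ (k + 1)) (hD1 : 1 ≤ D) (hDt : D ≠ ⊤)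
    (hlim : Tendsto g₀ atTop (𝓝 0)) (hA : A ≠ ⊤) (hμ : ∀ i, μ (VV z i) ≤ A * g₀ i.1) (hu : μ univ ≤ A * g₀ 0)
    (K : Set Z) (hK : IsCompact K) (hKμ : 0 < μ K) :
    ∃ L ⊆ K, IsCompact L ∧ μ L = 0 ∧ 0 < cont (VV z) (fun i => g₀ i.1 * (3 * D) ^ (Nat.size i.1)) L := by
  have N := VV_net hz
  have hsmall : ∀ ε : ℝ≥0∞, 0 < ε → ∃ δ : ℝ, 0 < δ ∧ ∀ U : Set Z, (∀ x ∈ U, ∀ y ∈ U, dist x y ≤ δ) → μ U ≤ ε := by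
    intro ε hε
    have : Tendsto (fun k => A * g₀ k) atTop (𝓝 (A * 0)) := ENNReal.Tendsto.const_mul hlim (Or.inr hA)
    rw [mul_zero] at this
    obtain ⟨k, hk⟩ := (this.eventually (gt_mem_nhds hε)).exists
    refine ⟨rho k, rho_pos k, fun U hU => ?_⟩
    obtain ⟨n, hn⟩ := VV_sub hz k U hU
    exact (measure_mono hn).trans ((hμ _).trans hk.le)
  have hT : ∀ i, μ (TT z i) ≤ D * A * g₀ i.1 := by
    intro i
    rcases Nat.eq_zero_or_pos i.1 with h | h
    · rw [h, mul_assoc]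
      refine (measure_mono (subset_univ _)).trans (hu.trans ?_)
      exact le_mul_of_one_le_left zero_le hD1
    · obtain ⟨q, hq, hq2⟩ := N.enl i h
      rcases (TT z i).eq_empty_or_nonempty with he | he
      · rw [he]; simp
      · have := hq2 i le_rfl (by rwa [inter_self])
        refine (measure_mono this).trans ((hμ _).trans ?_)
        calc A * g₀ q.1 ≤ A * (D * g₀ (q.1 + 1)) := by gcongr; exact hD _
          _ = _ := by rw [hq]; ring
  obtain ⟨L, hL0, hLs, hLc, hLe, hLA⟩ := cantor_seq hz μ hsmall K hK 
    (fun n => (2⁻¹ : ℝ≥0∞) ^ n * ((2⁻¹ : ℝ≥0∞) ^ (n + 2) * μ K))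
    (fun n => ENNReal.mul_pos (pow_ne_zero _ (by simp)) (mul_ne_zero (pow_ne_zero _ (by simp)) hKμ.ne'))
    (fun n => rho (2 ^ n) / 4) (fun n => by have := rho_pos (2^n); positivity)
  have h22 : ∀ n, (2:ℝ≥0∞) ^ n * (2⁻¹) ^ n = 1 := fun n => by
    rw [← mul_pow, ENNReal.mul_inv_cancel (by simp) (by simp), one_pow]
  -- lower bound
  have hlow : ∀ n, μ K / 2 ≤ 2 ^ n * μ (L n) := by
    have h : ∀ n, μ K ≤ 2 ^ n * μ (L n) + (2⁻¹ - (2⁻¹ : ℝ≥0∞) ^ (n + 1)) * μ K := by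
      intro n
      induction n with
      | zero => simp [hL0]
      | succ n ih =>
        refine ih.trans ?_
        have e1 : (2:ℝ≥0∞) ^ n * μ (L n) ≤ 2 ^ (n+1) * μ (L (n+1)) + 2⁻¹ ^ (n+2) * μ K := by
          calc (2:ℝ≥0∞) ^ n * μ (L n) ≤ 2 ^ n * (2 * μ (L (n+1)) + (2⁻¹ : ℝ≥0∞) ^ n * ((2⁻¹ : ℝ≥0∞) ^ (n + 2) * μ K)) := by
                gcongr; exact hLe n
            _ = 2 ^ (n+1) * μ (L (n+1)) + (2 ^ n * (2⁻¹) ^ n) * (2⁻¹ ^ (n+2) * μ K) := by ring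
            _ = _ := by rw [h22, one_mul]
        have e2 : (2⁻¹:ℝ≥0∞) ^ (n+2) + (2⁻¹ - 2⁻¹ ^ (n+1)) = 2⁻¹ - 2⁻¹ ^ (n+1+1) := by
          have f1 : (2⁻¹:ℝ≥0∞) ^ (n+2) + 2⁻¹ ^ (n+2) = 2⁻¹ ^ (n+1) := by
            rw [pow_succ _ (n+1), ← mul_add, ENNReal.inv_two_add_inv_two, mul_one]
          have f2 : (2⁻¹:ℝ≥0∞) ^ (n+1) ≤ 2⁻¹ := by
            rw [pow_succ]; exact mul_le_of_le_one_left zero_le (pow_le_one₀ zero_le (by simp))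
          have ft : (2⁻¹:ℝ≥0∞) ^ (n+2) ≠ ⊤ := by simp
          have f3 : (2⁻¹:ℝ≥0∞) ^ (n+2) ≤ 2⁻¹ := by
            refine le_trans ?_ f2; rw [← f1]; exact le_self_add
          refine (ENNReal.eq_sub_of_add_eq ft ?_)
          rw [add_right_comm, f1, add_tsub_cancel_of_le f2]
        calc 2 ^ n * μ (L n) + (2⁻¹ - 2⁻¹ ^ (n + 1)) * μ K ≤ 
            (2 ^ (n+1) * μ (L (n+1)) + 2⁻¹ ^ (n+2) * μ K) + (2⁻¹ - 2⁻¹ ^ (n + 1)) * μ K := by gcongr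
          _ = 2 ^ (n+1) * μ (L (n+1)) + (2⁻¹ ^ (n+2) + (2⁻¹ - 2⁻¹ ^ (n + 1))) * μ K := by ring
          _ = _ := by rw [e2]
    intro n
    have h3 : μ K / 2 + μ K / 2 ≤ 2 ^ n * μ (L n) + μ K / 2 := by
      rw [ENNReal.add_halves]
      refine (h n).trans ?_
      gcongr
      rw [ENNReal.div_eq_inv_mul]
      gcongr
      exact tsub_le_self
    exact (ENNReal.add_le_add_iff_right (ENNReal.div_ne_top (measure_ne_top _ _) (by simp))).1 h3
  have hanti : Antitone L := antitone_nat_of_succ_le hLs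
  -- upper
  have hup : ∀ n, 2 ^ n * μ (L n) ≤ μ K := by
    intro n
    induction n with
    | zero => simp [hL0]
    | succ n ih =>
      have := hLA n univ
      rw [inter_univ] at this
      calc (2:ℝ≥0∞) ^ (n+1) * μ (L (n+1)) = 2 ^ n * (2 * μ (L (n+1))) := by ring
        _ ≤ 2 ^ n * μ (L n) := by gcongr; exact this.trans (measure_mono inter_subset_left)
        _ ≤ _ := ih
  have hloc : ∀ s A k, s ≤ k → 2 ^ k * μ (L k ∩ A) ≤ 2 ^ s * μ (L s ∩ Metric.thickening (rho (2^s) - rho (2^k)/2) A) := by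
    intro s A k hk
    induction k, hk using Nat.le_induction generalizing A with
    | base =>
      gcongr
      have := rho_pos (2^s)
      exact Metric.self_subset_thickening (by linarith) A
    | succ k hk ih =>
      calc (2:ℝ≥0∞) ^ (k+1) * μ (L (k+1) ∩ A) = 2 ^ k * (2 * μ (L (k+1) ∩ A)) := by ring
        _ ≤ 2 ^ k * μ (L k ∩ Metric.thickening (rho (2 ^ k) / 4) A) := by gcongr; exact hLA k A
        _ ≤ _ := ih _
        _ ≤ _ := by
          gcongr
          refine (Metric.thickening_thickening_subset _ _ _).trans (Metric.thickening_mono ?_ _)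
          have h1 : 2 ^ k + 1 ≤ 2 ^ (k+1) := by
            have := Nat.one_le_two_pow (n := k); rw [pow_succ]; omega
          have h2 := rho_anti h1
          have h3 := rho_succ (2^k)
          have := rho_pos (2^k)
          linarith
  have hV : ∀ i k, 2 ^ k * μ (L k ∩ VV z i) ≤ D * A * (g₀ i.1 * (3 * D) ^ (Nat.size i.1)) := by
    intro i k
    have e3 : (2:ℝ≥0∞) ^ (Nat.size i.1) * μ (TT z i) ≤ D * A * (g₀ i.1 * (3 * D) ^ (Nat.size i.1)) := by
      calc (2:ℝ≥0∞) ^ (Nat.size i.1) * μ (TT z i) ≤ (3 * D) ^ (Nat.size i.1) * (D * A * g₀ i.1) := by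
            gcongr
            · calc (2:ℝ≥0∞) ≤ 3 * 1 := by norm_num
                _ ≤ _ := by gcongr
            · exact hT i
        _ = _ := by ring
    refine le_trans ?_ e3
    rcases le_total k (Nat.size i.1) with h | h
    · gcongr
      · norm_num
      · exact inter_subset_right.trans (N.sub i)
    · refine (hloc _ _ k h).trans ?_
      gcongr
      refine inter_subset_right.trans (Metric.thickening_mono ?_ _)
      have h1 := rho_anti (Nat.lt_size_self i.1).le
      have := rho_pos (2^k)
      linarith
  refine ⟨⋂ n, L n, by rw [← hL0]; exact iInter_subset _ _, ?_, ?_, ?_⟩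
  · exact (hLc 0).of_isClosed_subset (isClosed_iInter fun n => (hLc n).isClosed) (iInter_subset _ _)
  · have h1 : ∀ n, μ (⋂ n, L n) ≤ 2⁻¹ ^ n * μ K := by
      intro n
      refine (measure_mono (iInter_subset _ n)).trans ?_
      calc μ (L n) = (2 ^ n * 2⁻¹ ^ n) * μ (L n) := by rw [h22, one_mul]
        _ = 2⁻¹ ^ n * (2 ^ n * μ (L n)) := by ring
        _ ≤ _ := by gcongr; exact hup n
    have h2 : Tendsto (fun n => (2⁻¹:ℝ≥0∞) ^ n * μ K) atTop (𝓝 (0 * μ K)) :=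
      ENNReal.Tendsto.mul_const (ENNReal.tendsto_pow_atTop_nhds_zero_of_lt_one (by simp)) (Or.inr (measure_ne_top _ _))
    rw [zero_mul] at h2
    exact le_antisymm (ge_of_tendsto' h2 h1) zero_le
  · have hfin : D * A ≠ ⊤ := ENNReal.mul_ne_top hDt hA
    have key : μ K / 2 / (D * A) ≤ cont (VV z) (fun i => g₀ i.1 * (3 * D) ^ (Nat.size i.1)) (⋂ n, L n) := by
      refine le_cont fun J hJ => ?_
      obtain ⟨k, hk⟩ := exists_subset_nhds_of_isCompact (V := L) (directed_of_isDirected_le (fun a b h => hanti h)) hLc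
        (U := ⋃ i ∈ J, VV z i) (fun x hx => (isOpen_biUnion fun i _ => VV_open i).mem_nhds (hJ hx))
      refine ENNReal.div_le_of_le_mul' ((hlow k).trans ?_)
      rw [← cost_mul, cost_eq]
      calc 2 ^ k * μ (L k) ≤ 2 ^ k * μ (⋃ i ∈ J, (L k ∩ VV z i)) := by
            gcongr
            rw [← inter_iUnion₂]
            exact subset_inter Subset.rfl hk
        _ ≤ 2 ^ k * ∑' i : J, μ (L k ∩ VV z i) := by
            gcongr
            exact measure_biUnion_le μ J.to_countable _
        _ = ∑' i : J, 2 ^ k * μ (L k ∩ VV z i) := ENNReal.tsum_mul_left.symm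
        _ ≤ _ := ENNReal.tsum_le_tsum fun i => hV i k
    refine lt_of_lt_of_le ?_ key
    exact ENNReal.div_pos (ENNReal.half_pos hKμ.ne').ne' hfin
end cantor
end S8

open MeasureTheory Set Filter Topology
open scoped NNReal ENNReal

namespace S8
section main
variable {Z : Type*} [MetricSpace Z] [MeasurableSpace Z] [BorelSpace Z] 

lemma heavy {z : ℕ → Z} (hz : DenseRange z) (ν : Measure Z)
    {g₀ : ℕ → ℝ≥0∞} {D : ℝ≥0∞} (hD : ∀ k, g₀ k ≤ D * g₀ (k + 1)) (M : ℝ≥0∞) :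
    M * cont (VV z) (fun i => g₀ i.1) 
      (⋃ i ∈ {i : ℕ × ℕ | 1 ≤ i.1 ∧ M * g₀ i.1 < ν (VV z i)}, VV z i) ≤ D * ν univ := by
  classical
  have N := VV_net hz
  set L : Set (ℕ × ℕ) := {i : ℕ × ℕ | 1 ≤ i.1 ∧ M * g₀ i.1 < ν (VV z i)} with hL
  choose! q hq1 hq2 using N.enl
  have hne : ∀ l ∈ L, (VV z l).Nonempty := fun l hl =>
    nonempty_of_measure_ne_zero (μ := ν) (ne_of_gt (lt_of_le_of_lt zero_le hl.2))
  obtain ⟨L', hL'L, hdisj, hcov⟩ := Vitali.exists_disjoint_subfamily_covering_enlargement (TT z) L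
    (fun l => (1/2 : ℝ) ^ l.1) (3/2) (by norm_num) (fun a _ => by positivity) 1
    (fun a _ => pow_le_one₀ (by norm_num) (by norm_num))
    (fun a ha => (hne a ha).mono (N.sub a))
  have hcov' : ∀ a ∈ L, ∃ b ∈ L', (TT z a ∩ TT z b).Nonempty ∧ b.1 ≤ a.1 := by
    intro a ha
    obtain ⟨b, hb, h1, h2⟩ := hcov a ha
    refine ⟨b, hb, h1, ?_⟩
    by_contra hlt
    push Not at hlt
    have h3 : (1/2 : ℝ) ^ b.1 ≤ (1/2) ^ (a.1 + 1) :=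
      pow_le_pow_of_le_one (by norm_num) (by norm_num) hlt
    have h4 : (0:ℝ) < (1/2) ^ a.1 := by positivity
    rw [pow_succ] at h3
    nlinarith
  have hsub : (⋃ i ∈ L, VV z i) ⊆ ⋃ i ∈ q '' L', VV z i := by
    refine iUnion₂_subset fun a ha => ?_
    obtain ⟨b, hb, h1, h2⟩ := hcov' a ha
    have := (N.sub a).trans (hq2 b (hL'L hb).1 a h2 h1)
    exact this.trans (subset_biUnion_of_mem (u := VV z) (mem_image_of_mem q hb))
  calc M * cont (VV z) (fun i => g₀ i.1) (⋃ i ∈ L, VV z i) 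
      ≤ M * cost (fun i => g₀ (q i).1) L' := by
        gcongr; exact (cont_le hsub).trans (cost_image_le q)
    _ ≤ M * cost (fun i => D * g₀ i.1) L' := by
        gcongr
        refine cost_mono_w fun i hi => ?_
        have := hq1 i (hL'L hi).1
        rw [← this]; exact hD _
    _ = D * cost (fun i => M * g₀ i.1) L' := by rw [cost_mul, cost_mul]; ring
    _ ≤ D * cost (fun i => ν (VV z i)) L' := by
        gcongr
        exact cost_mono_w fun i hi => (hL'L hi).2.le
    _ = D * ν (⋃ i ∈ L', VV z i) := by
        rw [cost_eq, measure_biUnion L'.to_countable _ fun i _ => (VV_open i).measurableSet]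
        exact fun a ha b hb hab => (hdisj ha hb hab).mono (N.sub a) (N.sub b)
    _ ≤ _ := by gcongr; exact subset_univ _

lemma an_inter {Z : Type*} [MetricSpace Z] [CompleteSpace Z]
  [SecondCountableTopology Z] [MeasurableSpace Z] [BorelSpace Z] {Y B : Set Z} (hY : AnalyticSet Y) 
    (hB : MeasurableSet B) : AnalyticSet (B ∩ Y) := by
  rw [inter_eq_iInter]
  refine AnalyticSet.iInter fun b => ?_
  cases b
  · exact hY
  · exact hB.analyticSet

theorem mainthm [CompleteSpace Z]
  [SecondCountableTopology Z] {z : ℕ → Z} (hz : DenseRange z) (ν : Measure Z) [IsFiniteMeasure ν]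
    {g₀ : ℕ → ℝ≥0∞} {D : ℝ≥0∞} (hD : ∀ k, g₀ k ≤ D * g₀ (k + 1)) (hD1 : 1 ≤ D) (hDt : D ≠ ⊤)
    (hg0 : ∀ j, g₀ j ≠ 0) (hlim : Tendsto g₀ atTop (𝓝 0)) {Y : Set Z} (hY : AnalyticSet Y)
    (hpos : 0 < cont (VV z) (fun i => g₀ i.1) Y) :
    ∃ K ⊆ Y, IsCompact K ∧ ν K = 0 ∧ 0 < cont (VV z) (fun i => g₀ i.1 * (3 * D) ^ (Nat.size i.1)) K := by
  classical
  have N := VV_net hz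
  by_cases hA : ∃ B, MeasurableSet B ∧ ν B = 0 ∧ 0 < cont (VV z) (fun i => g₀ i.1) (B ∩ Y)
  · obtain ⟨B, hB, hB0, hBp⟩ := hA
    obtain ⟨K, h1, h2, h3⟩ := choquet_cont N VV_open hD hD1 hDt hg0 (an_inter hY hB) hBp
    exact ⟨K, h2.trans inter_subset_right, h1, measure_mono_null (h2.trans inter_subset_left) hB0, h3⟩
  push Not at hA
  set Hv : ℕ → Set Z := fun M => ⋃ i ∈ {i : ℕ × ℕ | 1 ≤ i.1 ∧ ((M:ℝ≥0∞)+1) * g₀ i.1 < ν (VV z i)}, VV z i with hHv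
  have hHvo : ∀ M, IsOpen (Hv M) := fun M => isOpen_biUnion fun i _ => VV_open i
  have hex : ∃ M, 0 < cont (VV z) (fun i => g₀ i.1) (Y \ Hv M) := by
    by_contra hcon
    push Not at hcon
    have h1 : cont (VV z) (fun i => g₀ i.1) (⋂ M, Hv M) = 0 := by
      by_contra h0
      have h2 : ∀ M : ℕ, ((M:ℝ≥0∞)) * cont (VV z) (fun i => g₀ i.1) (⋂ M, Hv M) ≤ D * ν univ := by
        intro M
        refine le_trans ?_ (heavy hz ν hD ((M:ℝ≥0∞)+1))
        refine mul_le_mul' le_self_add (cont_mono (iInter_subset _ M))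
      obtain ⟨n, hn⟩ := ENNReal.exists_nat_mul_gt h0 (ENNReal.mul_ne_top hDt (measure_ne_top ν univ))
      exact absurd (h2 n) (not_le.2 hn)
    have h2 : Y ⊆ (⋂ M, Hv M) ∪ ⋃ M, Y \ Hv M := by
      intro x hx
      by_cases h : x ∈ ⋂ M, Hv M
      · exact Or.inl h
      · simp only [mem_iInter, not_forall] at h
        obtain ⟨M, hM⟩ := h
        exact Or.inr (mem_iUnion.2 ⟨M, hx, hM⟩)
    have h3 : cont (VV z) (fun i => g₀ i.1) (⋃ M, Y \ Hv M) = 0 := by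
      refine le_antisymm ((cont_iUnion_le _).trans (le_of_eq ?_)) zero_le
      exact ENNReal.tsum_eq_zero.2 fun M => le_antisymm (hcon M) zero_le
    have := (cont_mono (w := fun i => g₀ i.1) (V := VV z) h2).trans cont_union_le
    rw [h1, h3, add_zero] at this
    exact absurd hpos (not_lt.2 this)
  obtain ⟨M, hM⟩ := hex
  have hYM : AnalyticSet (Y \ Hv M) := by
    rw [sdiff_eq, inter_comm]
    exact an_inter hY (hHvo M).measurableSet.compl
  have hνp : 0 < ν (Y \ Hv M) := by
    rw [pos_iff_ne_zero]
    intro h0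
    obtain ⟨B, hB1, hB2, hB3⟩ := exists_measurable_superset_of_null h0
    exact absurd (hM.trans_le (cont_mono (subset_inter hB1 sdiff_subset))) (not_lt.2 (hA B hB2 hB3))
  obtain ⟨K, hKc, hKY, hKp⟩ := an_inner hYM ν hνp
  have hAt : ((M:ℝ≥0∞)+1) + ν univ / g₀ 0 ≠ ⊤ := ENNReal.add_ne_top.2 ⟨by simp, ENNReal.div_ne_top (measure_ne_top _ _) (hg0 0)⟩
  have hgt : g₀ 0 ≠ ⊤ := by
    have hb : ∀ k, g₀ 0 ≤ D ^ k * g₀ k := by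
      intro k
      induction k with
      | zero => simp
      | succ k ih =>
        refine ih.trans ?_
        calc D ^ k * g₀ k ≤ D ^ k * (D * g₀ (k+1)) := by gcongr; exact hD k
          _ = _ := by ring
    obtain ⟨k, hk⟩ := (hlim.eventually (gt_mem_nhds (show (0:ℝ≥0∞) < 1 by simp))).exists
    exact ((hb k).trans_lt (ENNReal.mul_lt_top (ENNReal.pow_ne_top hDt).lt_top (hk.trans_le (by simp)))).ne
  have hu : ν univ ≤ (((M:ℝ≥0∞)+1) + ν univ / g₀ 0) * g₀ 0 := by
    rw [add_mul, ENNReal.div_mul_cancel (hg0 0) hgt]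
    exact le_add_self
  obtain ⟨L, hLK, hLc, hL0, hLp⟩ := cantor hz (ν.restrict K) hD hD1 hDt hlim hAt (by
    intro i
    rcases Nat.eq_zero_or_pos i.1 with h | h
    · rw [h]; exact (Measure.restrict_apply_le _ _).trans ((measure_mono (subset_univ _)).trans hu)
    · by_cases hi : ((M:ℝ≥0∞)+1) * g₀ i.1 < ν (VV z i)
      · have : VV z i ∩ K = ∅ := by
          ext x
          simp only [mem_inter_iff, mem_empty_iff_false, iff_false, not_and]
          intro hx hxK
          exact (hKY hxK).2 (mem_biUnion (show i ∈ {i : ℕ × ℕ | 1 ≤ i.1 ∧ ((M:ℝ≥0∞)+1) * g₀ i.1 < ν (VV z i)} from ⟨h, hi⟩) hx)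
        rw [Measure.restrict_apply (VV_open i).measurableSet, this]; simp
      · refine (Measure.restrict_apply_le _ _).trans ((not_lt.1 hi).trans ?_)
        exact mul_le_mul' le_self_add le_rfl) ((Measure.restrict_apply_le _ _).trans hu) K hKc (by simpa using hKp)
  refine ⟨L, hLK.trans (hKY.trans sdiff_subset), hLc, ?_, hLp⟩
  rwa [Measure.restrict_apply hLc.measurableSet, inter_eq_left.2 hLK] at hL0
end main
end S8

open MeasureTheory Set Filter Topology
open scoped NNReal ENNReal

namespace S8

lemma growth (t r : ℝ) (h : r < t) (p : ℕ) (C : ℝ) (hC : C ≤ 2 ^ p) (hC0 : 0 ≤ C) :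
    ∃ A : ℝ, 0 ≤ A ∧ ∀ j, rho j ^ t * C ^ (Nat.size j) ≤ A * rho j ^ r := by
  set q : ℝ := (1/32) ^ (t - r) with hq
  have hq0 : 0 < q := by positivity
  have hq1 : q < 1 := Real.rpow_lt_one (by norm_num) (by norm_num) (by linarith)
  have hlim : Tendsto (fun j : ℕ => 3 ^ p * ((j:ℝ) ^ p * q ^ j + q ^ j)) atTop (𝓝 (3 ^ p * (0 + 0))) :=
    ((tendsto_pow_const_mul_const_pow_of_abs_lt_one p (by rwa [abs_of_pos hq0])).add 
      (tendsto_pow_atTop_nhds_zero_of_lt_one hq0.le hq1)).const_mul _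
  obtain ⟨A, hA⟩ := hlim.bddAbove_range
  have hA' : ∀ j : ℕ, 3 ^ p * ((j:ℝ) ^ p * q ^ j + q ^ j) ≤ A := fun j => hA ⟨j, rfl⟩
  refine ⟨A, le_trans (by positivity) (hA' 0), fun j => ?_⟩
  have h1 : rho j ^ t = rho j ^ r * q ^ j := by
    have : t = r + (t - r) := by ring
    conv_lhs => rw [this, Real.rpow_add (rho_pos j)]
    congr 1
    rw [hq, rho, ← Real.rpow_natCast, ← Real.rpow_natCast, ← Real.rpow_mul (by norm_num), ← Real.rpow_mul (by norm_num), mul_comm]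
  have h2 : C ^ (Nat.size j) ≤ 3 ^ p * ((j:ℝ) ^ p + 1) := by
    have h3 : 2 ^ Nat.size j ≤ 2 * j + 1 := by
      rcases Nat.eq_zero_or_pos (Nat.size j) with h | h
      · rw [h]; omega
      · have := Nat.lt_size.1 (show Nat.size j - 1 < Nat.size j by omega)
        have e : Nat.size j = (Nat.size j - 1) + 1 := by omega
        rw [e, pow_succ]; omega
    calc C ^ (Nat.size j) ≤ (2 ^ p) ^ (Nat.size j) := pow_le_pow_left₀ hC0 hC _
      _ = (2 ^ Nat.size j) ^ p := by rw [← pow_mul, ← pow_mul, mul_comm]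
      _ ≤ (2 * j + 1) ^ p := by gcongr; exact_mod_cast h3
      _ ≤ (3 * max (j:ℝ) 1) ^ p := by
          gcongr
          have := le_max_left (j:ℝ) 1
          have := le_max_right (j:ℝ) 1
          linarith
      _ = 3 ^ p * (max (j:ℝ) 1) ^ p := mul_pow _ _ _
      _ ≤ _ := by
          gcongr
          rcases max_cases (j:ℝ) 1 with ⟨h, -⟩ | ⟨h, -⟩ <;> rw [h]
          · linarith
          · have : (0:ℝ) ≤ (j:ℝ) ^ p := by positivity
            rw [one_pow]; linarith
  rw [h1]
  calc rho j ^ r * q ^ j * C ^ Nat.size j ≤ rho j ^ r * q ^ j * (3 ^ p * ((j:ℝ) ^ p + 1)) := by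
        have := rho_pos j; gcongr
    _ = (3 ^ p * ((j:ℝ) ^ p * q ^ j + q ^ j)) * rho j ^ r := by ring
    _ ≤ _ := by have := rho_pos j; gcongr; exact hA' j

noncomputable def g0 (t : ℝ) (j : ℕ) : ℝ≥0∞ := ENNReal.ofReal (rho j) ^ t
noncomputable def DD (t : ℝ) : ℝ≥0∞ := 32 ^ t
noncomputable def GG (t : ℝ) (i : ℕ × ℕ) : ℝ≥0∞ := g0 t i.1 * (3 * DD t) ^ (Nat.size i.1)

lemma rho_zero : rho 0 = 1 := by simp [rho]

lemma g0_D {t : ℝ} (ht : 0 < t) (k : ℕ) : g0 t k ≤ DD t * g0 t (k+1) := by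
  unfold g0 DD
  rw [← ENNReal.mul_rpow_of_nonneg _ _ ht.le]
  refine ENNReal.rpow_le_rpow (le_of_eq ?_) ht.le
  have : (32:ℝ≥0∞) = ENNReal.ofReal 32 := by simp
  rw [this, ← ENNReal.ofReal_mul (by norm_num), rho_succ]
  congr 1; ring
lemma DD_one {t : ℝ} (ht : 0 < t) : 1 ≤ DD t := ENNReal.one_le_rpow (by norm_num) ht
lemma DD_top {t : ℝ} (ht : 0 < t) : DD t ≠ ⊤ := ENNReal.rpow_ne_top_of_nonneg ht.le (by simp)
lemma g0_ne {t : ℝ} (j : ℕ) : g0 t j ≠ 0 := by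
  unfold g0
  have := rho_pos j
  simp [ENNReal.rpow_eq_zero_iff, this]
lemma g0_lim {t : ℝ} (ht : 0 < t) : Tendsto (g0 t) atTop (𝓝 0) := by
  have h := ENNReal.tendsto_ofReal rho_lim
  have h2 := ((ENNReal.continuous_rpow_const (y := t)).tendsto _).comp h
  rw [ENNReal.ofReal_zero, ENNReal.zero_rpow_of_pos ht] at h2
  exact h2

lemma GG_growth {t r : ℝ} (h : r < t) : ∃ A : ℝ≥0∞, A ≠ ⊤ ∧ ∀ i, GG t i ≤ A * g0 r i.1 := by
  obtain ⟨p, hp⟩ := pow_unbounded_of_one_lt (3 * (32:ℝ) ^ t) (show (1:ℝ) < 2 by norm_num)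
  obtain ⟨A, hA0, hA⟩ := growth t r h p _ hp.le (by positivity)
  refine ⟨ENNReal.ofReal A, ENNReal.ofReal_ne_top, fun i => ?_⟩
  have h1 := ENNReal.ofReal_le_ofReal (hA i.1)
  have hr := rho_pos i.1
  rw [ENNReal.ofReal_mul (by positivity), ENNReal.ofReal_mul hA0, ← ENNReal.ofReal_rpow_of_pos hr, 
    ← ENNReal.ofReal_rpow_of_pos hr, ENNReal.ofReal_pow (by positivity), 
    ENNReal.ofReal_mul (by norm_num), ← ENNReal.ofReal_rpow_of_pos (by norm_num)] at h1
  simpa [GG, g0, DD] using h1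

section haus
variable {Z : Type*} [MetricSpace Z]

lemma hM_eq [MeasurableSpace Z] [BorelSpace Z] (s : ℝ≥0) (E : Set Z) : hausdorffM (sGauge s) E = μH[s] E := by
  unfold Measure.hausdorffMeasure
  rw [← OuterMeasure.coe_mkMetric]
  have hev : ∀ᶠ d : ℝ≥0∞ in 𝓝 0, sGauge s d.toNNReal = d ^ (s:ℝ) := by
    filter_upwards [gt_mem_nhds (show (0:ℝ≥0∞) < 1 by simp)] with d hd
    unfold sGauge
    rw [ENNReal.coe_toNNReal (hd.trans_le (by simp)).ne]
  unfold hausdorffM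
  refine le_antisymm ?_ ?_
  · exact OuterMeasure.mkMetric_mono (hev.mono fun d hd => hd.le) E
  · exact OuterMeasure.mkMetric_mono (hev.mono fun d hd => hd.ge) E

lemma ediam_VV (z : ℕ → Z) (i : ℕ × ℕ) : Metric.ediam (VV z i) ≤ 6 * ENNReal.ofReal (rho i.1) := by
  refine Metric.ediam_le fun x hx y hy => ?_
  rw [edist_dist]
  have : (6:ℝ≥0∞) = ENNReal.ofReal 6 := by simp
  rw [this, ← ENNReal.ofReal_mul (by norm_num)]
  exact ENNReal.ofReal_le_ofReal (VV_dist hx hy).le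

lemma cont_pos {z : ℕ → Z} {t : ℝ≥0} (ht : 0 < t) {Y : Set Z} 
    (h : 0 < hausdorffM (sGauge t) Y) : 0 < cont (VV z) (fun i => g0 t i.1) Y := by
  let _ : MeasurableSpace Z := borel Z
  have : BorelSpace Z := ⟨rfl⟩
  have ht' : (0:ℝ) < t := ht
  rw [hM_eq] at h
  by_contra hc
  have hc0 : cont (VV z) (fun i => g0 t i.1) Y = 0 := le_antisymm (not_lt.1 hc) zero_le
  let e : ℕ → ℝ≥0∞ := fun n => (n : ℝ≥0∞)⁻¹
  have he : ∀ n, 0 < e n := fun n => by simp [e]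
  have hel : Tendsto e atTop (𝓝 0) := ENNReal.tendsto_inv_nat_nhds_zero
  choose J hJ hJc using fun n => exists_of_cont_lt (hc0.trans_lt (he n))
  have hrl : Tendsto (fun n => 6 * (e n) ^ ((t:ℝ)⁻¹)) atTop (𝓝 0) := by
    have h2 := ((ENNReal.continuous_rpow_const (y := (t:ℝ)⁻¹)).tendsto _).comp hel
    rw [ENNReal.zero_rpow_of_pos (by positivity)] at h2
    simpa using ENNReal.Tendsto.const_mul (a := 6) h2 (Or.inr (by simp))
  have key := Measure.hausdorffMeasure_le_liminf_tsum (t:ℝ) Y (ι := fun n => J n)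
    (fun n => 6 * (e n) ^ ((t:ℝ)⁻¹)) hrl (fun n i => VV z i) 
    (Eventually.of_forall fun n i => by
      refine (ediam_VV z i).trans ?_
      gcongr
      rw [ENNReal.le_rpow_inv_iff ht']
      exact (le_cost (w := fun i : ℕ × ℕ => g0 t i.1) i.2).trans (hJc n).le)
    (Eventually.of_forall fun n => by
      have := hJ n
      rwa [biUnion_eq_iUnion] at this)
  have h0 : liminf (fun n => ∑' i : J n, Metric.ediam (VV z i) ^ (t:ℝ)) atTop ≤ 0 := by
    have hb : ∀ n, ∑' i : J n, Metric.ediam (VV z i) ^ (t:ℝ) ≤ 6 ^ (t:ℝ) * e n := by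
      intro n
      calc ∑' i : J n, Metric.ediam (VV z i) ^ (t:ℝ) ≤ ∑' i : J n, 6 ^ (t:ℝ) * g0 t (i:ℕ × ℕ).1 := by
            refine ENNReal.tsum_le_tsum fun i => ?_
            unfold g0
            rw [← ENNReal.mul_rpow_of_nonneg _ _ ht'.le]
            exact ENNReal.rpow_le_rpow (ediam_VV z i) ht'.le
        _ = 6 ^ (t:ℝ) * cost (fun i => g0 t i.1) (J n) := by rw [ENNReal.tsum_mul_left, cost_eq]
        _ ≤ _ := by gcongr; exact (hJc n).le
    have hl : Tendsto (fun n => 6 ^ (t:ℝ) * e n) atTop (𝓝 0) := by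
      simpa using ENNReal.Tendsto.const_mul (a := 6 ^ (t:ℝ)) hel (Or.inr (ENNReal.rpow_ne_top_of_nonneg ht'.le (by simp)))
    rw [← hl.liminf_eq]
    exact liminf_le_liminf (Eventually.of_forall hb)
  exact absurd h (not_lt.2 (key.trans h0))

lemma haus_pos {z : ℕ → Z} (hz : DenseRange z) {t r : ℝ≥0} (hr : 0 < r) (h : r < t) {E : Set Z} 
    (hc : 0 < cont (VV z) (GG t) E) : 0 < hausdorffM (sGauge r) E := by
  let _ : MeasurableSpace Z := borel Z
  have : BorelSpace Z := ⟨rfl⟩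
  have hr' : (0:ℝ) < r := hr
  obtain ⟨A, hAt, hA⟩ := GG_growth (t := t) (r := r) (by exact_mod_cast h)
  rw [hM_eq, pos_iff_ne_zero]
  intro h0
  have hB : A * DD r ≠ ⊤ := ENNReal.mul_ne_top hAt (DD_top hr')
  -- choice of scale
  have hsc : ∀ (U : Set Z) (e : ℝ≥0∞), Metric.ediam U ≤ 1 → 0 < e → ∃ i, U ⊆ VV z i ∧ GG t i ≤ A * DD r * Metric.ediam U ^ (r:ℝ) + e := by
    intro U e hU he
    have hput : ∀ k, Metric.ediam U ≤ ENNReal.ofReal (rho k) → ∃ n, U ⊆ VV z (k, n) := by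
      intro k hk
      refine VV_sub hz k U fun x hx y hy => ?_
      have := (Metric.edist_le_ediam_of_mem hx hy).trans hk
      rw [edist_dist] at this
      exact (ENNReal.ofReal_le_ofReal_iff (rho_pos k).le).1 this
    by_cases hd : Metric.ediam U = 0
    · have hl : Tendsto (fun k => A * g0 r k) atTop (𝓝 0) := by
        simpa using ENNReal.Tendsto.const_mul (a := A) (g0_lim hr') (Or.inr hAt)
      obtain ⟨k, hk⟩ := (hl.eventually (gt_mem_nhds he)).exists
      obtain ⟨n, hn⟩ := hput k (by rw [hd]; exact zero_le)
      exact ⟨(k, n), hn, (hA _).trans (hk.le.trans le_add_self)⟩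
    · have hl := ENNReal.tendsto_ofReal rho_lim
      rw [ENNReal.ofReal_zero] at hl
      have hex : ∃ k, ENNReal.ofReal (rho k) < Metric.ediam U := 
        (hl.eventually (gt_mem_nhds (pos_iff_ne_zero.2 hd))).exists
      classical
      obtain ⟨k, hk⟩ : ∃ k, Nat.find hex = k + 1 := by
        refine Nat.exists_eq_succ_of_ne_zero fun h => ?_
        have := Nat.find_spec hex
        rw [h, rho_zero, ENNReal.ofReal_one] at this
        exact absurd hU (not_le.2 this)
      have h1 := Nat.find_spec hex
      rw [hk] at h1
      obtain ⟨n, hn⟩ := hput k (not_lt.1 (Nat.find_min hex (by omega : k < Nat.find hex)))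
      refine ⟨(k, n), hn, (hA _).trans (le_trans ?_ le_self_add)⟩
      rw [mul_assoc]
      gcongr
      refine (g0_D hr' k).trans ?_
      gcongr
      exact ENNReal.rpow_le_rpow h1.le hr'.le
  have hle : cont (VV z) (GG t) E ≤ 0 := by
    refine ENNReal.le_of_forall_pos_le_add fun ε hε _ => ?_
    rw [zero_add]
    have hε' : (0:ℝ≥0∞) < ε := by exact_mod_cast hε
    obtain ⟨e, he, hes⟩ := ENNReal.exists_pos_sum_of_countable' (ENNReal.half_pos hε'.ne').ne' ℕ
    obtain ⟨c, hc0, hcl⟩ : ∃ c : ℝ≥0∞, 0 < c ∧ A * DD r * c ≤ ε / 2 := by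
      refine ⟨ε / 2 / (A * DD r), ENNReal.div_pos (ENNReal.half_pos hε'.ne').ne' hB, ?_⟩
      exact ENNReal.mul_div_le
    rw [Measure.hausdorffMeasure_apply] at h0
    have h1 : (⨅ (t : ℕ → Set Z) (_ : E ⊆ ⋃ n, t n) (_ : ∀ n, Metric.ediam (t n) ≤ 1), ∑' n, ⨆ _ : (t n).Nonempty, Metric.ediam (t n) ^ (r:ℝ)) < c := by
      refine lt_of_le_of_lt ?_ hc0
      rw [← h0]
      exact le_iSup₂_of_le (1:ℝ≥0∞) (by simp) le_rfl
    simp only [iInf_lt_iff] at h1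
    obtain ⟨U, hU, hUd, hUs⟩ := h1
    choose i hi hiG using fun n => hsc (U n) (e n) (hUd n) (he n)
    calc cont (VV z) (GG t) E ≤ cost (GG t) (range i) := cont_le (by
          refine hU.trans (iUnion_subset fun n => (hi n).trans ?_)
          exact subset_biUnion_of_mem (u := VV z) (mem_range_self n))
      _ ≤ ∑' n, GG t (i n) := by
          rw [← image_univ]
          refine (cost_image_le i).trans (le_of_eq ?_)
          simp [cost]
      _ ≤ ∑' n, (A * DD r * (⨆ _ : (U n).Nonempty, Metric.ediam (U n) ^ (r:ℝ)) + e n) := by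
          refine ENNReal.tsum_le_tsum fun n => (hiG n).trans ?_
          rcases (U n).eq_empty_or_nonempty with hn | hn
          · rw [hn]; simp [hr']
          · simp [hn]
      _ ≤ A * DD r * c + ε / 2 := by
          rw [ENNReal.tsum_add, ENNReal.tsum_mul_left]
          gcongr
      _ ≤ ε / 2 + ε / 2 := by gcongr
      _ = ε := ENNReal.add_halves _
  exact absurd hc (not_lt.2 hle)
end haus
end S8

open MeasureTheory Set Filter Topology
open scoped NNReal ENNReal

namespace S8

section fin
variable {X Z : Type*} [MetricSpace X] [MetricSpace Z]

lemma hDim_mono {E F : Set Z} (h : E ⊆ F) : hDim E ≤ hDim F := by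
  unfold hDim
  exact iSup_mono fun s => iSup_le fun hs => 
    le_iSup (fun _ : 0 < hausdorffM (sGauge s) F => (s:ℝ≥0∞)) (hs.trans_le (measure_mono h))

lemma le_hDim {E : Set Z} {r : ℝ≥0} (h : 0 < hausdorffM (sGauge r) E) : (r:ℝ≥0∞) ≤ hDim E := by
  unfold hDim
  exact le_iSup₂ (f := fun (s : ℝ≥0) (_ : 0 < hausdorffM (sGauge s) E) => (s:ℝ≥0∞)) r h

lemma pos_of_lt_hDim {E : Set Z} {r : ℝ≥0} (h : (r:ℝ≥0∞) < hDim E) : 0 < hausdorffM (sGauge r) E := by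
  let _ : MeasurableSpace Z := borel Z
  have : BorelSpace Z := ⟨rfl⟩
  unfold hDim at h
  simp only [lt_iSup_iff] at h
  obtain ⟨s, hs, hrs⟩ := h
  rw [hM_eq] at hs ⊢
  refine hs.trans_le (Measure.hausdorffMeasure_mono ?_ E)
  exact_mod_cast hrs.le

lemma secondCountable {s : ℝ≥0} (hX : SigmaFiniteSet (hausdorffM (sGauge s)) (Set.univ : Set X)) :
    SecondCountableTopology X := by
  let _ : MeasurableSpace X := borel X
  have : BorelSpace X := ⟨rfl⟩
  obtain ⟨A, hA, hU⟩ := hX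
  refine Metric.secondCountable_of_almost_dense_set fun ε hε => ?_
  have key : ∀ n, ∃ t : ℕ → Set X, A n ⊆ ⋃ i, t i ∧ ∀ i, Metric.ediam (t i) ≤ ENNReal.ofReal ε := by
    intro n
    have h := (hA n).2
    rw [hM_eq, Measure.hausdorffMeasure_apply] at h
    have h2 := lt_of_le_of_lt (le_iSup₂ (ENNReal.ofReal ε) (ENNReal.ofReal_pos.2 hε)) h
    simp only [iInf_lt_iff] at h2
    obtain ⟨t, ht, ht', -⟩ := h2
    exact ⟨t, ht, ht'⟩
  choose t ht htd using key
  classical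
  refine ⟨⋃ n, ⋃ i, {y | ∃ h : (t n i).Nonempty, y = h.some}, 
    countable_iUnion fun n => countable_iUnion fun i => Set.Subsingleton.countable ?_, fun x => ?_⟩
  · rintro a ⟨h, rfl⟩ b ⟨h', rfl⟩; rfl
  · obtain ⟨n, hn⟩ := mem_iUnion.1 (hU ▸ mem_univ x : x ∈ ⋃ n, A n)
    obtain ⟨i, hi⟩ := mem_iUnion.1 (ht n hn)
    have hne : (t n i).Nonempty := ⟨x, hi⟩
    refine ⟨hne.some, mem_iUnion.2 ⟨n, mem_iUnion.2 ⟨i, hne, rfl⟩⟩, ?_⟩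
    have := (Metric.edist_le_ediam_of_mem hi hne.some_mem).trans (htd n i)
    rw [edist_dist] at this
    exact (ENNReal.ofReal_le_ofReal_iff hε.le).1 this

lemma exists_nu [MeasurableSpace Z] [BorelSpace Z] {μ : OuterMeasure X} 
    (hX : SigmaFiniteSet μ (Set.univ : Set X)) (f : X → Z)
    (hmeas : ∀ O : Set Z, IsOpen O → μ.IsCaratheodory (f ⁻¹' O)) :
    ∃ ν : Measure Z, IsFiniteMeasure ν ∧ ∀ B, MeasurableSet B → ν B = 0 → μ (f ⁻¹' B) = 0 := by
  let m : MeasurableSpace X := μ.caratheodory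
  let M : Measure X := μ.toMeasure le_rfl
  obtain ⟨A, hA, hU⟩ := hX
  have hS : SigmaFinite M := by
    refine ⟨⟨⟨A, fun n => trivial, fun n => ?_, hU.symm⟩⟩⟩
    rw [toMeasure_apply μ le_rfl (μ.isCaratheodory_iff.1 (hA n).1 |> fun h => (hA n).1)]
    exact (hA n).2
  have hf : Measurable f := by
    have : ‹MeasurableSpace Z› = borel Z := BorelSpace.measurable_eq
    subst this
    exact measurable_generateFrom fun O hO => hmeas O hO
  refine ⟨Measure.map f M.toFinite, inferInstance, fun B hB h => ?_⟩
  rw [Measure.map_apply hf hB] at h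
  have h2 : M (f ⁻¹' B) = 0 := (absolutelyContinuous_toFinite M) h
  rwa [toMeasure_apply μ le_rfl (hf hB)] at h2

lemma cont_singleton {z : ℕ → Z} (hz : DenseRange z) {t : ℝ} (ht : 0 < t) (x : Z) :
    cont (VV z) (GG t) {x} = 0 := by
  obtain ⟨A, hA, hGA⟩ := GG_growth (show t/2 < t by linarith)
  have hl : Tendsto (fun k => A * g0 (t/2) k) atTop (𝓝 (A * 0)) := 
    ENNReal.Tendsto.const_mul (g0_lim (half_pos ht)) (Or.inr hA)
  rw [mul_zero] at hl
  refine le_antisymm (ge_of_tendsto' hl fun k => ?_) zero_le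
  obtain ⟨n, hn⟩ := VV_sub hz k {x} (by
    rintro a rfl b rfl; rw [dist_self]; exact (rho_pos k).le)
  refine le_trans (cont_le (J := {(k, n)}) (by simpa using hn)) ?_
  rw [cost_eq, tsum_singleton]
  exact hGA _

lemma cont_countable {z : ℕ → Z} (hz : DenseRange z) {t : ℝ} (ht : 0 < t) {S : Set Z} (hS : S.Countable) :
    cont (VV z) (GG t) S = 0 := by
  rcases S.eq_empty_or_nonempty with rfl | hne
  · exact cont_empty
  obtain ⟨e, rfl⟩ := hS.exists_eq_range hne
  have : range e = ⋃ n, {e n} := by ext; simp [eq_comm]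
  rw [this]
  refine le_antisymm ((cont_iUnion_le _).trans ?_) zero_le
  simp [cont_singleton hz ht]

lemma hDim_of_cont {z : ℕ → Z} (hz : DenseRange z) {t : ℝ≥0} {E : Set Z}
    (hc : 0 < cont (VV z) (GG t) E) : (t:ℝ≥0∞) ≤ hDim E := by
  refine le_of_forall_lt fun a ha => ?_
  lift a to ℝ≥0 using (ha.trans (by simp)).ne
  obtain ⟨r, har, hrt⟩ := exists_between (ENNReal.coe_lt_coe.1 ha)
  exact (ENNReal.coe_lt_coe.2 har).trans_le (le_hDim (haus_pos hz (lt_of_le_of_lt zero_le har) hrt hc))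

lemma perfectSet_of {C : Set X} (h : Perfect C) : PerfectSet C := by
  refine ⟨h.closed, fun O hO ⟨x, hxO, hxC⟩ => ?_⟩
  have h1 := h.acc x hxC
  intro hfin
  have h2 : AccPt x (𝓟 (O ∩ C)) := by
    have := h1.nhds_inter (hO.mem_nhds hxO)
    exact this
  rw [accPt_iff_clusterPt] at h2
  rw [inf_principal, ← mem_closure_iff_clusterPt] at h2
  have h4 : x ∈ {x}ᶜ ∩ (O ∩ C) := (hfin.inter_of_right _).isClosed.closure_eq ▸ h2
  exact h4.1 rfl

variable [CompleteSpace Z] [TopologicalSpace.SeparableSpace Z]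

theorem main (s t : ℝ≥0) (Y : Set Z) (hYan : MeasureTheory.AnalyticSet Y)
    (hdim : hDim Y = (t : ℝ≥0∞))
    (hX : SigmaFiniteSet (hausdorffM (sGauge s)) (Set.univ : Set X))
    (f : X → Z) (hrange : Set.range f = Y)
    (hmeas : ∀ O : Set Z, IsOpen O → (hausdorffM (sGauge s)).IsCaratheodory (f ⁻¹' O)) :
    (∃ N : Set X, hausdorffM (sGauge s) N = 0 ∧ hDim (f '' N) = (t : ℝ≥0∞)) ∧
    (0 < t → 0 < hausdorffM (sGauge t) Y →
      (∀ F : Set Z, IsClosed F →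
        ∃ C : ℕ → Set X, (∀ n, IsClosed (C n)) ∧ f ⁻¹' F = ⋃ n, C n) →
      ∃ N : Set X, PerfectSet N ∧ hausdorffM (sGauge s) N = 0 ∧
        hDim (f '' N) = (t : ℝ≥0∞)) := by
  let _ : MeasurableSpace Z := borel Z
  have : BorelSpace Z := ⟨rfl⟩
  have : SecondCountableTopology Z := UniformSpace.secondCountable_of_separable Z
  have hle : ∀ N : Set X, hDim (f '' N) ≤ t := fun N => 
    hdim ▸ hDim_mono ((image_subset_range f N).trans hrange.le)
  rcases eq_or_ne t 0 with rfl | ht0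
  · refine ⟨⟨∅, measure_empty, le_antisymm (hle _) ?_⟩, fun h => absurd h (lt_irrefl _)⟩
    simp
  have ht : 0 < t := pos_iff_ne_zero.2 ht0
  have hne : Nonempty Z := by
    by_contra hemp
    have : Y = ∅ := eq_empty_of_forall_notMem fun y _ => hemp ⟨y⟩
    have h := pos_of_lt_hDim (E := Y) (r := 0) (by rw [hdim]; exact_mod_cast ht)
    rw [this, measure_empty] at h
    exact lt_irrefl _ h
  obtain ⟨z, hz⟩ := TopologicalSpace.exists_dense_seq Z
  obtain ⟨ν, hν, hνf⟩ := exists_nu hX f hmeas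
  have step : ∀ r : ℝ≥0, 0 < r → 0 < hausdorffM (sGauge r) Y → ∃ K ⊆ Y, IsCompact K ∧ 
      hausdorffM (sGauge s) (f ⁻¹' K) = 0 ∧ 0 < cont (VV z) (GG r) K := by
    intro r hr h
    have hr' : (0:ℝ) < r := hr
    obtain ⟨K, hKY, hK, hK0, hKc⟩ := mainthm hz ν (g0_D hr') (DD_one hr') (DD_top hr') g0_ne (g0_lim hr') hYan (cont_pos hr h)
    exact ⟨K, hKY, hK, hνf K hK.isClosed.measurableSet hK0, hKc⟩
  constructor
  · obtain ⟨r, -, hr, hrl⟩ := exists_seq_strictMono_tendsto' ht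
    have hrY : ∀ n, 0 < hausdorffM (sGauge (r n)) Y := fun n => 
      pos_of_lt_hDim (by rw [hdim]; exact_mod_cast (hr n).2)
    choose K hKY hK hK0 hKc using fun n => step (r n) (hr n).1 (hrY n)
    refine ⟨⋃ n, f ⁻¹' (K n), measure_iUnion_null hK0, le_antisymm (hle _) ?_⟩
    refine le_of_tendsto' (ENNReal.tendsto_coe.2 hrl) fun n => ?_
    refine (hDim_of_cont hz (hKc n)).trans (hDim_mono ?_)
    rw [image_iUnion]
    refine subset_iUnion_of_subset n ?_
    rw [image_preimage_eq_of_subset (hrange ▸ hKY n)]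
  · intro _ hpos hF
    have hX2 := secondCountable hX
    obtain ⟨K, hKY, hK, hK0, hKc⟩ := step t ht hpos
    obtain ⟨C, hC, hCK⟩ := hF K hK.isClosed
    have hex : ∃ n, cont (VV z) (GG t) (f '' (C n)) ≠ 0 := by
      by_contra! hall
      have h1 : K = ⋃ n, f '' (C n) := by
        rw [← image_iUnion, ← hCK, image_preimage_eq_of_subset (hrange ▸ hKY)]
      rw [h1] at hKc
      refine absurd (hKc.trans_le (cont_iUnion_le _)) ?_
      simp [hall]
    obtain ⟨n, hn⟩ := hex
    obtain ⟨V, D, hV, hD, hVD⟩ := exists_countable_union_perfect_of_isClosed (hC n)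
    refine ⟨D, perfectSet_of hD, ?_, le_antisymm (hle _) (hDim_of_cont hz (pos_iff_ne_zero.2 fun h0 => hn ?_))⟩
    · refine measure_mono_null ?_ hK0
      rw [hCK]
      exact subset_iUnion_of_subset n (hVD ▸ subset_union_right)
    · rw [hVD, image_union]
      refine le_antisymm (cont_union_le.trans ?_) zero_le
      rw [h0, cont_countable hz (by exact_mod_cast ht) (hV.image f)]; simp

end fin
end S8

/-- Corollary `DimensionBusiness`. -/
theorem statement_8 {X : Type*} [MetricSpace X] {Z : Type*} [MetricSpace Z]
    [CompleteSpace Z] [TopologicalSpace.SeparableSpace Z]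
    (s t : ℝ≥0) (Y : Set Z) (hYan : MeasureTheory.AnalyticSet Y)
    (hdim : hDim Y = (t : ℝ≥0∞))
    (hX : SigmaFiniteSet (hausdorffM (sGauge s)) (Set.univ : Set X))
    (f : X → Z) (hrange : Set.range f = Y)
    (hmeas : ∀ O : Set Z, IsOpen O → (hausdorffM (sGauge s)).IsCaratheodory (f ⁻¹' O)) :
    (∃ N : Set X, hausdorffM (sGauge s) N = 0 ∧ hDim (f '' N) = (t : ℝ≥0∞)) ∧
    (0 < t → 0 < hausdorffM (sGauge t) Y →
      (∀ F : Set Z, IsClosed F →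
        ∃ C : ℕ → Set X, (∀ n, IsClosed (C n)) ∧ f ⁻¹' F = ⋃ n, C n) →
      ∃ N : Set X, PerfectSet N ∧ hausdorffM (sGauge s) N = 0 ∧
        hDim (f '' N) = (t : ℝ≥0∞)) := by
  exact S8.main s t Y hYan hdim hX f hrange hmeas
end

section
/- Let (X, 𝔗) be a regular, second countable topological space and μ a Borel measure on X that is G_δ-regular, such that X is σ-finite with respect to μ and X can be written as a countable union of compact sets together with a μ-null set. Let (Y, d) be a metric space with Hausdorff measure H^h, where h is a Hausdorff function of finite order with h(0) = 0, and assume that Y is not σ-finite with respect to H^h. If f : X → Y is a measurable surjection, then there exists a set N ⊆ X with μ(N) = 0 and H^h(f(N)) > 0. -/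
open MeasureTheory Set Filter Topology
open scoped NNReal ENNReal

universe u v

lemma aux_halving {Y : Type*} [MetricSpace Y] [MeasurableSpace Y] [BorelSpace Y]
    (ν l : Measure Y) [IsFiniteMeasure ν] [IsFiniteMeasure l] (A : Set Y) (hA : MeasurableSet A)
    (hsmall : ∀ ε : ℝ≥0∞, 0 < ε → ∃ B : ℕ → Set Y,
      (∀ i, MeasurableSet (B i) ∧ l (B i) ≤ ε) ∧ A ⊆ ⋃ i, B i) :
    ∃ F, F ⊆ A ∧ IsClosed F ∧ l A ≤ 4 * l F ∧ ν F ≤ ν A / 2 := by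
  by_cases h0 : l A = 0
  · exact ⟨∅, empty_subset _, isClosed_empty, by simp [h0], by simp⟩
  set a := l A with ha
  have hafin : a ≠ ⊤ := measure_ne_top l A
  have ha4 : 0 < a / 4 := ENNReal.div_pos h0 (by simp)
  obtain ⟨B, hB, hAB⟩ := hsmall (a/4) ha4
  let S : ℕ → Set Y := fun n => A ∩ ⋃ i ∈ Finset.range n, B i
  have hSm : ∀ n, MeasurableSet (S n) := fun n =>
    hA.inter (Finset.measurableSet_biUnion _ fun i _ => (hB i).1)
  have hmono : Monotone S := by
    intro m n hmn x hx
    refine ⟨hx.1, ?_⟩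
    have := hx.2
    simp only [mem_iUnion, Finset.mem_range] at this ⊢
    obtain ⟨i, hi, hxi⟩ := this
    exact ⟨i, lt_of_lt_of_le hi hmn, hxi⟩
  have hU : ⋃ n, S n = A := by
    apply Subset.antisymm
    · exact iUnion_subset fun n => inter_subset_left
    · intro x hx
      obtain ⟨i, hi⟩ := mem_iUnion.1 (hAB hx)
      refine mem_iUnion.2 ⟨i+1, hx, ?_⟩
      simp only [mem_iUnion, Finset.mem_range]
      exact ⟨i, Nat.lt_succ_self i, hi⟩
  have hlt4 : a / 4 < a := by
    rw [ENNReal.div_lt_iff (by simp) (by simp)]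
    calc a = a * 1 := (mul_one a).symm
      _ < a * 4 := ENNReal.mul_lt_mul_right h0 hafin (by norm_num)
  have hex : ∃ n, a / 4 < l (S n) := by
    have ht := tendsto_measure_iUnion_atTop (μ := l) hmono
    rw [hU] at ht
    exact (ht.eventually (lt_mem_nhds hlt4)).exists
  classical
  let n := Nat.find hex
  have hn : a / 4 < l (S n) := Nat.find_spec hex
  have hn2 : l (S n) ≤ a / 4 + a / 4 := by
    rcases Nat.eq_zero_or_pos n with h | h
    · rw [h]; simp [S]
    · obtain ⟨k, hk⟩ : ∃ k, n = k + 1 := ⟨n - 1, by omega⟩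
      have hk2 : l (S k) ≤ a / 4 := not_lt.1 (Nat.find_min hex (by omega : k < n))
      have : S n ⊆ S k ∪ B k := by
        rw [hk]
        intro x hx
        have h2 := hx.2
        simp only [mem_iUnion, Finset.mem_range] at h2
        obtain ⟨i, hi, hxi⟩ := h2
        rcases Nat.lt_succ_iff_lt_or_eq.1 hi with h' | h'
        · left
          refine ⟨hx.1, ?_⟩
          simp only [mem_iUnion, Finset.mem_range]
          exact ⟨i, h', hxi⟩
        · right; rw [← h']; exact hxi
      calc l (S n) ≤ l (S k ∪ B k) := measure_mono this
        _ ≤ l (S k) + l (B k) := measure_union_le _ _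
        _ ≤ _ := add_le_add hk2 (hB k).2
  have h44 : a / 4 + a / 4 = a / 2 := by
    rw [← ENNReal.add_div, ← two_mul, mul_comm, show (4:ℝ≥0∞) = 2 * 2 by norm_num]
    rw [ENNReal.mul_div_mul_right _ _ (by simp) (by simp)]
  have hcompl : a / 4 < l (A \ S n) := by
    have h1 : a ≤ l (S n) + l (A \ S n) := by
      calc a = l (S n ∪ (A \ S n)) := by
            rw [union_sdiff_cancel (inter_subset_left : S n ⊆ A)]
        _ ≤ _ := measure_union_le _ _
    by_contra hcon
    push Not at hcon
    have : a ≤ a / 4 + a / 4 + a / 4 := h1.trans (add_le_add hn2 hcon)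
    have h3 : a / 4 + a / 4 + a / 4 < a / 4 + a / 4 + a / 4 + a / 4 :=
      ENNReal.lt_add_right (by
        have : a / 4 ≠ ⊤ := (hlt4.trans_le le_top).ne
        simp [this]) ha4.ne'
    have h5 : a / 4 + a / 4 + a / 4 + a / 4 = a := by
      rw [add_assoc, h44, ENNReal.add_halves]
    rw [h5] at h3
    exact absurd this (not_le.2 h3)
  have hsum : ν (S n) + ν (A \ S n) = ν A := by
    have := measure_inter_add_sdiff (μ := ν) A (hSm n)
    rwa [inter_eq_right.2 (inter_subset_left : S n ⊆ A)] at this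
  have key : ∃ D, D ⊆ A ∧ MeasurableSet D ∧ a / 4 < l D ∧ ν D ≤ ν A / 2 := by
    rcases le_total (ν (S n)) (ν (A \ S n)) with h | h
    · refine ⟨S n, inter_subset_left, hSm n, hn, ?_⟩
      rw [ENNReal.le_div_iff_mul_le (by simp) (by simp), ← hsum, mul_two]
      gcongr
    · refine ⟨A \ S n, sdiff_subset, hA.diff (hSm n), hcompl, ?_⟩
      rw [ENNReal.le_div_iff_mul_le (by simp) (by simp), ← hsum, mul_two]
      gcongr
  obtain ⟨D, hDA, hDm, hD4, hDν⟩ := key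
  obtain ⟨F, hFD, hFc, hF⟩ := hDm.exists_lt_isClosed_of_ne_top (measure_ne_top l D) hD4
  refine ⟨F, hFD.trans hDA, hFc, ?_, (measure_mono hFD).trans hDν⟩
  rw [mul_comm]
  exact (ENNReal.div_le_iff (by simp) (by simp)).1 hF.le

lemma aux_step {Y : Type*} [MetricSpace Y] [MeasurableSpace Y] [BorelSpace Y]
    (ν l : Measure Y) [IsFiniteMeasure ν] [IsFiniteMeasure l] (E : Set Y) (hE : IsCompact E)
    (hlE : l Eᶜ = 0)
    (hsmall : ∀ ε : ℝ≥0∞, 0 < ε → ∃ B : ℕ → Set Y,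
      (∀ i, MeasurableSet (B i) ∧ l (B i) ≤ ε) ∧ E ⊆ ⋃ i, B i) (r : ℝ) (hr : 0 < r) :
    ∃ (l' : Measure Y) (E' : Set Y), IsFiniteMeasure l' ∧ IsCompact E' ∧ E' ⊆ E ∧ l' E'ᶜ = 0 ∧
      ν E' ≤ ν E / 2 ∧ (∀ A, MeasurableSet A → l' A ≤ 4 * l A) ∧ l univ ≤ l' univ ∧
      ∀ x s, l' (Metric.ball x s) ≤ l (Metric.ball x (s + r)) := by
  -- finite cover
  obtain ⟨t, htE, htf, hcov⟩ := hE.finite_cover_balls (half_pos hr)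
  obtain ⟨n, e, he⟩ : ∃ (n : ℕ) (e : Fin n → Y), range e = t := by
    obtain ⟨n, e, h⟩ := htf.fin_embedding
    exact ⟨n, e, h⟩
  let B : ℕ → Set Y := fun i => if h : i < n then Metric.ball (e ⟨i, h⟩) (r/2) else ∅
  have hBm : ∀ i, MeasurableSet (B i) := by
    intro i
    by_cases h : i < n
    · simp only [B, h, dif_pos]; exact Metric.isOpen_ball.measurableSet
    · simp only [B, h]; exact MeasurableSet.empty
  have hBr : ∀ i, ∀ x ∈ B i, ∀ y ∈ B i, dist x y < r := by
    intro i x hx y hy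
    by_cases h : i < n
    · simp only [B, h, dif_pos, Metric.mem_ball] at hx hy
      have := dist_triangle_right x y (e ⟨i, h⟩)
      linarith
    · simp [B, h] at hx
  let P := disjointed B
  have hPm : ∀ i, MeasurableSet (P i) := fun i => MeasurableSet.disjointed hBm i
  have hPd : Pairwise (Function.onFun Disjoint P) := disjoint_disjointed B
  have hPU : E ⊆ ⋃ i ∈ Finset.range n, P i := by
    intro x hx
    have h1 : x ∈ ⋃ i, P i := by
      rw [iUnion_disjointed]
      have := hcov hx
      simp only [mem_iUnion] at this
      obtain ⟨y, hy, hxy⟩ := this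
      rw [← he] at hy
      obtain ⟨i, rfl⟩ := hy
      refine mem_iUnion.2 ⟨i, ?_⟩
      simp only [B, i.2, dif_pos]; exact hxy
    obtain ⟨i, hi⟩ := mem_iUnion.1 h1
    have hiB := disjointed_subset B i hi
    have hin : i < n := by
      by_contra h
      simp [B, h] at hiB
    simp only [mem_iUnion, Finset.mem_range]
    exact ⟨i, hin, hi⟩
  let A : ℕ → Set Y := fun i => P i ∩ E
  have hAm : ∀ i, MeasurableSet (A i) := fun i => (hPm i).inter hE.isClosed.measurableSet
  have hAd : Pairwise (Function.onFun Disjoint A) := fun i j hij =>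
    (hPd hij).mono inter_subset_left inter_subset_left
  have hAU : ⋃ i ∈ Finset.range n, A i = E := by
    apply Subset.antisymm
    · exact iUnion₂_subset fun i _ => inter_subset_right
    · intro x hx
      have := hPU hx
      simp only [mem_iUnion] at this ⊢
      obtain ⟨i, hi, hxi⟩ := this
      exact ⟨i, hi, hxi, hx⟩
  have hAr : ∀ i, ∀ x ∈ A i, ∀ y ∈ A i, dist x y < r := fun i x hx y hy =>
    hBr i x (disjointed_subset B i hx.1) y (disjointed_subset B i hy.1)
  have hF : ∀ i, ∃ F, F ⊆ A i ∧ IsClosed F ∧ l (A i) ≤ 4 * l F ∧ ν F ≤ ν (A i) / 2 := by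
    intro i
    apply aux_halving ν l (A i) (hAm i)
    intro ε hε
    obtain ⟨B', h1, h2⟩ := hsmall ε hε
    exact ⟨B', h1, inter_subset_right.trans h2⟩
  choose F hFA hFc hF4 hFν using hF
  have hFd : Pairwise (Function.onFun Disjoint F) := fun i j hij => (hAd hij).mono (hFA i) (hFA j)
  have hrat : ∀ i, l (A i) / l (F i) ≤ 4 := fun i => ENNReal.div_le_of_le_mul (hF4 i)
  have hratmul : ∀ i, l (A i) / l (F i) * l (F i) = l (A i) := by
    intro i
    by_cases h : l (F i) = 0
    · have : l (A i) = 0 := by simpa [h] using hF4 i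
      simp [this]
    · exact ENNReal.div_mul_cancel h (measure_ne_top _ _)
  let l' : Measure Y := ∑ i ∈ Finset.range n, (l (A i) / l (F i)) • l.restrict (F i)
  have hl' : ∀ s, MeasurableSet s →
      l' s = ∑ i ∈ Finset.range n, (l (A i) / l (F i)) * l (s ∩ F i) := by
    intro s hs
    simp only [l', Measure.finsetSum_apply, Measure.smul_apply, smul_eq_mul,
      Measure.restrict_apply hs]
  have hle : ∀ s, MeasurableSet s → l' s ≤ 4 * l s := by
    intro s hs
    rw [hl' s hs]
    calc _ ≤ ∑ i ∈ Finset.range n, 4 * l (s ∩ F i) :=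
          Finset.sum_le_sum fun i _ => by gcongr; exact hrat i
      _ = 4 * ∑ i ∈ Finset.range n, l (s ∩ F i) := by rw [Finset.mul_sum]
      _ = 4 * l (⋃ i ∈ Finset.range n, s ∩ F i) := by
          rw [measure_biUnion_finset]
          · intro i _ j _ hij
            exact (hFd hij).mono inter_subset_right inter_subset_right
          · exact fun i _ => hs.inter (hFc i).measurableSet
      _ ≤ 4 * l s := by
          gcongr
          exact iUnion₂_subset fun i _ => inter_subset_left
  let E' : Set Y := ⋃ i ∈ Finset.range n, F i
  have hE'c : IsClosed E' := by
    apply isClosed_biUnion_finset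
    exact fun i _ => hFc i
  have hE'E : E' ⊆ E := iUnion₂_subset fun i _ => (hFA i).trans inter_subset_right
  refine ⟨l', E', ⟨?_⟩, hE.of_isClosed_subset hE'c hE'E, hE'E, ?_, ?_, hle, ?_, ?_⟩
  · exact (hle univ MeasurableSet.univ).trans_lt
      (ENNReal.mul_lt_top (by simp) (measure_lt_top _ _))
  · rw [hl' _ hE'c.measurableSet.compl]
    apply Finset.sum_eq_zero
    intro i hi
    have : E'ᶜ ∩ F i = ∅ := by
      rw [← disjoint_iff_inter_eq_empty, disjoint_compl_left_iff_subset]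
      exact subset_biUnion_of_mem (u := F) (show i ∈ (Finset.range n : Set ℕ) from hi)
    simp [this]
  · calc ν E' ≤ ∑ i ∈ Finset.range n, ν (F i) := measure_biUnion_finset_le _ _
      _ ≤ ∑ i ∈ Finset.range n, ν (A i) / 2 := Finset.sum_le_sum fun i _ => hFν i
      _ = (∑ i ∈ Finset.range n, ν (A i)) / 2 := by
          simp only [div_eq_mul_inv, Finset.sum_mul]
      _ = ν E / 2 := by
          rw [← measure_biUnion_finset (fun i _ j _ hij => hAd hij) (fun i _ => hAm i), hAU]
  · rw [hl' _ MeasurableSet.univ]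
    simp only [univ_inter, hratmul]
    rw [← measure_biUnion_finset (fun i _ j _ hij => hAd hij) (fun i _ => hAm i), hAU]
    calc l univ ≤ l (E ∪ Eᶜ) := by rw [union_compl_self]
      _ ≤ l E + l Eᶜ := measure_union_le _ _
      _ = l E := by rw [hlE, add_zero]
  · intro x s
    rw [hl' _ Metric.isOpen_ball.measurableSet]
    calc _ ≤ ∑ i ∈ Finset.range n, l (A i ∩ Metric.ball x (s + r)) := by
          apply Finset.sum_le_sum
          intro i _
          by_cases hne : (Metric.ball x s ∩ F i).Nonempty
          · obtain ⟨y, hy, hyF⟩ := hne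
            have : A i ⊆ Metric.ball x (s + r) := by
              intro z hz
              have h1 := hAr i z hz y (hFA i hyF)
              rw [Metric.mem_ball] at hy ⊢
              have := dist_triangle z y x
              linarith
            rw [inter_eq_left.2 this]
            calc _ ≤ l (A i) / l (F i) * l (F i) := by gcongr; exact inter_subset_right
              _ = _ := hratmul i
          · rw [not_nonempty_iff_eq_empty.1 hne]; simp
      _ = l (⋃ i ∈ Finset.range n, A i ∩ Metric.ball x (s + r)) := by
          rw [measure_biUnion_finset]
          · intro i _ j _ hij
            exact (hAd hij).mono inter_subset_left inter_subset_left
          · exact fun i _ => (hAm i).inter Metric.isOpen_ball.measurableSet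
      _ ≤ _ := measure_mono (iUnion₂_subset fun i _ => inter_subset_right)

lemma aux_cover {Y : Type*} [MetricSpace Y] (h : ℝ≥0 → ℝ≥0∞) (E : Set Y)
    {c : ℝ≥0∞} (hE : hausdorffM h E < c) (r : ℝ≥0∞) (hr : 0 < r) :
    ∃ t : ℕ → Set Y, E ⊆ ⋃ n, t n ∧ (∀ n, Metric.ediam (t n) ≤ r) ∧
      ∑' n, (⨆ _ : (t n).Nonempty, h (Metric.ediam (t n)).toNNReal) < c := by
  borelize Y
  unfold hausdorffM at hE
  rw [OuterMeasure.coe_mkMetric, Measure.mkMetric_apply] at hE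
  have h1 := lt_of_le_of_lt (le_iSup₂ (f := fun (r : ℝ≥0∞) (_ : 0 < r) =>
        ⨅ (t : ℕ → Set Y) (_ : E ⊆ iUnion t) (_ : ∀ n, Metric.ediam (t n) ≤ r),
          ∑' n, ⨆ _ : (t n).Nonempty, h (Metric.ediam (t n)).toNNReal) r hr) hE
  simp only [iInf_lt_iff] at h1
  obtain ⟨t, h2, h3, h4⟩ := h1
  exact ⟨t, h2, h3, h4⟩

lemma aux_radius (h : ℝ≥0 → ℝ≥0∞) (hh : IsHausdorffFunction h) (d R : ℝ≥0) (hd : d < R)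
    (hfin : h d ≠ ⊤) (ε : ℝ≥0∞) (hε : 0 < ε) : ∃ ρ, d < ρ ∧ ρ < R ∧ h ρ ≤ h d + ε := by
  have h1 : ∀ᶠ s in 𝓝[>] d, h s < h d + ε :=
    (((hh.right_continuous d).mono Ioi_subset_Ici_self).tendsto).eventually
      (gt_mem_nhds (ENNReal.lt_add_right hfin hε.ne'))
  have h2 : ∀ᶠ s in 𝓝[>] d, s ∈ Ioo d R := Ioo_mem_nhdsGT hd
  have : (𝓝[>] d).NeBot := nhdsGT_neBot_of_exists_gt ⟨R, hd⟩
  obtain ⟨ρ, hρ1, hρ2⟩ := (h1.and h2).exists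
  exact ⟨ρ, hρ2.1, hρ2.2, hρ1.le⟩

lemma aux_singular {Y : Type*} [MetricSpace Y] [MeasurableSpace Y] [BorelSpace Y]
    (ν : Measure Y) [IsFiniteMeasure ν] (Z : Set Y) (hZ : IsCompact Z) (hνZ : ν Zᶜ = 0)
    (hν : ν univ ≠ 0) (h : ℝ≥0 → ℝ≥0∞) (hh : IsHausdorffFunction h) (h0 : h 0 = 0)
    (C ρ₀ : ℝ≥0) (hρ₀ : 0 < ρ₀) (hC : ∀ t, 0 < t → t ≤ ρ₀ → h (3 * t) ≤ C * h t)
    (hgood : ∀ M : ℝ≥0, ∃ ρ : ℝ≥0, 0 < ρ ∧ ∀ x ∈ Z, ∀ s : ℝ≥0, 0 < s → s ≤ ρ →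
      M * ν (Metric.ball x s) ≤ h s) :
    ∃ E, E ⊆ Z ∧ IsCompact E ∧ ν E = 0 ∧ 0 < hausdorffM h E := by
  -- small covers
  have hsmall : ∀ ε : ℝ≥0∞, 0 < ε → ∃ B : ℕ → Set Y,
      (∀ i, MeasurableSet (B i) ∧ ν (B i) ≤ ε) ∧ Z ⊆ ⋃ i, B i := by
    intro ε hε
    obtain ⟨ρ, hρ, hg⟩ := hgood 1
    obtain ⟨s, hs0, hsρ, hs⟩ := aux_radius h hh 0 ρ hρ (by simp [h0]) ε hε
    rw [h0, zero_add] at hs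
    obtain ⟨t, htZ, htf, hcov⟩ := hZ.finite_cover_balls (show (0:ℝ) < s from hs0)
    have htc := htf.countable
    rcases t.eq_empty_or_nonempty with rfl | hne
    · refine ⟨fun _ => ∅, fun i => ⟨MeasurableSet.empty, by simp⟩, ?_⟩
      simpa using hcov
    · obtain ⟨e, he⟩ := htc.exists_eq_range hne
      refine ⟨fun i => Metric.ball (e i) s, fun i => ⟨Metric.isOpen_ball.measurableSet, ?_⟩, ?_⟩
      · have := hg (e i) (htZ (he ▸ mem_range_self i)) s hs0 hsρ.le
        simp only [ENNReal.coe_one, one_mul] at this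
        exact this.trans hs
      · rw [he] at hcov
        simpa using hcov
  -- scales
  choose ρ hρ hg using fun k : ℕ => hgood (4 ^ (k + 1))
  obtain ⟨δ, hδz, hδs⟩ : ∃ δ : ℕ → ℝ≥0, δ 0 = ρ 0 / 3 ∧
      ∀ k, δ (k + 1) = min (ρ (k+1) / 3) (δ k / 2) :=
    ⟨fun k => Nat.rec (ρ 0 / 3) (fun k d => min (ρ (k+1) / 3) (d / 2)) k, rfl, fun k => rfl⟩
  have hδ0 : ∀ k, 0 < δ k := by
    intro k
    induction k with
    | zero => rw [hδz]; exact div_pos (hρ 0) (by norm_num)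
    | succ k ih =>
      rw [hδs]
      exact lt_min (div_pos (hρ _) (by norm_num)) (div_pos ih (by norm_num))
  have hδ3 : ∀ k, 3 * δ k ≤ ρ k := by
    intro k
    have : δ k ≤ ρ k / 3 := by
      cases k with
      | zero => exact hδz.le
      | succ k => rw [hδs]; exact min_le_left _ _
    rw [le_div_iff₀ (by norm_num)] at this
    rwa [mul_comm]
  have hδh : ∀ k, δ (k+1) ≤ δ k / 2 := fun k => by rw [hδs]; exact min_le_right _ _
  have hδlim : ∀ s : ℝ≥0, 0 < s → ∃ k, δ k ≤ s := by
    intro s hs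
    have hb : ∀ k, δ k ≤ δ 0 * (1/2) ^ k := by
      intro k
      induction k with
      | zero => simp
      | succ k ih =>
        calc δ (k+1) ≤ δ k / 2 := hδh k
          _ ≤ (δ 0 * (1/2)^k) / 2 := by gcongr
          _ = _ := by rw [pow_succ]; ring
    have ht : Tendsto (fun k : ℕ => δ 0 * (1/2 : ℝ≥0) ^ k) atTop (𝓝 (δ 0 * 0)) :=
      Tendsto.const_mul _ (NNReal.tendsto_pow_atTop_nhds_zero_of_lt_one
        (by rw [one_div]; exact inv_lt_one_of_one_lt₀ one_lt_two))
    rw [mul_zero] at ht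
    obtain ⟨k, hk⟩ := (ht.eventually (gt_mem_nhds hs)).exists
    exact ⟨k, (hb k).trans hk.le⟩
  -- recursion
  let State := {p : Measure Y × Set Y // IsFiniteMeasure p.1 ∧ IsCompact p.2 ∧ p.2 ⊆ Z ∧
    p.1 p.2ᶜ = 0 ∧ ∀ ε : ℝ≥0∞, 0 < ε → ∃ B : ℕ → Set Y,
      (∀ i, MeasurableSet (B i) ∧ p.1 (B i) ≤ ε) ∧ Z ⊆ ⋃ i, B i}
  have hstep : ∀ (p : State) (k : ℕ), ∃ q : State, q.1.2 ⊆ p.1.2 ∧ ν q.1.2 ≤ ν p.1.2 / 2 ∧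
      (∀ A, MeasurableSet A → q.1.1 A ≤ 4 * p.1.1 A) ∧ p.1.1 univ ≤ q.1.1 univ ∧
      ∀ (x : Y) (s : ℝ), q.1.1 (Metric.ball x s) ≤ p.1.1 (Metric.ball x (s + NNReal.toReal (δ k))) := by
    rintro ⟨⟨l, E⟩, hl, hE, hEZ, hlE, hsm⟩ k
    have hl' : IsFiniteMeasure l := hl
    obtain ⟨l', E', a1, a2, a3, a4, a5, a6, a7, a8⟩ := aux_step ν l E hE hlE
      (fun ε hε => by
        obtain ⟨B, b1, b2⟩ := hsm ε hε
        exact ⟨B, b1, hEZ.trans b2⟩) (δ k) (hδ0 k)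
    refine ⟨⟨⟨l', E'⟩, a1, a2, a3.trans hEZ, a4, ?_⟩, a3, a5, a6, a7, a8⟩
    intro ε hε
    obtain ⟨B, b1, b2⟩ := hsm (ε / 4) (ENNReal.div_pos hε.ne' (by simp))
    refine ⟨B, fun i => ⟨(b1 i).1, (a6 _ (b1 i).1).trans ?_⟩, b2⟩
    calc 4 * l (B i) ≤ 4 * (ε / 4) := by gcongr; exact (b1 i).2
      _ = ε := ENNReal.mul_div_cancel (by simp) (by simp)
  choose nxt n1 n2 n3 n4 n5 using hstep
  let p0 : State := ⟨⟨ν, Z⟩, inferInstance, hZ, Subset.rfl, hνZ, hsmall⟩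
  let p : ℕ → State := fun k => Nat.rec p0 (fun k q => nxt q k) k
  let l : ℕ → Measure Y := fun k => (p k).1.1
  let E : ℕ → Set Y := fun k => (p k).1.2
  have q1 : ∀ k, E (k+1) ⊆ E k := fun k => n1 (p k) k
  have q2 : ∀ k, ν (E (k+1)) ≤ ν (E k) / 2 := fun k => n2 (p k) k
  have q3 : ∀ k, ∀ A, MeasurableSet A → l (k+1) A ≤ 4 * l k A := fun k => n3 (p k) k
  have q4 : ∀ k, l k univ ≤ l (k+1) univ := fun k => n4 (p k) k
  have q5 : ∀ k, ∀ x s, l (k+1) (Metric.ball x s) ≤ l k (Metric.ball x (s + δ k)) :=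
    fun k => n5 (p k) k
  have hEc : ∀ k, IsCompact (E k) := fun k => (p k).2.2.1
  have hEZ : ∀ k, E k ⊆ Z := fun k => (p k).2.2.2.1
  have hlE : ∀ k, l k (E k)ᶜ = 0 := fun k => (p k).2.2.2.2.1
  have hEanti : Antitone E := antitone_nat_of_succ_le q1
  have hlν : ∀ k, ∀ A, MeasurableSet A → l k A ≤ 4 ^ k * ν A := by
    intro k A hA
    induction k with
    | zero => simp only [pow_zero, one_mul]; exact le_rfl
    | succ k ih =>
      calc l (k+1) A ≤ 4 * l k A := q3 k A hA
        _ ≤ 4 * (4 ^ k * ν A) := by gcongr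
        _ = _ := by rw [pow_succ]; ring
  have hmass : ∀ k, ν univ ≤ l k univ := by
    intro k
    induction k with
    | zero => exact le_rfl
    | succ k ih => exact ih.trans (q4 k)
  have hmassE : ∀ k, ν univ ≤ l k (E k) := by
    intro k
    calc ν univ ≤ l k univ := hmass k
      _ = l k (E k ∪ (E k)ᶜ) := by rw [union_compl_self]
      _ ≤ l k (E k) + l k (E k)ᶜ := measure_union_le _ _
      _ = _ := by rw [hlE, add_zero]
  have htel : ∀ k j x (s : ℝ), l (k+j) (Metric.ball x s) ≤
      l k (Metric.ball x (s + 2 * δ k - 2 * δ (k + j))) := by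
    intro k j x
    induction j with
    | zero => intro s; simp
    | succ j ih =>
      intro s
      refine (q5 (k+j) x s).trans ((ih _).trans (measure_mono (Metric.ball_subset_ball ?_)))
      have h1 : (δ (k + j + 1) : ℝ) ≤ δ (k + j) / 2 := by exact_mod_cast hδh (k+j)
      rw [← add_assoc]
      linarith
  -- ball estimate
  have hball : ∀ x ∈ Z, ∀ s : ℝ≥0, 0 < s → s < δ 0 → s ≤ ρ₀ →
      ∃ N, ∀ m, N ≤ m → l m (Metric.ball x s) ≤ C * h s := by
    intro x hx s hs hs0 hsρ
    classical
    let k := Nat.find (hδlim s hs)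
    have hk : δ k ≤ s := Nat.find_spec (hδlim s hs)
    have hk0 : k ≠ 0 := by
      intro h
      rw [h] at hk
      exact absurd hs0 (not_lt.2 hk)
    obtain ⟨j, hj⟩ := Nat.exists_eq_succ_of_ne_zero hk0
    have hj2 : s < δ j := not_le.1 (Nat.find_min (hδlim s hs) (by omega : j < k))
    refine ⟨k, fun m hm => ?_⟩
    obtain ⟨i, rfl⟩ := Nat.exists_eq_add_of_le hm
    calc l (k+i) (Metric.ball x s) ≤ l k (Metric.ball x (s + 2 * δ k - 2 * δ (k + i))) :=
          htel k i x s
      _ ≤ l k (Metric.ball x ((3 * s : ℝ≥0) : ℝ)) := by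
          apply measure_mono (Metric.ball_subset_ball _)
          have h1 : (δ k : ℝ) ≤ s := by exact_mod_cast hk
          have h2 : (0:ℝ) ≤ δ (k+i) := (δ (k+i)).2
          push_cast
          linarith
      _ ≤ 4 ^ k * ν (Metric.ball x ((3 * s : ℝ≥0) : ℝ)) :=
          hlν k _ Metric.isOpen_ball.measurableSet
      _ ≤ h (3 * s) := by
          have := hg j x hx (3 * s) (by positivity)
            (le_trans (by gcongr) (hδ3 j))
          rw [hj]
          push_cast at this ⊢
          exact this
      _ ≤ C * h s := hC s hs hsρ
  refine ⟨⋂ k, E k, (iInter_subset E 0).trans (hEZ 0),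
    (hEc 0).of_isClosed_subset (isClosed_iInter fun k => (hEc k).isClosed) (iInter_subset E 0),
    ?_, ?_⟩
  · have hb : ∀ k, ν (E k) ≤ ν univ * (1/2) ^ k := by
      intro k
      induction k with
      | zero => simpa using measure_mono (subset_univ _)
      | succ k ih =>
        calc ν (E (k+1)) ≤ ν (E k) / 2 := q2 k
          _ ≤ (ν univ * (1/2)^k) / 2 := by gcongr
          _ = _ := by rw [pow_succ, div_eq_mul_inv, mul_assoc, one_div]
    have ht : Tendsto (fun k : ℕ => ν univ * (1/2 : ℝ≥0∞) ^ k) atTop (𝓝 (ν univ * 0)) :=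
      ENNReal.Tendsto.const_mul
        (ENNReal.tendsto_pow_atTop_nhds_zero_of_lt_one (by simp))
        (Or.inr (measure_ne_top _ _))
    rw [mul_zero] at ht
    refine le_antisymm (ge_of_tendsto' ht fun k => ?_) zero_le
    exact (measure_mono (iInter_subset E k)).trans (hb k)
  · by_contra hcon
    have hz : hausdorffM h (⋂ k, E k) = 0 := by simpa using hcon
    obtain ⟨ε, hε, hεη⟩ := ENNReal.exists_nnreal_pos_mul_lt (a := (C:ℝ≥0∞) + C) (b := ν univ)
      (by simp) hν
    have hε' : (0:ℝ≥0∞) < ε := by exact_mod_cast hε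
    let R : ℝ≥0 := min (δ 0) ρ₀
    have hR : 0 < R := lt_min (hδ0 0) hρ₀
    obtain ⟨t, ht1, ht2, ht3⟩ := aux_cover h (⋂ k, E k) (c := ε) (by rw [hz]; exact hε')
      ((R / 2 : ℝ≥0) : ℝ≥0∞) (by exact_mod_cast half_pos hR)
    obtain ⟨e, he, hesum⟩ := ENNReal.exists_pos_sum_of_countable' hε'.ne' ℕ
    set a : ℕ → ℝ≥0∞ := fun n => ⨆ _ : (t n).Nonempty, h (Metric.ediam (t n)).toNNReal with ha
    have hV : ∀ i, ∃ V : Set Y, IsOpen V ∧ t i ∩ (⋂ k, E k) ⊆ V ∧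
        ∃ N, ∀ m, N ≤ m → l m V ≤ C * (a i + e i) := by
      intro i
      by_cases hne : (t i ∩ (⋂ k, E k)).Nonempty
      · obtain ⟨x, hxt, hxE⟩ := hne
        have hai : a i = h (Metric.ediam (t i)).toNNReal := by
          simp only [ha]
          exact ciSup_pos ⟨x, hxt⟩
        have hfin : a i ≠ ⊤ :=
          ((ENNReal.le_tsum i).trans_lt (ht3.trans_le le_top)).ne
        have hdtop : Metric.ediam (t i) ≠ ⊤ := ((ht2 i).trans_lt ENNReal.coe_lt_top).ne
        have hdR : (Metric.ediam (t i)).toNNReal < R := by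
          have := ENNReal.toNNReal_mono ENNReal.coe_ne_top (ht2 i)
          rw [ENNReal.toNNReal_coe] at this
          exact this.trans_lt (half_lt_self hR)
        obtain ⟨s, hs1, hs2, hs3⟩ := aux_radius h hh _ R hdR (hai ▸ hfin) (e i) (he i)
        have hs0 : 0 < s := lt_of_le_of_lt zero_le hs1
        obtain ⟨N, hN⟩ := hball x (hEZ 0 (mem_iInter.1 hxE 0)) s hs0
          (hs2.trans_le (min_le_left _ _)) (hs2.le.trans (min_le_right _ _))
        refine ⟨Metric.ball x s, Metric.isOpen_ball, ?_, N, fun m hm => (hN m hm).trans ?_⟩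
        · rintro y ⟨hy, -⟩
          have h1 : edist y x ≤ Metric.ediam (t i) := Metric.edist_le_ediam_of_mem hy hxt
          have h2 : Metric.ediam (t i) < s := by
            rw [← ENNReal.coe_toNNReal hdtop]
            exact_mod_cast hs1
          have h3 := h1.trans_lt h2
          rw [edist_nndist] at h3
          rw [Metric.mem_ball, dist_nndist]
          exact_mod_cast h3
        · rw [hai]; gcongr
      · refine ⟨∅, isOpen_empty, ?_, 0, fun m _ => by simp⟩
        rw [not_nonempty_iff_eq_empty.1 hne]
    choose V hVo hVt N hN using hV
    have hEcov : (⋂ k, E k) ⊆ ⋃ i, V i := by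
      intro x hx
      obtain ⟨i, hi⟩ := mem_iUnion.1 (ht1 hx)
      exact mem_iUnion.2 ⟨i, hVt i ⟨hi, hx⟩⟩
    have hEcpt : IsCompact (⋂ k, E k) :=
      (hEc 0).of_isClosed_subset (isClosed_iInter fun k => (hEc k).isClosed) (iInter_subset E 0)
    obtain ⟨F, hF⟩ := hEcpt.elim_finite_subcover V hVo hEcov
    obtain ⟨k, hk⟩ := exists_subset_nhds_of_isCompact (V := E) (U := ⋃ i ∈ F, V i)
      hEanti.directed_ge hEc
      (fun x hx => (isOpen_biUnion fun i _ => hVo i).mem_nhds (hF hx))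
    let m := max k (F.sup N)
    have hmk : E m ⊆ ⋃ i ∈ F, V i := (hEanti (le_max_left _ _)).trans hk
    have : ν univ ≤ ε * (C + C) := by
      calc ν univ ≤ l m (E m) := hmassE m
        _ ≤ l m (⋃ i ∈ F, V i) := measure_mono hmk
        _ ≤ ∑ i ∈ F, l m (V i) := measure_biUnion_finset_le _ _
        _ ≤ ∑ i ∈ F, C * (a i + e i) := Finset.sum_le_sum fun i hi =>
            hN i m ((Finset.le_sup hi).trans (le_max_right _ _))
        _ = C * (∑ i ∈ F, a i + ∑ i ∈ F, e i) := by
            rw [← Finset.mul_sum, Finset.sum_add_distrib]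
        _ ≤ C * (∑' i, a i + ∑' i, e i) := by
            gcongr <;> exact ENNReal.sum_le_tsum _
        _ ≤ C * (ε + ε) := by gcongr
        _ = ε * (C + C) := by ring
    exact absurd this (not_le.2 hεη)

lemma aux_order (h : ℝ≥0 → ℝ≥0∞) (hh : IsHausdorffFunction h) (h0 : h 0 = 0)
    (hford : FiniteOrder h) :
    ∃ C ρ₀ : ℝ≥0, 0 < ρ₀ ∧ ∀ t, 0 < t → t ≤ ρ₀ → h (3 * t) ≤ C * h t := by
  unfold FiniteOrder at hford
  obtain ⟨c, hc1, hc2⟩ := exists_between hford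
  lift c to ℝ≥0 using hc2.ne
  have hev := eventually_lt_of_limsup_lt hc1
  obtain ⟨ρ, hρ, hsub⟩ := (mem_nhdsGT_iff_exists_Ioc_subset (a := (0:ℝ≥0))).1 hev
  obtain ⟨s, hs0, hsρ, hs⟩ := aux_radius h hh 0 ρ hρ (by simp [h0]) 1 (by simp)
  refine ⟨c, s, hs0, fun t ht hts => ?_⟩
  have h1 : h (3 * t) / h t < c := hsub ⟨ht, hts.trans hsρ.le⟩
  have h2 : h t ≠ ⊤ := by
    apply ne_top_of_le_ne_top _ (hh.mono hts)
    exact ne_top_of_le_ne_top (by simp [h0]) hs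
  exact (ENNReal.div_le_iff (hh.pos t ht).ne' h2).1 h1.le

lemma aux_ball_open {Y : Type*} [MetricSpace Y] [MeasurableSpace Y] [BorelSpace Y]
    (ν : Measure Y) (c b : ℝ≥0∞) (hc : c ≠ ⊤) (s : ℝ) :
    IsClosed {x : Y | c * ν (Metric.ball x s) ≤ b} := by
  rw [← isOpen_compl_iff, Metric.isOpen_iff]
  intro x hx
  simp only [mem_compl_iff, mem_setOf_eq, not_le] at hx
  have hmono : Monotone (fun j : ℕ => Metric.ball x (s - 1 / ((j:ℝ) + 1))) := by
    intro i j hij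
    apply Metric.ball_subset_ball
    have : 1 / ((j:ℝ) + 1) ≤ 1 / ((i:ℝ) + 1) := by
      apply one_div_le_one_div_of_le (by positivity)
      have : (i:ℝ) ≤ j := by exact_mod_cast hij
      linarith
    linarith
  have hU : ⋃ j : ℕ, Metric.ball x (s - 1 / ((j:ℝ) + 1)) = Metric.ball x s := by
    apply Subset.antisymm
    · refine iUnion_subset fun j => Metric.ball_subset_ball ?_
      have : 0 < 1 / ((j:ℝ) + 1) := by positivity
      linarith
    · intro y hy
      rw [Metric.mem_ball] at hy
      obtain ⟨j, hj⟩ := exists_nat_one_div_lt (sub_pos.2 hy)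
      refine mem_iUnion.2 ⟨j, ?_⟩
      rw [Metric.mem_ball]
      linarith
  have ht := tendsto_measure_iUnion_atTop (μ := ν) hmono
  rw [hU] at ht
  have ht2 := ENNReal.Tendsto.const_mul ht (Or.inr hc)
  obtain ⟨j, hj⟩ := (ht2.eventually (lt_mem_nhds hx)).exists
  refine ⟨1 / ((j:ℝ) + 1), by positivity, fun y hy => ?_⟩
  simp only [mem_compl_iff, mem_setOf_eq, not_le]
  refine hj.trans_le ?_
  simp only [Function.comp]
  gcongr
  apply Metric.ball_subset_ball'
  rw [Metric.mem_ball, dist_comm] at hy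
  linarith

lemma aux_vitali {Y : Type*} [MetricSpace Y] [MeasurableSpace Y] [BorelSpace Y]
    (ν : Measure Y) [IsFiniteMeasure ν] (h : ℝ≥0 → ℝ≥0∞) (hh : IsHausdorffFunction h)
    (C ρ₀ : ℝ≥0) (hρ₀ : 0 < ρ₀) (hC : ∀ t, 0 < t → t ≤ ρ₀ → h (3 * t) ≤ C * h t)
    (n : ℕ) (W : Set Y)
    (hW : ∀ x ∈ W, ∀ ρ : ℝ≥0, 0 < ρ → ∃ s : ℝ≥0, 0 < s ∧ s ≤ ρ ∧
      h s < n * ν (Metric.ball x s)) :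
    hausdorffM h W ≤ C * (C * (C * (n * ν univ))) := by
  have key : ∀ ρ : ℝ≥0, 0 < ρ → ∃ (u : Set Y) (r : Y → ℝ≥0), u.Countable ∧
      (W ⊆ ⋃ i : u, Metric.ball (i:Y) (5 * r i)) ∧
      (∀ i : u, Metric.ediam (Metric.ball (i:Y) (5 * r i)) ≤ 27 * ρ) ∧
      ∑' i : u, h (Metric.ediam (Metric.ball (i:Y) (5 * r i))).toNNReal ≤
        C * (C * (C * (n * ν univ))) := by
    intro ρ hρ
    have hW' : ∀ x, ∃ s : ℝ≥0, x ∈ W → 0 < s ∧ s ≤ min ρ (ρ₀ / 9) ∧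
      h s < n * ν (Metric.ball x s) := by
      intro x
      by_cases hx : x ∈ W
      · obtain ⟨s, hs⟩ := hW x hx (min ρ (ρ₀ / 9)) (lt_min hρ (div_pos hρ₀ (by norm_num)))
        exact ⟨s, fun _ => hs⟩
      · exact ⟨0, fun h => absurd h hx⟩
    choose r hr using hW'
    obtain ⟨u, huW, hud, hucov⟩ := Vitali.exists_disjoint_subfamily_covering_enlargement_ball W
      (fun x : Y => x) (fun x => (r x : ℝ)) ρ
      (fun x hx => by exact_mod_cast (hr x hx).2.1.trans (min_le_left _ _)) 5 (by norm_num)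
    have hdisj : Pairwise (Function.onFun Disjoint fun i : u => Metric.ball (i:Y) (r i)) := by
      intro i j hij
      exact hud i.2 j.2 (fun h => hij (Subtype.ext h))
    have hpos : ∀ i : u, 0 < ν (Metric.ball (i:Y) (r i)) := by
      intro i
      have := (hr i (huW i.2)).2.2
      by_contra hcon
      have h0 : ν (Metric.ball (i:Y) (r i)) = 0 := by simpa using hcon
      rw [h0] at this
      simp at this
    have hcount : u.Countable := by
      have := Measure.countable_meas_pos_of_disjoint_iUnion (μ := ν)
        (As := fun i : u => Metric.ball (i:Y) (r i))
        (fun i => Metric.isOpen_ball.measurableSet) hdisj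
      have h2 : {i : u | 0 < ν (Metric.ball (i:Y) (r i))} = univ := by
        ext i; simp [hpos i]
      rw [h2, countable_univ_iff] at this
      exact this
    have hdiam : ∀ i : u, Metric.ediam (Metric.ball (i:Y) (5 * r i)) ≤ ((27 * r i : ℝ≥0) : ℝ≥0∞) := by
      intro i
      rw [show (5 * (r i : ℝ)) = ((5 * r i : ℝ≥0) : ℝ) by push_cast; ring,
        ← Metric.eball_coe]
      refine Metric.ediam_eball_le.trans ?_
      rw [show (2:ℝ≥0∞) = ((2:ℝ≥0) : ℝ≥0∞) by simp, ← ENNReal.coe_mul]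
      rw [ENNReal.coe_le_coe, ← mul_assoc]
      gcongr
      norm_num
    refine ⟨u, r, hcount, ?_, ?_, ?_⟩
    · intro x hx
      obtain ⟨b, hb, hsub⟩ := hucov x hx
      exact mem_iUnion.2 ⟨⟨b, hb⟩, hsub (Metric.mem_ball_self (by exact_mod_cast (hr x hx).1))⟩
    · intro i
      refine (hdiam i).trans ?_
      push_cast
      gcongr
      exact_mod_cast (hr i (huW i.2)).2.1.trans (min_le_left _ _)
    · have hterm : ∀ i : u, h (Metric.ediam (Metric.ball (i:Y) (5 * r i))).toNNReal ≤
          C * (C * (C * (n * ν (Metric.ball (i:Y) (r i))))) := by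
        intro i
        obtain ⟨a1, a2, a3⟩ := hr i (huW i.2)
        have a4 : 9 * r i ≤ ρ₀ := by
          have := a2.trans (min_le_right _ _)
          rw [le_div_iff₀ (by norm_num)] at this
          rwa [mul_comm]
        have a5 : 3 * r i ≤ 9 * r i := by gcongr; norm_num
        have a6 : r i ≤ 3 * r i := le_mul_of_one_le_left zero_le (by norm_num)
        calc h (Metric.ediam (Metric.ball (i:Y) (5 * r i))).toNNReal
            ≤ h (27 * r i) := hh.mono (by
              have := ENNReal.toNNReal_mono ENNReal.coe_ne_top (hdiam i)
              rwa [ENNReal.toNNReal_coe] at this)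
          _ = h (3 * (9 * r i)) := by rw [← mul_assoc]; norm_num
          _ ≤ C * h (9 * r i) := hC _ (by positivity) a4
          _ = C * h (3 * (3 * r i)) := by rw [← mul_assoc 3 3]; norm_num
          _ ≤ C * (C * h (3 * r i)) := by
              gcongr; exact hC _ (by positivity) (a5.trans a4)
          _ ≤ C * (C * (C * h (r i))) := by
              gcongr; exact hC _ a1 (a6.trans (a5.trans a4))
          _ ≤ _ := by gcongr
      calc _ ≤ ∑' i : u, C * (C * (C * (n * ν (Metric.ball (i:Y) (r i))))) :=
            ENNReal.tsum_le_tsum hterm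
        _ = C * (C * (C * (n * ∑' i : u, ν (Metric.ball (i:Y) (r i))))) := by
            simp only [ENNReal.tsum_mul_left]
        _ ≤ _ := by
            gcongr
            refine (tsum_meas_le_meas_iUnion_of_disjoint ν
              (fun i => Metric.isOpen_ball.measurableSet) hdisj).trans (measure_mono (subset_univ _))
  choose u r k1 k2 k3 k4 using fun j : ℕ => key (1 / ((j:ℝ≥0) + 1)) (by positivity)
  have hcnt : ∀ j, Countable (u j) := fun j => (k1 j).to_subtype
  unfold hausdorffM
  rw [OuterMeasure.coe_mkMetric]
  refine (Measure.mkMetric_le_liminf_tsum (ι := fun j => u j) (l := atTop) W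
    (fun j : ℕ => 27 * ((1 / ((j:ℝ≥0) + 1) : ℝ≥0) : ℝ≥0∞)) ?_
    (fun j i => Metric.ball (i:Y) (5 * r j i)) (Eventually.of_forall k3)
    (Eventually.of_forall k2) _).trans ?_
  · have : Tendsto (fun j : ℕ => (27:ℝ≥0∞) * ((1 / ((j:ℝ≥0) + 1) : ℝ≥0) : ℝ≥0∞)) atTop
        (𝓝 (27 * ((0:ℝ≥0) : ℝ≥0∞))) := by
      apply ENNReal.Tendsto.const_mul _ (Or.inr (by simp))
      rw [ENNReal.tendsto_coe]
      exact tendsto_one_div_add_atTop_nhds_zero_nat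
    simpa using this
  · exact (liminf_le_liminf (Eventually.of_forall k4)).trans (liminf_const _).le

lemma aux_main {Y : Type*} [MetricSpace Y] [MeasurableSpace Y] [BorelSpace Y]
    (ν : Measure Y) [IsFiniteMeasure ν] (T : Set Y) (hT : IsCompact T)
    (h : ℝ≥0 → ℝ≥0∞) (hh : IsHausdorffFunction h) (h0 : h 0 = 0) (hford : FiniteOrder h)
    (hac : ∀ A, A ⊆ T → MeasurableSet A → ν A = 0 → hausdorffM h A = 0) :
    ∃ W : ℕ → Set Y, (∀ n, MeasurableSet (W n) ∧ hausdorffM h (W n) < ⊤) ∧ T ⊆ ⋃ n, W n := by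
  obtain ⟨C, ρ₀, hρ₀, hC⟩ := aux_order h hh h0 hford
  obtain ⟨G, hG⟩ : ∃ G : ℕ → ℕ → Set Y, ∀ n k x, x ∈ G n k ↔
      ∀ s : ℝ≥0, 0 < s → s ≤ 1 / ((k:ℝ≥0) + 1) → (n:ℝ≥0∞) * ν (Metric.ball x s) ≤ h s :=
    ⟨fun n k => {x | ∀ s : ℝ≥0, 0 < s → s ≤ 1 / ((k:ℝ≥0) + 1) →
      (n:ℝ≥0∞) * ν (Metric.ball x s) ≤ h s}, fun n k x => Iff.rfl⟩
  have hGc : ∀ n k, IsClosed (G n k) := by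
    intro n k
    have : G n k = ⋂ s : ℝ≥0, ⋂ _ : 0 < s, ⋂ _ : s ≤ 1 / ((k:ℝ≥0) + 1),
        {x | (n:ℝ≥0∞) * ν (Metric.ball x s) ≤ h s} := by
      ext x
      simp only [hG, mem_iInter, mem_setOf_eq]
    rw [this]
    exact isClosed_iInter fun s => isClosed_iInter fun _ => isClosed_iInter fun _ =>
      aux_ball_open ν _ _ (by simp) _
  have hGm : ∀ n, Monotone (G n) := by
    intro n k l hkl x hx
    rw [hG] at hx ⊢
    intro s hs0 hs
    refine hx s hs0 (hs.trans ?_)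
    apply one_div_le_one_div_of_le (by positivity)
    have : (k:ℝ≥0) ≤ l := by exact_mod_cast hkl
    gcongr
  have hTm : MeasurableSet T := hT.isClosed.measurableSet
  have hZm : MeasurableSet (T ∩ ⋂ n, ⋃ k, G n k) :=
    hTm.inter (MeasurableSet.iInter fun n => MeasurableSet.iUnion fun k => (hGc n k).measurableSet)
  have hZ0 : ν (T ∩ ⋂ n, ⋃ k, G n k) = 0 := by
    by_contra hne
    set Z := T ∩ ⋂ n, ⋃ k, G n k with hZ
    obtain ⟨ε, hε, hεs⟩ := ENNReal.exists_pos_sum_of_countable' hne ℕ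
    have hk : ∀ n, ∃ k, ν (Z \ G n k) < ε n := by
      intro n
      have hanti : Antitone (fun k => Z \ G n k) := fun k l hkl =>
        sdiff_subset_sdiff_right (hGm n hkl)
      have := tendsto_measure_iInter_atTop (μ := ν) (s := fun k => Z \ G n k)
        (fun k => (hZm.diff (hGc n k).measurableSet).nullMeasurableSet) hanti
        ⟨0, measure_ne_top _ _⟩
      have he : ⋂ k, Z \ G n k = ∅ := by
        rw [eq_empty_iff_forall_notMem]
        intro x hx
        rw [mem_iInter] at hx
        obtain ⟨k, hk⟩ := mem_iUnion.1 (mem_iInter.1 (hx 0).1.2 n)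
        exact (hx k).2 hk
      rw [he, measure_empty] at this
      exact (this.eventually (gt_mem_nhds (hε n))).exists
    choose k hk using hk
    have hZ'c : IsCompact (T ∩ ⋂ n, G n (k n)) :=
      hT.inter_right (isClosed_iInter fun n => hGc _ _)
    set Z' := T ∩ ⋂ n, G n (k n) with hZ'
    have hZ'm : MeasurableSet Z' := hZ'c.isClosed.measurableSet
    have hpos : ν Z' ≠ 0 := by
      intro hz
      have hsub : Z ⊆ Z' ∪ ⋃ n, Z \ G n (k n) := by
        intro x hx
        by_cases hx' : x ∈ Z'
        · exact Or.inl hx'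
        · right
          by_contra hcon
          apply hx'
          refine ⟨hx.1, mem_iInter.2 fun n => ?_⟩
          by_contra hn
          exact hcon (mem_iUnion.2 ⟨n, hx, hn⟩)
      have := calc ν Z ≤ ν (Z' ∪ ⋃ n, Z \ G n (k n)) := measure_mono hsub
        _ ≤ ν Z' + ν (⋃ n, Z \ G n (k n)) := measure_union_le _ _
        _ ≤ 0 + ∑' n, ν (Z \ G n (k n)) := by rw [hz]; gcongr; exact measure_iUnion_le _
        _ ≤ ∑' n, ε n := by rw [zero_add]; exact ENNReal.tsum_le_tsum fun n => (hk n).le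
        _ < ν Z := hεs
      exact lt_irrefl _ this
    obtain ⟨E, hE1, hE2, hE3, hE4⟩ := aux_singular (ν.restrict Z') Z' hZ'c
      (by rw [Measure.restrict_apply hZ'm.compl]; simp) (by simpa using hpos) h hh h0 C ρ₀ hρ₀ hC
      (by
        intro M
        obtain ⟨n, hn⟩ := exists_nat_ge M
        refine ⟨1 / ((k n : ℝ≥0) + 1), by positivity, fun x hx s hs0 hs => ?_⟩
        have := (hG n (k n) x).1 (mem_iInter.1 hx.2 n) s hs0 hs
        refine le_trans ?_ this
        gcongr
        · exact_mod_cast hn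
        · exact Measure.restrict_le_self)
    rw [Measure.restrict_apply hE2.isClosed.measurableSet, inter_eq_self_of_subset_left hE1] at hE3
    exact hE4.ne' (hac E (hE1.trans inter_subset_left) hE2.isClosed.measurableSet hE3)
  refine ⟨fun n => Nat.casesOn n (T ∩ ⋂ n, ⋃ k, G n k) (fun n => T \ ⋃ k, G n k), ?_, ?_⟩
  · rintro (_ | n)
    · exact ⟨hZm, by
        have := hac _ inter_subset_left hZm hZ0
        exact this.le.trans_lt (by simp)⟩
    · refine ⟨hTm.diff (MeasurableSet.iUnion fun k => (hGc n k).measurableSet), ?_⟩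
      refine (aux_vitali ν h hh C ρ₀ hρ₀ hC n (T \ ⋃ k, G n k) ?_).trans_lt ?_
      · intro x hx ρ hρ
        by_contra hcon
        push Not at hcon
        apply hx.2
        obtain ⟨k, hk⟩ := exists_nat_one_div_lt (show (0:ℝ) < ρ from hρ)
        refine mem_iUnion.2 ⟨k, (hG n k x).2 fun s hs0 hs => hcon s hs0 (hs.trans ?_)⟩
        rw [← NNReal.coe_le_coe]
        push_cast
        exact hk.le
      · exact ENNReal.mul_lt_top (by simp) (ENNReal.mul_lt_top (by simp)
          (ENNReal.mul_lt_top (by simp) (ENNReal.mul_lt_top (by simp) (measure_lt_top _ _))))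
  · intro x hx
    by_cases hx' : x ∈ ⋂ n, ⋃ k, G n k
    · exact mem_iUnion.2 ⟨0, hx, hx'⟩
    · rw [mem_iInter] at hx'
      push Not at hx'
      obtain ⟨n, hn⟩ := hx'
      exact mem_iUnion.2 ⟨n + 1, hx, hn⟩

lemma aux_meas {X : Type*} [TopologicalSpace X] [MeasurableSpace X] [BorelSpace X]
    (μ : OuterMeasure X) (hBorel : ∀ B : Set X, MeasurableSet B → μ.IsCaratheodory B)
    (hGdelta : ∀ E : Set X, ∃ R : Set X, IsGδ R ∧ E ⊆ R ∧ μ R = μ E)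
    (hsf : SigmaFiniteSet μ (Set.univ : Set X)) :
    ∃ m : Measure X, IsFiniteMeasure m ∧ (∀ A, m A = 0 ↔ μ A = 0) ∧
      ∀ M, μ.IsCaratheodory M → NullMeasurableSet M m := by
  have hle : (inferInstance : MeasurableSpace X) ≤ μ.caratheodory := fun B hB => hBorel B hB
  obtain ⟨m0, hm0⟩ : ∃ m0 : Measure X, ∀ E, m0 E = μ E := by
    refine ⟨μ.toMeasure hle, fun E => le_antisymm ?_ (le_toMeasure_apply _ _ _)⟩
    obtain ⟨R, hR, hER, hRE⟩ := hGdelta E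
    rw [← hRE, ← toMeasure_apply μ hle hR.measurableSet]
    exact measure_mono hER
  obtain ⟨A, hA, hAu⟩ := hsf
  have hsig : SigmaFinite m0 := by
    choose R hR hAR hRA using fun n => hGdelta (A n)
    refine ⟨⟨⟨R, fun _ => trivial, fun n => ?_, ?_⟩⟩⟩
    · rw [hm0, hRA]; exact (hA n).2
    · rw [eq_univ_iff_forall]
      intro x
      have hx : x ∈ ⋃ n, A n := hAu ▸ mem_univ x
      obtain ⟨n, hn⟩ := mem_iUnion.1 hx
      exact mem_iUnion.2 ⟨n, hAR n hn⟩
  refine ⟨m0.toFinite, inferInstance, fun A => ?_, fun M hM => ?_⟩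
  · rw [← hm0]
    exact ⟨fun h => absolutelyContinuous_toFinite m0 h, fun h => toFinite_absolutelyContinuous m0 h⟩
  · have hMU : M = ⋃ n, M ∩ A n := by rw [← inter_iUnion, ← hAu, inter_univ]
    rw [hMU]
    refine NullMeasurableSet.iUnion fun n => ?_
    have hE := OuterMeasure.isCaratheodory_inter μ hM (hA n).1
    obtain ⟨R, hR, hER, hRE⟩ := hGdelta (M ∩ A n)
    have hfin : μ (M ∩ A n) ≠ ⊤ := ((μ.mono inter_subset_right).trans_lt (hA n).2).ne
    have h1 := hE R
    rw [inter_eq_self_of_subset_right hER, hRE] at h1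
    have h2 : μ (R \ (M ∩ A n)) = 0 := by
      have h3 : μ (M ∩ A n) + 0 = μ (M ∩ A n) + μ (R \ (M ∩ A n)) := by rw [add_zero]; exact h1
      exact ((ENNReal.add_right_inj hfin).1 h3).symm
    refine hR.measurableSet.nullMeasurableSet.congr ?_
    have h4 : m0.toFinite (R \ (M ∩ A n)) = 0 :=
      toFinite_absolutelyContinuous m0 (by rw [hm0]; exact h2)
    exact (ae_le_set.2 h4).antisymm (HasSubset.Subset.eventuallyLE hER)

lemma aux_ulam {X D : Type*} [MeasurableSpace X] (m : Measure X) [IsFiniteMeasure m]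
    (B : D → Set X) (hdis : Pairwise (Function.onFun Disjoint B))
    (hB : ∀ S : Set D, NullMeasurableSet (⋃ d ∈ S, B d) m) (hD : ¬ (univ : Set D).Countable) :
    ∃ S : Set D, ¬ S.Countable ∧ m (⋃ d ∈ S, B d) = 0 := by
  obtain ⟨_, _⟩ := exists_wellFoundedLT D
  obtain ⟨S0, hS0⟩ : ∃ S0 : Set D, ∀ x, x ∈ S0 ↔ (Iio x).Countable :=
    ⟨{x | (Iio x).Countable}, fun x => Iff.rfl⟩
  have hS0u : ¬ S0.Countable := by
    by_cases hall : S0 = univ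
    · rwa [hall]
    · have hne : (S0ᶜ).Nonempty := by rwa [nonempty_compl]
      set d := (wellFounded_lt (α := D)).min S0ᶜ hne with hd
      have hd1 : d ∉ S0 := (wellFounded_lt (α := D)).min_mem S0ᶜ hne
      have hsub : Iio d ⊆ S0 := by
        intro x hx
        by_contra hcon
        exact (wellFounded_lt (α := D)).not_lt_min S0ᶜ hcon hx
      intro hc
      exact hd1 ((hS0 d).2 (hc.mono hsub))
  have hg : ∀ β : D, ∃ g : D → ℕ, β ∈ S0 → InjOn g (Iio β) := by
    intro β
    by_cases hβ : β ∈ S0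
    · obtain ⟨g, hg⟩ := countable_iff_exists_injOn.1 ((hS0 β).1 hβ)
      exact ⟨g, fun _ => hg⟩
    · exact ⟨fun _ => 0, fun h => absurd h hβ⟩
  choose g hg using hg
  obtain ⟨A, hA⟩ : ∃ A : ℕ → D → Set D, ∀ n α β, β ∈ A n α ↔ β ∈ S0 ∧ α < β ∧ g β α = n :=
    ⟨fun n α => {β | β ∈ S0 ∧ α < β ∧ g β α = n}, fun _ _ _ => Iff.rfl⟩
  have hcn : ∀ n, {α | 0 < m (⋃ d ∈ A n α, B d)}.Countable := by
    intro n
    refine Measure.countable_meas_pos_of_disjoint_iUnion₀ (μ := m)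
      (As := fun α => ⋃ d ∈ A n α, B d) (fun α => hB _) ?_
    intro α α' hαα'
    apply Disjoint.aedisjoint
    rw [Set.disjoint_left]
    intro x hx hx'
    simp only [mem_iUnion, exists_prop] at hx hx'
    obtain ⟨d, hd, hxd⟩ := hx
    obtain ⟨d', hd', hxd'⟩ := hx'
    have hdd : d = d' := by
      by_contra hne
      exact Set.disjoint_left.1 (hdis hne) hxd hxd'
    subst hdd
    rw [hA] at hd hd'
    exact hαα' (hg d hd.1 hd.2.1 hd'.2.1 (hd.2.2.trans hd'.2.2.symm))
  have hex : ∃ α ∈ S0, ∀ n, m (⋃ d ∈ A n α, B d) = 0 := by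
    by_contra hcon
    push Not at hcon
    apply hS0u
    refine (countable_iUnion hcn).mono ?_
    intro α hα
    obtain ⟨n, hn⟩ := hcon α hα
    exact mem_iUnion.2 ⟨n, pos_iff_ne_zero.2 hn⟩
  obtain ⟨α, hα, hα0⟩ := hex
  refine ⟨⋃ n, A n α, ?_, ?_⟩
  · intro hc
    apply hS0u
    refine ((((hS0 α).1 hα).union (countable_singleton α)).union hc).mono ?_
    intro β hβ
    rcases lt_trichotomy β α with h | h | h
    · exact Or.inl (Or.inl h)
    · exact Or.inl (Or.inr h)
    · exact Or.inr (mem_iUnion.2 ⟨g β α, (hA _ _ _).2 ⟨hβ, h, rfl⟩⟩)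
  · rw [biUnion_iUnion]
    exact measure_iUnion_null hα0

lemma aux_second {X Y : Type*} [MeasurableSpace X] [MetricSpace Y] (m : Measure X)
    [IsFiniteMeasure m] (h : ℝ≥0 → ℝ≥0∞) (f : X → Y) (hsurj : Function.Surjective f)
    (hf : ∀ O : Set Y, IsOpen O → NullMeasurableSet (f ⁻¹' O) m)
    (H : ∀ N, m N = 0 → hausdorffM h (f '' N) = 0) : SecondCountableTopology Y := by
  apply Metric.secondCountable_of_almost_dense_set
  intro ε hε
  obtain ⟨D, hD⟩ := zorn_subset {s : Set Y | s.Pairwise fun x y => ε < dist x y} (by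
    intro c hc hchain
    refine ⟨⋃₀ c, ?_, fun s hs => subset_sUnion_of_mem hs⟩
    exact (pairwise_sUnion hchain.directedOn).2 fun s hs => hc hs)
  have hDsep : D.Pairwise fun x y => ε < dist x y := hD.prop
  refine ⟨D, ?_, ?_⟩
  · by_contra hDu
    obtain ⟨S, hS, hS0⟩ := aux_ulam m (fun d : D => f ⁻¹' Metric.ball (d:Y) (ε / 2)) (by
        intro a b hab
        refine Disjoint.preimage f (Metric.ball_disjoint_ball ?_)
        have := hDsep a.2 b.2 (fun h => hab (Subtype.ext h))
        linarith) (by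
        intro S
        rw [← preimage_iUnion₂]
        exact hf _ (isOpen_biUnion fun _ _ => Metric.isOpen_ball)) (by
        rwa [countable_univ_iff, countable_coe_iff])
    have h1 := H _ hS0
    obtain ⟨t, ht1, ht2, -⟩ := aux_cover h _ (c := 1) (h1.le.trans_lt (by simp))
      (ENNReal.ofReal ε) (by simpa using hε)
    apply hS
    have h2 : ∀ d : D, d ∈ S → ∃ n, (d:Y) ∈ t n := by
      intro d hd
      have : (d:Y) ∈ ⋃ n, t n := by
        apply ht1
        obtain ⟨x, hx⟩ := hsurj d
        refine ⟨x, mem_iUnion₂.2 ⟨d, hd, ?_⟩, hx⟩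
        simp [hx, hε]
      exact mem_iUnion.1 this
    have h3 : ∀ d : D, ∃ n, d ∈ S → (d:Y) ∈ t n := by
      intro d
      by_cases hd : d ∈ S
      · obtain ⟨n, hn⟩ := h2 d hd
        exact ⟨n, fun _ => hn⟩
      · exact ⟨0, fun h => absurd h hd⟩
    choose g hg using h3
    refine countable_iff_exists_injOn.2 ⟨g, fun a ha b hb hab => ?_⟩
    by_contra hne
    have h4 := hDsep a.2 b.2 (fun h => hne (Subtype.ext h))
    have h5 : edist (a:Y) b ≤ ENNReal.ofReal ε :=
      (Metric.edist_le_ediam_of_mem (hg a ha) (hab ▸ hg b hb)).trans (ht2 _)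
    rw [edist_dist, ENNReal.ofReal_le_ofReal_iff hε.le] at h5
    linarith
  · intro x
    by_contra hcon
    push Not at hcon
    have hx : x ∉ D := fun hx => by
      have := hcon x hx
      simp at this
      linarith
    have hins : (insert x D).Pairwise fun x y => ε < dist x y := by
      rw [pairwise_insert]
      exact ⟨hDsep, fun b hb _ => ⟨hcon b hb, by rw [dist_comm]; exact hcon b hb⟩⟩
    exact hx (hD.le_of_ge hins (subset_insert _ _) (mem_insert _ _))

lemma aux_lusin {X Y : Type*} [TopologicalSpace X] [T1Space X] [RegularSpace X]
    [SecondCountableTopology X] [MeasurableSpace X] [BorelSpace X] [MetricSpace Y]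
    [SecondCountableTopology Y] (m : Measure X)
    [IsFiniteMeasure m] (f : X → Y)
    (hf : ∀ O : Set Y, IsOpen O → NullMeasurableSet (f ⁻¹' O) m)
    (K : ℕ → Set X) (N : Set X) (hK : ∀ n, IsCompact (K n)) (hN : m N = 0)
    (hU : Set.univ = (⋃ n, K n) ∪ N) :
    ∃ L : ℕ × ℕ → Set X, (∀ j, IsCompact (L j) ∧ ContinuousOn f (L j)) ∧ m (⋃ j, L j)ᶜ = 0 := by
  have : T3Space X := {}
  letI := TopologicalSpace.metrizableSpaceMetric X
  have hcl : ∀ A : Set X, NullMeasurableSet A m → ∀ ε : ℝ≥0∞, ε ≠ 0 →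
      ∃ F ⊆ A, IsClosed F ∧ m (A \ F) < ε := by
    intro A hA ε hε
    obtain ⟨t, htA, htm, hte⟩ := hA.exists_measurable_subset_ae_eq
    obtain ⟨F, hF, hFc, hlt⟩ := htm.exists_isClosed_sdiff_lt (μ := m) (measure_ne_top _ _) hε
    refine ⟨F, hF.trans htA, hFc, ?_⟩
    refine lt_of_le_of_lt ?_ hlt
    have h1 : A \ F ⊆ (A \ t) ∪ (t \ F) := by
      intro x hx
      by_cases hxt : x ∈ t
      · exact Or.inr ⟨hxt, hx.2⟩
      · exact Or.inl ⟨hx.1, hxt⟩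
    have h2 : m (A \ t) = 0 := ae_le_set.1 hte.symm.le
    calc m (A \ F) ≤ m (A \ t) + m (t \ F) := (measure_mono h1).trans (measure_union_le _ _)
      _ = m (t \ F) := by rw [h2, zero_add]
  have hF : ∀ ε : ℝ≥0∞, 0 < ε → ∃ F : Set X, IsClosed F ∧ ContinuousOn f F ∧ m Fᶜ ≤ ε := by
    intro ε hε
    have hbas := TopologicalSpace.isBasis_countableBasis Y
    have hcnt : Countable (TopologicalSpace.countableBasis Y) :=
      (TopologicalSpace.countable_countableBasis Y).to_subtype
    obtain ⟨δ, hδ, hδs⟩ := ENNReal.exists_pos_sum_of_countable' hε.ne'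
      (TopologicalSpace.countableBasis Y)
    choose C hC1 hC2 hC3 using fun i : TopologicalSpace.countableBasis Y =>
      hcl _ (hf i (hbas.isOpen i.2)) (δ i / 2) (ENNReal.half_pos (hδ i).ne').ne'
    choose C' hC1' hC2' hC3' using fun i : TopologicalSpace.countableBasis Y =>
      hcl _ (hf i (hbas.isOpen i.2)).compl (δ i / 2) (ENNReal.half_pos (hδ i).ne').ne'
    refine ⟨⋂ i, C i ∪ C' i, isClosed_iInter fun i => (hC2 i).union (hC2' i), ?_, ?_⟩
    · intro x hx
      refine hbas.nhds_hasBasis.tendsto_right_iff.2 ?_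
      rintro O ⟨hO, hxO⟩
      have hxn : x ∈ (C' ⟨O, hO⟩)ᶜ := fun h => hC1' ⟨O, hO⟩ h hxO
      filter_upwards [self_mem_nhdsWithin,
        mem_nhdsWithin_of_mem_nhds ((hC2' ⟨O, hO⟩).isOpen_compl.mem_nhds hxn)] with y hy hyn
      rcases mem_iInter.1 hy ⟨O, hO⟩ with h | h
      · exact hC1 ⟨O, hO⟩ h
      · exact absurd h hyn
    · rw [compl_iInter]
      refine (measure_iUnion_le _).trans (le_trans ?_ hδs.le)
      refine ENNReal.tsum_le_tsum fun i => ?_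
      have hs : (C i ∪ C' i)ᶜ ⊆ ((f ⁻¹' i) \ C i) ∪ ((f ⁻¹' i)ᶜ \ C' i) := by
        intro x hx
        rw [mem_compl_iff, mem_union, not_or] at hx
        by_cases hxi : x ∈ f ⁻¹' i
        · exact Or.inl ⟨hxi, hx.1⟩
        · exact Or.inr ⟨hxi, hx.2⟩
      calc _ ≤ m ((f ⁻¹' i) \ C i) + m ((f ⁻¹' i)ᶜ \ C' i) :=
            (measure_mono hs).trans (measure_union_le _ _)
        _ ≤ δ i / 2 + δ i / 2 := add_le_add (hC3 i).le (hC3' i).le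
        _ = δ i := ENNReal.add_halves _
  choose F hF1 hF2 hF3 using fun j : ℕ => hF ((j:ℝ≥0∞) + 1)⁻¹ (by simp)
  refine ⟨fun p => F p.1 ∩ K p.2, fun p => ⟨(hK _).inter_left (hF1 _),
    (hF2 _).mono inter_subset_left⟩, ?_⟩
  have hsub : (⋃ p : ℕ × ℕ, F p.1 ∩ K p.2)ᶜ ⊆ N ∪ ⋂ j, (F j)ᶜ := by
    intro x hx
    by_cases hxN : x ∈ N
    · exact Or.inl hxN
    · right
      rw [mem_iInter]
      intro j hxj
      have hx2 : x ∈ (⋃ n, K n) ∪ N := hU ▸ mem_univ x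
      rcases hx2 with h | h
      · obtain ⟨n, hn⟩ := mem_iUnion.1 h
        exact hx (mem_iUnion.2 ⟨(j, n), hxj, hn⟩)
      · exact hxN h
  refine measure_mono_null hsub (measure_union_null hN ?_)
  by_contra hne
  obtain ⟨j, hj⟩ := ENNReal.exists_inv_nat_lt hne
  have : m (⋂ j, (F j)ᶜ) ≤ ((j:ℝ≥0∞) + 1)⁻¹ := (measure_mono (iInter_subset _ j)).trans (hF3 j)
  have h3 : ((j:ℝ≥0∞) + 1)⁻¹ ≤ (j:ℝ≥0∞)⁻¹ := ENNReal.inv_le_inv.2 le_self_add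
  exact lt_irrefl _ ((this.trans h3).trans_lt hj)

lemma aux_final {X Y : Type*} [TopologicalSpace X] [T1Space X] [RegularSpace X]
    [SecondCountableTopology X] [MeasurableSpace X] [BorelSpace X] [MetricSpace Y]
    (m : Measure X) [IsFiniteMeasure m] (f : X → Y) (hsurj : Function.Surjective f)
    (hf : ∀ O : Set Y, IsOpen O → NullMeasurableSet (f ⁻¹' O) m)
    (K : ℕ → Set X) (N : Set X) (hK : ∀ n, IsCompact (K n)) (hN : m N = 0)
    (hU : Set.univ = (⋃ n, K n) ∪ N)
    (h : ℝ≥0 → ℝ≥0∞) (hh : IsHausdorffFunction h) (hford : FiniteOrder h)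
    (h0 : h 0 = 0) (H : ∀ N, m N = 0 → hausdorffM h (f '' N) = 0) :
    SigmaFiniteSet (hausdorffM h) (Set.univ : Set Y) := by
  have : T3Space X := {}
  borelize Y
  have : SecondCountableTopology Y := aux_second m h f hsurj hf H
  obtain ⟨L, hL, hL0⟩ := aux_lusin m f hf K N hK hN hU
  have hpiece : ∀ j, ∃ W : ℕ → Set Y, (∀ n, MeasurableSet (W n) ∧ hausdorffM h (W n) < ⊤) ∧
      f '' L j ⊆ ⋃ n, W n := by
    intro j
    have hLm : MeasurableSet (L j) := (hL j).1.isClosed.measurableSet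
    have hae : AEMeasurable f (m.restrict (L j)) := (hL j).2.aemeasurable hLm
    refine aux_main (Measure.map f (m.restrict (L j))) (f '' L j)
      ((hL j).1.image_of_continuousOn (hL j).2) h hh h0 hford ?_
    intro A hA hAm hA0
    rw [Measure.map_apply_of_aemeasurable hae hAm, Measure.restrict_apply' hLm] at hA0
    have h1 : A ⊆ f '' (f ⁻¹' A ∩ L j) := by
      intro y hy
      obtain ⟨x, hx, rfl⟩ := hA hy
      exact ⟨x, ⟨hy, hx⟩, rfl⟩
    exact le_antisymm (((hausdorffM h).mono h1).trans (H _ hA0).le) zero_le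
  choose W hW1 hW2 using hpiece
  have hcar : ∀ B : Set Y, MeasurableSet B → (hausdorffM h).IsCaratheodory B := by
    intro B hB
    exact (OuterMeasure.mkMetric'_isMetric _).le_caratheodory B hB
  have hnull := H _ hL0
  obtain ⟨e, he⟩ := exists_surjective_nat ((ℕ × ℕ) × ℕ)
  refine ⟨fun n => Nat.casesOn n (f '' (⋃ j, L j)ᶜ) (fun n => W (e n).1 (e n).2), ?_, ?_⟩
  · rintro (_ | n)
    · refine ⟨fun t => ?_, hnull.le.trans_lt (by simp)⟩
      apply le_antisymm
      · exact (measure_mono (by rw [inter_union_sdiff])).trans (measure_union_le _ _)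
      · have h1 : hausdorffM h (t ∩ f '' (⋃ j, L j)ᶜ) = 0 :=
          measure_mono_null inter_subset_right hnull
        change hausdorffM h (t ∩ f '' (⋃ j, L j)ᶜ) + _ ≤ _
        rw [h1, zero_add]
        exact measure_mono sdiff_subset
    · exact ⟨hcar _ (hW1 _ _).1, (hW1 _ _).2⟩
  · symm
    rw [eq_univ_iff_forall]
    intro y
    obtain ⟨x, rfl⟩ := hsurj y
    by_cases hx : x ∈ ⋃ j, L j
    · obtain ⟨j, hj⟩ := mem_iUnion.1 hx
      obtain ⟨n, hn⟩ := mem_iUnion.1 (hW2 j ⟨x, hj, rfl⟩)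
      obtain ⟨i, hi⟩ := he (j, n)
      refine mem_iUnion.2 ⟨i + 1, ?_⟩
      change f x ∈ W (e i).1 (e i).2
      rw [hi]
      exact hn
    · exact mem_iUnion.2 ⟨0, x, hx, rfl⟩


/-- Theorem `MainInfinite`. -/
theorem statement_15 {X : Type*} [TopologicalSpace X] [T1Space X] [RegularSpace X]
    [SecondCountableTopology X]
    {Y : Type*} [MetricSpace Y]
    (μ : MeasureTheory.OuterMeasure X)
    (hBorel : ∀ B : Set X, MeasurableSet[borel X] B → μ.IsCaratheodory B)
    (hGdelta : ∀ E : Set X, ∃ R : Set X, IsGδ R ∧ E ⊆ R ∧ μ R = μ E)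
    (hsf : SigmaFiniteSet μ (Set.univ : Set X))
    (hdecomp : ∃ (K : ℕ → Set X) (N : Set X), (∀ n, IsCompact (K n)) ∧ μ N = 0 ∧
      Set.univ = (⋃ n, K n) ∪ N)
    (h : ℝ≥0 → ℝ≥0∞) (hh : IsHausdorffFunction h) (hford : FiniteOrder h)
    (h0 : h 0 = 0)
    (hY : ¬ SigmaFiniteSet (hausdorffM h) (Set.univ : Set Y))
    (f : X → Y) (hsurj : Function.Surjective f)
    (hmeas : ∀ O : Set Y, IsOpen O → μ.IsCaratheodory (f ⁻¹' O)) :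
    ∃ N : Set X, μ N = 0 ∧ 0 < hausdorffM h (f '' N) := by
  by_contra hcon
  push Not at hcon
  apply hY
  borelize X
  obtain ⟨m, hm, hm0, hmM⟩ := aux_meas μ hBorel hGdelta hsf
  obtain ⟨K, N, hK, hN, hU⟩ := hdecomp
  exact aux_final m f hsurj (fun O hO => hmM _ (hmeas O hO)) K N hK ((hm0 N).2 hN) hU h hh hford h0
    (fun N hN => le_antisymm (hcon N ((hm0 N).1 hN)) zero_le)
end
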